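/- arXiv:1710.06517 — 6 statements merged into one kernel-verified Lean document; each statement's English description precedes it below -/
import Mathlib

section
/- (Dihedral sieving for noncrossing partitions by number of blocks; Narayana case.) Let n be odd, 0 ≤ k ≤ n−1, let P ∈ ℤ[s,t] be the unique polynomial with P·{n}_{s,t}·{k}!_{s,t}·{n−k}!_{s,t}·{k+1}!_{s,t}·{n−k−1}!_{s,t} = {n}!_{s,t}·{n}!_{s,t}, and let ζ = exp(2πi/n) ∈ ℂ. Then for every integer ℓ, P(ζ^ℓ + ζ^{−ℓ}, −1) equals the number of noncrossing set partitions of ℤ/nℤ with exactly n−k blocks fixed by the rotation x ↦ x+ℓ; and P(0, 1) equals the number of noncrossing set partitions of ℤ/nℤ with exactly n−k blocks fixed by x ↦ −x. -/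
open MvPolynomial

/-- The generalized Fibonacci polynomials `{m}_{s,t} ∈ ℤ[s,t]`, with `s = X 0`, `t = X 1`. -/
noncomputable def gfib : ℕ → MvPolynomial (Fin 2) ℤ
  | 0 => 0
  | 1 => 1
  | (m + 2) => X 0 * gfib (m + 1) + X 1 * gfib m

/-- The Fibonacci factorial `{m}!_{s,t}`. -/
noncomputable def gfibFact : ℕ → MvPolynomial (Fin 2) ℤ
  | 0 => 1
  | (m + 1) => gfib (m + 1) * gfibFact m

/-- The primitive `n`-th root of unity `ζ = exp(2πi/n)`. -/
noncomputable def primRoot (n : ℕ) : ℂ := Complex.exp (2 * Real.pi * Complex.I / n)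

/-- A set partition of `ℤ/nℤ` is noncrossing if there are no residues
`a < b < c < d` (as natural numbers in `[0, n)`) with `a, c` in one block and `b, d` in a
different block. -/
def IsNoncrossing {n : ℕ} [NeZero n] (π : Finpartition (Finset.univ : Finset (ZMod n))) :
    Prop :=
  ¬ ∃ (a b c d : ZMod n) (B₁ B₂ : Finset (ZMod n)), B₁ ∈ π.parts ∧ B₂ ∈ π.parts ∧
      B₁ ≠ B₂ ∧ a ∈ B₁ ∧ c ∈ B₁ ∧ b ∈ B₂ ∧ d ∈ B₂ ∧
      a.val < b.val ∧ b.val < c.val ∧ c.val < d.val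


/-! ### Noncrossing relations on the integers -/

def NCZ (T : ℤ → ℤ → Prop) : Prop :=
  ∀ a b c d : ℤ, a < b → b < c → c < d → T a c → T b d → T a b

def opZ (T : ℤ → ℤ → Prop) (x : ℤ) : Prop := ∀ y, y < x → ¬ T y x
def clZ (T : ℤ → ℤ → Prop) (x : ℤ) : Prop := ∀ y, x < y → ¬ T x y

open Classical in
noncomputable def ind (p : Prop) : ℤ := if p then 1 else 0

lemma ind_of {p : Prop} (h : p) : ind p = 1 := by simp [ind, h]
lemma ind_not {p : Prop} (h : ¬ p) : ind p = 0 := by simp [ind, h]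
lemma ind_nonneg (p : Prop) : 0 ≤ ind p := by unfold ind; split_ifs <;> simp
lemma ind_le (p : Prop) : ind p ≤ 1 := by unfold ind; split_ifs <;> simp

open Classical in
lemma sum_ind (s : Finset ℤ) (p : ℤ → Prop) : ∑ i ∈ s, ind (p i) = ((s.filter p).card : ℤ) := by
  simp [ind]

lemma H_sum (H l r : ℤ → ℤ) (hH : ∀ i, H (i + 1) = H i + l i - r i) (x z : ℤ) (hxz : x ≤ z) :
    H z = H x + ∑ i ∈ Finset.Ico x z, l i - ∑ i ∈ Finset.Ico x z, r i := by
  induction z, hxz using Int.le_induction with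
  | base => simp
  | succ z hz ih =>
    have : Finset.Ico x (z + 1) = insert z (Finset.Ico x z) := by
      ext t; simp only [Finset.mem_Ico, Finset.mem_insert]; omega
    rw [this, Finset.sum_insert (by simp), Finset.sum_insert (by simp), hH, ih]; ring

/-- exists a least element of the block of `c` in `(x, c]`. -/
lemma exists_min_in (T : ℤ → ℤ → Prop) (x c : ℤ) (hxc : x < c) (h : T c c) :
    ∃ b, x < b ∧ b ≤ c ∧ T b c ∧ ∀ t, x < t → t < b → ¬ T t c := by
  classical
  have hne : ((Finset.Ioc x c).filter (fun t => T t c)).Nonempty :=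
    ⟨c, by simp [hxc, h]⟩
  obtain ⟨b, hb, hmin⟩ := Finset.exists_min_image _ id hne
  simp only [Finset.mem_filter, Finset.mem_Ioc, id] at hb hmin
  refine ⟨b, hb.1.1, hb.1.2, hb.2, fun t h1 h2 h3 => ?_⟩
  have := hmin t ⟨⟨h1, by omega⟩, h3⟩
  omega

lemma exists_max_in (T : ℤ → ℤ → Prop) (b y : ℤ) (hxc : b ≤ y) (h : T b b) :
    ∃ c, b ≤ c ∧ c ≤ y ∧ T b c ∧ ∀ t, t ≤ y → c < t → ¬ T b t := by
  classical
  have hne : ((Finset.Icc b y).filter (fun t => T b t)).Nonempty :=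
    ⟨b, by simp [hxc, h]⟩
  obtain ⟨c, hb, hmin⟩ := Finset.exists_max_image _ id hne
  simp only [Finset.mem_filter, Finset.mem_Icc, id] at hb hmin
  refine ⟨c, hb.1.1, hb.1.2, hb.2, fun t h1 h2 h3 => ?_⟩
  have := hmin t ⟨⟨by omega, h1⟩, h3⟩
  omega

section fixT
variable {T : ℤ → ℤ → Prop} (hE : Equivalence T) (hN : NCZ T)
include hE hN

open Classical in
/-- Generic counting lemma. -/
lemma card_le_openers (x u z : ℤ) (hxu : T x u) (s : Finset ℤ)
    (hs : ∀ t ∈ s, x < t ∧ t < u ∧ t ≤ z ∧ ¬ T x t)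
    (hp : ∀ t ∈ s, ∀ t' ∈ s, T t t' → t = t') :
    s.card ≤ ((Finset.Ioc x z).filter (opZ T)).card := by
  refine Finset.card_le_card_of_forall_subsingleton (fun t b => T b t) ?_ ?_
  · intro c hc
    obtain ⟨h1, h2, h3, h4⟩ := hs c hc
    obtain ⟨b, hb1, hb2, hb3, hb4⟩ := exists_min_in T x c h1 (hE.refl c)
    refine ⟨b, ?_, hb3⟩
    simp only [Finset.mem_filter, Finset.mem_Ioc]
    refine ⟨⟨hb1, by omega⟩, fun t ht hT => ?_⟩
    have htc : T t c := hE.trans hT hb3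
    by_cases hxt : x < t
    · exact hb4 t hxt ht htc
    · rcases lt_or_eq_of_le (not_lt.mp hxt) with h | h
      · exact h4 (hE.trans (hE.symm (hN t x c u h h1 h2 htc hxu)) htc)
      · subst h; exact h4 htc
  · intro b _ c hc c' hc'
    exact hp c hc.1 c' hc'.1 (hE.trans (hE.symm hc.2) hc'.2)

lemma rel_le (H : ℤ → ℤ) (hH : ∀ i, H (i + 1) = H i + ind (opZ T i) - ind (clZ T i))
    (x y z : ℤ) (hxy : T x y) (hxz : x < z) (hzy : z ≤ y) :
    H x + ind (opZ T x) ≤ H z := by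
  classical
  have h1 := H_sum H _ _ hH x z hxz.le
  rw [sum_ind, sum_ind] at h1
  have h2 := card_le_openers hE hN x y (z-1) hxy ((Finset.Ico x z).filter (clZ T)) (by
    intro t ht
    simp only [Finset.mem_filter, Finset.mem_Ico] at ht
    have hnx : ¬ T x t := fun h => ht.2 y (by omega) (hE.trans (hE.symm h) hxy)
    refine ⟨lt_of_le_of_ne ht.1.1 ?_, by omega, by omega, hnx⟩
    rintro rfl; exact hnx (hE.refl _)) (by
    intro t ht t' ht' h
    simp only [Finset.mem_filter] at ht ht'
    rcases lt_trichotomy t t' with h' | h' | h'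
    · exact absurd h (ht.2 _ h')
    · exact h'
    · exact absurd (hE.symm h) (ht'.2 _ h'))
  have h3 : ((Finset.Ico x z).filter (opZ T)).card =
      ((Finset.Ioc x (z-1)).filter (opZ T)).card + (if opZ T x then 1 else 0) := by
    have : Finset.Ico x z = insert x (Finset.Ioc x (z-1)) := by
      ext t; simp only [Finset.mem_Ico, Finset.mem_insert, Finset.mem_Ioc]; omega
    rw [this, Finset.filter_insert]
    split_ifs with h
    · rw [Finset.card_insert_of_notMem (by simp)]
    · simp
  have h4 : ind (opZ T x) = ((if opZ T x then 1 else 0 : ℕ) : ℤ) := by simp [ind]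
  rw [h3] at h1
  push_cast at h1 h4
  rw [h1, h4]
  have : (((Finset.Ico x z).filter (clZ T)).card : ℤ) ≤ ((Finset.Ioc x (z-1)).filter (opZ T)).card := by
    exact_mod_cast h2
  linarith

lemma rel_eq (H : ℤ → ℤ) (hH : ∀ i, H (i + 1) = H i + ind (opZ T i) - ind (clZ T i))
    (x y : ℤ) (hxy : T x y) (hlt : x < y) :
    H x + ind (opZ T x) = H y + ind (opZ T y) := by
  classical
  have h0 : ind (opZ T y) = 0 := ind_not (fun h => h x hlt hxy)
  rw [h0, add_zero]
  apply le_antisymm (rel_le hE hN H hH x y y hxy hlt le_rfl)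
  have h1 := H_sum H _ _ hH x y hlt.le
  rw [sum_ind, sum_ind] at h1
  have h2 : ((Finset.Ioo x y).filter (opZ T)).card ≤ ((Finset.Ico x y).filter (clZ T)).card := by
    refine Finset.card_le_card_of_forall_subsingleton (fun b c => T b c) ?_ ?_
    · intro b hb
      simp only [Finset.mem_filter, Finset.mem_Ioo] at hb
      obtain ⟨c, hc1, hc2, hc3, hc4⟩ := exists_max_in T b (y-1) (by omega) (hE.refl b)
      refine ⟨c, ?_, hc3⟩
      simp only [Finset.mem_filter, Finset.mem_Ico]
      refine ⟨⟨by omega, by omega⟩, fun t ht hT => ?_⟩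
      have hbt : T b t := hE.trans hc3 hT
      by_cases hty : t ≤ y - 1
      · exact hc4 t hty ht hbt
      · rcases lt_or_eq_of_le (show y ≤ t by omega) with h | h
        · exact hb.2 x hb.1.1 (hN x b y t hb.1.1 hb.1.2 h hxy hbt)
        · subst h; exact hb.2 x hb.1.1 (hE.trans hxy (hE.symm hbt))
    · intro c _ b hb b' hb'
      have hbb : T b b' := hE.trans hb.2 (hE.symm hb'.2)
      have h1 := hb.1; have h2 := hb'.1
      simp only [Finset.mem_filter] at h1 h2
      rcases lt_trichotomy b b' with h' | h' | h'
      · exact absurd hbb (h2.2 _ h')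
      · exact h'
      · exact absurd (hE.symm hbb) (h1.2 _ h')
  have h3 : ((Finset.Ico x y).filter (opZ T)).card =
      ((Finset.Ioo x y).filter (opZ T)).card + (if opZ T x then 1 else 0) := by
    have : Finset.Ico x y = insert x (Finset.Ioo x y) := by
      ext t; simp only [Finset.mem_Ico, Finset.mem_insert, Finset.mem_Ioo]; omega
    rw [this, Finset.filter_insert]
    split_ifs with h
    · rw [Finset.card_insert_of_notMem (by simp)]
    · simp
  have h4 : ind (opZ T x) = ((if opZ T x then 1 else 0 : ℕ) : ℤ) := by simp [ind]
  rw [h3] at h1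
  push_cast at h1 h4
  rw [h1, h4]
  have : (((Finset.Ioo x y).filter (opZ T)).card : ℤ) ≤ ((Finset.Ico x y).filter (clZ T)).card := by
    exact_mod_cast h2
  linarith

lemma rel_iff (H : ℤ → ℤ) (hH : ∀ i, H (i + 1) = H i + ind (opZ T i) - ind (clZ T i))
    (x y : ℤ) (hlt : x < y) :
    T x y ↔ (H x + ind (opZ T x) = H y + ind (opZ T y) ∧
      ∀ z, x < z → z ≤ y → H x + ind (opZ T x) ≤ H z) := by
  classical
  constructor
  · intro h
    exact ⟨rel_eq hE hN H hH x y h hlt, fun z h1 h2 => rel_le hE hN H hH x y z h h1 h2⟩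
  rintro ⟨hg, hz⟩
  obtain ⟨y', h1, h2, h3, h4⟩ := exists_max_in T x y hlt.le (hE.refl x)
  rcases lt_or_eq_of_le h2 with h2 | h2
  swap
  · subst h2; exact h3
  exfalso
  have hg' : H x + ind (opZ T x) = H y' + ind (opZ T y') := by
    rcases lt_or_eq_of_le h1 with h | h
    · exact rel_eq hE hN H hH x y' h3 h
    · subst h; rfl
  rw [hg'] at hg hz
  have hncl : ¬ clZ T y' := by
    intro h
    have := hz (y'+1) (by omega) (by omega)
    rw [hH, ind_of h] at this; linarith
  obtain ⟨u, hu1, hu2⟩ : ∃ u, y' < u ∧ T y' u := by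
    unfold clZ at hncl; push Not at hncl; exact hncl
  have huy : y < u := by
    by_contra h
    exact h4 u (by omega) hu1 (hE.trans h3 hu2)
  have hnt : ∀ t, t ≤ y → y' < t → ¬ T y' t := fun t ha hb hc => h4 t ha hb (hE.trans h3 hc)
  have h5 := card_le_openers hE hN y' u y hu2 (insert y ((Finset.Ico y' y).filter (clZ T))) (by
    intro t ht
    simp only [Finset.mem_insert, Finset.mem_filter, Finset.mem_Ico] at ht
    rcases ht with rfl | ht
    · exact ⟨h2, huy, le_rfl, hnt _ le_rfl h2⟩
    · have : t ≠ y' := by rintro rfl; exact hncl ht.2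
      exact ⟨by omega, by omega, by omega, hnt _ (by omega) (by omega)⟩) (by
    intro t ht t' ht' h
    simp only [Finset.mem_insert, Finset.mem_filter, Finset.mem_Ico] at ht ht'
    rcases lt_trichotomy t t' with h' | h' | h'
    · rcases ht with rfl | ht
      · rcases ht' with rfl | ht' <;> omega
      · exact absurd h (ht.2 _ h')
    · exact h'
    · rcases ht' with rfl | ht'
      · rcases ht with rfl | ht <;> omega
      · exact absurd (hE.symm h) (ht'.2 _ h'))
  rw [Finset.card_insert_of_notMem (by simp)] at h5
  have h6 := H_sum H _ _ hH y' (y+1) (by omega)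
  rw [hH, sum_ind, Finset.sum_congr (show Finset.Ico y' (y+1) = insert y (Finset.Ico y' y) by
    ext t; simp only [Finset.mem_Ico, Finset.mem_insert]; omega) (fun _ _ => rfl),
    Finset.sum_insert (by simp), sum_ind] at h6
  have h7 : ((Finset.Ico y' (y+1)).filter (opZ T)).card =
      ((Finset.Ioc y' y).filter (opZ T)).card + (if opZ T y' then 1 else 0) := by
    have : Finset.Ico y' (y+1) = insert y' (Finset.Ioc y' y) := by
      ext t; simp only [Finset.mem_Ico, Finset.mem_insert, Finset.mem_Ioc]; omega
    rw [this, Finset.filter_insert]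
    split_ifs with h
    · rw [Finset.card_insert_of_notMem (by simp)]
    · simp
  have h8 : ind (opZ T y') = ((if opZ T y' then 1 else 0 : ℕ) : ℤ) := by simp [ind]
  rw [h7] at h6
  push_cast at h6 h8
  have h9 : (((Finset.Ico y' y).filter (clZ T)).card : ℤ) + 1 ≤ ((Finset.Ioc y' y).filter (opZ T)).card := by
    exact_mod_cast h5
  linarith

end fixT

/-- a relation is determined by its openers and closers -/
lemma rel_unique {T T' : ℤ → ℤ → Prop} (hE : Equivalence T) (hN : NCZ T)
    (hE' : Equivalence T') (hN' : NCZ T') (H : ℤ → ℤ)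
    (hH : ∀ i, H (i + 1) = H i + ind (opZ T i) - ind (clZ T i))
    (ho : ∀ i, opZ T i ↔ opZ T' i) (hc : ∀ i, clZ T i ↔ clZ T' i) (x y : ℤ) : T x y ↔ T' x y := by
  have ho' : opZ T = opZ T' := funext fun i => propext (ho i)
  have hc' : clZ T = clZ T' := funext fun i => propext (hc i)
  have key : ∀ x y, x < y → (T x y ↔ T' x y) := by
    intro x y h
    rw [rel_iff hE hN H hH x y h, rel_iff hE' hN' H (by rw [← ho', ← hc']; exact hH) x y h, ho']
  rcases lt_trichotomy x y with h | h | h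
  · exact key x y h
  · subst h; exact ⟨fun _ => hE'.refl _, fun _ => hE.refl _⟩
  · exact ⟨fun a => hE'.symm ((key y x h).1 (hE.symm a)), fun a => hE.symm ((key y x h).2 (hE'.symm a))⟩

/-! ### From heights to relations -/

def TH (H l : ℤ → ℤ) (x y : ℤ) : Prop :=
  H x + l x = H y + l y ∧ ∀ z, (x < z ∧ z ≤ y ∨ y < z ∧ z ≤ x) → H x + l x ≤ H z

lemma TH_equiv (H l : ℤ → ℤ) : Equivalence (TH H l) := by
  refine ⟨fun x => ⟨rfl, fun z hz => by omega⟩, fun {x y} h => ⟨h.1.symm, fun z hz => ?_⟩,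
    fun {x y z} h h' => ⟨h.1.trans h'.1, fun t ht => ?_⟩⟩
  · rw [← h.1]; exact h.2 z (by omega)
  · by_cases h1 : (x < t ∧ t ≤ y ∨ y < t ∧ t ≤ x)
    · exact h.2 t h1
    · rw [h.1]; exact h'.2 t (by omega)

section fixH
variable {H l r : ℤ → ℤ} (hH : ∀ i, H (i + 1) = H i + l i - r i)
  (hl : ∀ i, l i = 0 ∨ l i = 1) (hr : ∀ i, r i = 0 ∨ r i = 1)

lemma TH_lt {x y : ℤ} (h : x < y) : TH H l x y ↔
    (H x + l x = H y + l y ∧ ∀ z, x < z → z ≤ y → H x + l x ≤ H z) := by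
  unfold TH
  constructor
  · rintro ⟨a, b⟩; exact ⟨a, fun z h1 h2 => b z (by omega)⟩
  · rintro ⟨a, b⟩; exact ⟨a, fun z hz => b z (by omega) (by omega)⟩

include hH hl hr

lemma TH_nc : NCZ (TH H l) := by
  intro a b c d hab hbc hcd h1 h2
  rw [TH_lt (by omega)] at h1 h2 ⊢
  have e1 := h1.2 b (by omega) (by omega)
  have e2 := h2.2 c (by omega) (by omega)
  have e3 := h2.2 (c+1) (by omega) (by omega)
  rw [hH] at e3
  have := hl b; have := hl c; have := hr c
  refine ⟨by omega, fun z hz1 hz2 => h1.2 z (by omega) (by omega)⟩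

lemma exists_arc (p c : ℤ) (hc : H p = c) (h1 : ∃ a, a < p ∧ H a + l a ≤ c)
    (h2 : ∃ b, p ≤ b ∧ H b + l b ≤ c) :
    ∃ a b, a < p ∧ p ≤ b ∧ TH H l a b ∧ (∀ z, a < z → z < p → c < H z + l z) ∧
      (∀ z, p ≤ z → z < b → c < H z + l z) ∧ H a + l a = c := by
  obtain ⟨a, ha, ha2⟩ := Int.exists_greatest_of_bdd (P := fun a => a < p ∧ H a + l a ≤ c)
    ⟨p, fun z hz => hz.1.le⟩ h1
  obtain ⟨b, hb, hb2⟩ := Int.exists_least_of_bdd (P := fun b => p ≤ b ∧ H b + l b ≤ c)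
    ⟨p, fun z hz => hz.1⟩ h2
  have A : ∀ z, a < z → z < p → c < H z + l z := by
    intro z h1 h2; by_contra h; have := ha2 z ⟨h2, by omega⟩; omega
  have B : ∀ z, p ≤ z → z < b → c < H z + l z := by
    intro z h1 h2; by_contra h; have := hb2 z ⟨h1, by omega⟩; omega
  have ea : c ≤ H a + l a := by
    have e := hH a
    by_cases h : a + 1 = p
    · rw [h] at e; have := hr a; omega
    · have := A (a+1) (by omega) (by omega); have := hr a; have := hl (a+1); omega
  have eb : c ≤ H b + l b := by
    have e := hH (b-1)
    rw [sub_add_cancel] at e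
    by_cases h : b = p
    · rw [h]; have := hl p; omega
    · have := B (b-1) (by omega) (by omega); have := hr (b-1); have := hl b; omega
  refine ⟨a, b, ha.1, hb.1, ?_, A, B, by omega⟩
  rw [TH_lt (by omega)]
  refine ⟨by omega, fun z h1 h2 => ?_⟩
  have e := hH (z-1)
  rw [sub_add_cancel] at e
  have := hr (z-1); have := hl z
  rcases lt_trichotomy z p with h | h | h
  · have := A z h1 h; omega
  · subst h; omega
  · have := B (z-1) (by omega) (by omega); omega

lemma TH_op (hlow : ∀ x, ∃ y, y < x ∧ H y + l y ≤ H x + l x) (x : ℤ) :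
    opZ (TH H l) x ↔ l x = 1 := by
  constructor
  · intro h
    by_contra hx
    have hx0 : l x = 0 := by have := hl x; omega
    obtain ⟨a, b, h1, h2, h3, h4, h5, h6⟩ := exists_arc hH hl hr x (H x) rfl
      (by obtain ⟨y, hy⟩ := hlow x; exact ⟨y, hy.1, by omega⟩) ⟨x, le_rfl, by omega⟩
    have : b = x := by
      by_contra hb
      have := h5 x le_rfl (by omega); omega
    subst this
    exact h a h1 h3
  · intro h y hy hT
    rw [TH_lt hy] at hT
    have := hT.2 x hy le_rfl; omega

lemma TH_cl (hhigh : ∀ x, ∃ y, x < y ∧ H y + l y ≤ H x + l x) (x : ℤ) :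
    clZ (TH H l) x ↔ r x = 1 := by
  have e := hH x
  constructor
  · intro h
    by_contra hx
    have hx0 : r x = 0 := by have := hr x; omega
    obtain ⟨a, b, h1, h2, h3, h4, h5, h6⟩ := exists_arc hH hl hr (x+1) (H (x+1)) rfl
      ⟨x, by omega, by omega⟩ (by obtain ⟨y, hy⟩ := hhigh x; exact ⟨y, by omega, by omega⟩)
    have : a = x := by
      by_contra hb
      have := h4 x (by omega) (by omega); omega
    subst this
    exact h b (by omega) h3
  · intro h y hy hT
    rw [TH_lt hy] at hT
    have := hT.2 (x+1) (by omega) (by omega); omega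

end fixH


/-! ### Words -/

abbrev Wd (m : ℕ) := Fin m → Bool × Bool

def b2 (b : Bool) : ℤ := if b then 1 else 0

lemma b2_cases (b : Bool) : b2 b = 0 ∨ b2 b = 1 := by cases b <;> simp [b2]
lemma b2_inj {b c : Bool} (h : b2 b = b2 c) : b = c := by
  cases b <;> cases c <;> simp_all [b2]

def lv {m : ℕ} (w : Wd m) (i : ℕ) : ℤ := if h : i < m then b2 (w ⟨i, h⟩).1 else 0
def rv {m : ℕ} (w : Wd m) (i : ℕ) : ℤ := if h : i < m then b2 (w ⟨i, h⟩).2 else 0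

lemma lv_cases {m : ℕ} (w : Wd m) (i : ℕ) : lv w i = 0 ∨ lv w i = 1 := by
  unfold lv; split_ifs
  · exact b2_cases _
  · simp
lemma rv_cases {m : ℕ} (w : Wd m) (i : ℕ) : rv w i = 0 ∨ rv w i = 1 := by
  unfold rv; split_ifs
  · exact b2_cases _
  · simp

def Sg {m : ℕ} (w : Wd m) (i : ℕ) : ℤ := ∑ j ∈ Finset.range i, (lv w j - rv w j)
def Lc {m : ℕ} (w : Wd m) : ℤ := ∑ j ∈ Finset.range m, lv w j
def Rc {m : ℕ} (w : Wd m) : ℤ := ∑ j ∈ Finset.range m, rv w j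

lemma Sg_m {m : ℕ} (w : Wd m) : Sg w m = Lc w - Rc w := by simp [Sg, Lc, Rc]
lemma Sg_zero {m : ℕ} (w : Wd m) : Sg w 0 = 0 := by simp [Sg]
lemma Sg_succ {m : ℕ} (w : Wd m) (i : ℕ) : Sg w (i+1) = Sg w i + lv w i - rv w i := by
  simp [Sg, Finset.sum_range_succ]; ring

def Hz {m : ℕ} (w : Wd m) (i : ℤ) : ℤ := Sg w (i % m).toNat
def lz {m : ℕ} (w : Wd m) (i : ℤ) : ℤ := lv w (i % m).toNat
def rz {m : ℕ} (w : Wd m) (i : ℤ) : ℤ := rv w (i % m).toNat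

lemma toNat_mod (m : ℕ) (k : ℕ) (hk : k < m) : (((k : ℤ) % m).toNat) = k := by
  rw [Int.emod_eq_of_lt (by omega) (by omega)]; simp

lemma Hz_nat {m : ℕ} (w : Wd m) (k : ℕ) (hk : k < m) : Hz w k = Sg w k := by
  rw [Hz, toNat_mod m k hk]
lemma lz_nat {m : ℕ} (w : Wd m) (k : ℕ) (hk : k < m) : lz w k = lv w k := by
  rw [lz, toNat_mod m k hk]
lemma rz_nat {m : ℕ} (w : Wd m) (k : ℕ) (hk : k < m) : rz w k = rv w k := by
  rw [rz, toNat_mod m k hk]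

lemma Hz_per {m : ℕ} (w : Wd m) (i : ℤ) : Hz w (i + m) = Hz w i := by simp [Hz]
lemma lz_per {m : ℕ} (w : Wd m) (i : ℤ) : lz w (i + m) = lz w i := by simp [lz]
lemma rz_per {m : ℕ} (w : Wd m) (i : ℤ) : rz w (i + m) = rz w i := by simp [rz]

lemma Hz_rec {m : ℕ} (hm : 0 < m) (w : Wd m) (hb : Lc w = Rc w) (i : ℤ) :
    Hz w (i + 1) = Hz w i + lz w i - rz w i := by
  have hm' : (0 : ℤ) < m := by exact_mod_cast hm
  have h0 := Int.emod_nonneg i hm'.ne'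
  have h1 := Int.emod_lt_of_pos i hm'
  obtain ⟨k, hk⟩ := Int.eq_ofNat_of_zero_le h0
  unfold Hz lz rz
  rw [hk, Int.toNat_natCast, ← Sg_succ]
  have e : (i + 1) % m = ((k : ℤ) + 1) % m := by rw [← hk, Int.emod_add_emod]
  by_cases h : k + 1 = m
  · rw [e, h, Sg_m, hb, show ((k : ℤ) + 1) = m by exact_mod_cast h, Int.emod_self]
    simp [Sg_zero]
  · rw [e, Int.emod_eq_of_lt (by omega) (by omega)]
    congr 1

def Tw {m : ℕ} (w : Wd m) : ℤ → ℤ → Prop := TH (Hz w) (lz w)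

structure NP (m : ℕ) (T : ℤ → ℤ → Prop) : Prop where
  eqv : Equivalence T
  nc : NCZ T
  per : ∀ x y, T x y ↔ T (x + m) (y + m)

lemma per_int {p : ℤ → ℤ → Prop} {m : ℕ} (h : ∀ x y, p x y ↔ p (x + m) (y + m)) (k : ℤ) :
    ∀ x y, p x y ↔ p (x + k * m) (y + k * m) := by
  induction k using Int.induction_on with
  | zero => simp
  | succ k ih =>
    intro x y
    rw [ih x y, h]; ring_nf
  | pred k ih =>
    intro x y
    rw [ih x y, h (x + (-(k:ℤ) - 1) * m)]; ring_nf

namespace NP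
variable {m : ℕ} {T : ℤ → ℤ → Prop} (h : NP m T)
include h

lemma shift (k : ℤ) (x y : ℤ) : T x y ↔ T (x + k * m) (y + k * m) := per_int h.per k x y

lemma inf {x y : ℤ} (hm : 0 < m) (hT : T x y) (hxy : x + m ≤ y) : T x (x + m) := by
  rcases lt_or_eq_of_le hxy with hlt | rfl
  · exact h.nc x (x+m) y (y+m) (by omega) hlt (by omega) hT ((h.per _ _).1 hT)
  · exact hT

lemma inf' {x y : ℤ} (hm : 0 < m) (hT : T x y) (hxy : (m : ℤ) ≤ |x - y|) : T x (x + m) := by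
  rcases le_total x y with h1 | h1
  · rw [abs_of_nonpos (by omega)] at hxy
    exact h.inf hm hT (by omega)
  · rw [abs_of_nonneg (by omega)] at hxy
    have h2 := h.inf hm (h.eqv.symm hT) (by omega)
    exact h.eqv.trans hT (h.eqv.trans h2 ((h.per _ _).1 (h.eqv.symm hT)))

lemma inf_all {x : ℤ} (hT : T x (x + m)) (k : ℤ) : T x (x + k * m) := by
  induction k using Int.induction_on with
  | zero => simpa using h.eqv.refl x
  | succ k ih =>
    have := (h.shift k _ _).1 hT
    have e : x + m + k * m = x + ((k : ℤ) + 1) * m := by ring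
    rw [e] at this
    exact h.eqv.trans ih this
  | pred k ih =>
    have := (h.shift (-(k : ℤ) - 1) _ _).1 hT
    have e : x + m + (-(k : ℤ) - 1) * m = x + (-(k : ℤ)) * m := by ring
    rw [e] at this
    exact h.eqv.trans ih (h.eqv.symm this)

lemma inf_rel {x y : ℤ} (hT : T x (x + m)) (hxy : T x y) : T y (y + m) :=
  h.eqv.trans (h.eqv.symm hxy) (h.eqv.trans hT ((h.per _ _).1 hxy))

lemma op_per (x : ℤ) : opZ T (x + m) ↔ opZ T x := by
  constructor
  · intro ho y hy hT
    exact ho (y + m) (by omega) ((h.per _ _).1 hT)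
  · intro ho y hy hT
    refine ho (y - m) (by omega) ((h.per _ _).2 ?_)
    simpa using hT

lemma cl_per (x : ℤ) : clZ T (x + m) ↔ clZ T x := by
  constructor
  · intro ho y hy hT
    exact ho (y + m) (by omega) ((h.per _ _).1 hT)
  · intro ho y hy hT
    refine ho (y - m) (by omega) ((h.per _ _).2 ?_)
    simpa using hT

lemma op_shift (k x : ℤ) : opZ T (x + k * m) ↔ opZ T x := by
  have := per_int (p := fun x _ => opZ T x) (fun x y => (h.op_per x).symm) k x x
  exact this.symm

lemma cl_shift (k x : ℤ) : clZ T (x + k * m) ↔ clZ T x := by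
  have := per_int (p := fun x _ => clZ T x) (fun x y => (h.cl_per x).symm) k x x
  exact this.symm

lemma op_not_inf (hm : 0 < m) {x : ℤ} (ho : opZ T x) : ¬ T x (x + m) := by
  intro hT
  refine ho (x - m) (by omega) ((h.per _ _).2 ?_)
  simpa using hT

omit h in
lemma cl_not_inf (hm : 0 < m) {x : ℤ} (ho : clZ T x) : ¬ T x (x + m) := by
  intro hT
  exact ho (x + m) (by omega) hT

lemma exists_op (hm : 0 < m) {x : ℤ} (hx : ¬ T x (x + m)) : ∃ a, a ≤ x ∧ T a x ∧ opZ T a := by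
  obtain ⟨b, h1, h2, h3, h4⟩ := exists_min_in T (x - m) x (by omega) (h.eqv.refl x)
  refine ⟨b, h2, h3, fun t ht hT => ?_⟩
  have hTx := h.eqv.trans hT h3
  by_cases h' : x - m < t
  · exact h4 t h' ht hTx
  · exact hx (h.inf' hm (h.eqv.symm hTx) (by rw [abs_of_nonneg] <;> omega))

lemma exists_cl (hm : 0 < m) {x : ℤ} (hx : ¬ T x (x + m)) : ∃ a, x ≤ a ∧ T x a ∧ clZ T a := by
  obtain ⟨b, h1, h2, h3, h4⟩ := exists_max_in T x (x + m - 1) (by omega) (h.eqv.refl x)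
  refine ⟨b, h1, h3, fun t ht hT => ?_⟩
  have hTx := h.eqv.trans h3 hT
  by_cases h' : t ≤ x + m - 1
  · exact h4 t h' ht hTx
  · exact hx (h.inf' hm hTx (by rw [abs_of_nonpos] <;> omega))

lemma op_unique {a b : ℤ} (ha : opZ T a) (hb : opZ T b) (hT : T a b) : a = b := by
  rcases lt_trichotomy a b with h' | h' | h'
  · exact absurd hT (hb _ h')
  · exact h'
  · exact absurd (h.eqv.symm hT) (ha _ h')

lemma cl_unique {a b : ℤ} (ha : clZ T a) (hb : clZ T b) (hT : T a b) : a = b := by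
  rcases lt_trichotomy a b with h' | h' | h'
  · exact absurd hT (ha _ h')
  · exact h'
  · exact absurd (h.eqv.symm hT) (hb _ h')

open Classical in
lemma balanced (hm : 0 < m) :
    ((Finset.Ico (0:ℤ) m).filter (opZ T)).card = ((Finset.Ico (0:ℤ) m).filter (clZ T)).card := by
  have hm' : (0 : ℤ) < m := by exact_mod_cast hm
  have hmod : ∀ c : ℤ, c % m + (c / m) * m = c := fun c => Int.emod_add_ediv_mul c m
  have hu : ∀ a b k : ℤ, a ∈ Finset.Ico (0:ℤ) m → b ∈ Finset.Ico (0:ℤ) m → a = b + k * m → a = b := by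
    intro a b k ha hb hab
    simp only [Finset.mem_Ico] at ha hb
    have hk : k = 0 := by
      have : k < 1 := by by_contra hk; nlinarith
      have : -1 < k := by by_contra hk; nlinarith
      omega
    simp [hab, hk]
  apply le_antisymm
  · refine Finset.card_le_card_of_forall_subsingleton (fun b c => ∃ k : ℤ, T b (c + k * m)) ?_ ?_
    · intro b hb
      simp only [Finset.mem_filter, Finset.mem_Ico] at hb
      obtain ⟨c, hc1, hc2, hc3⟩ := h.exists_cl hm (h.op_not_inf hm hb.2)
      refine ⟨c % m, ?_, c / m, by rw [hmod]; exact hc2⟩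
      simp only [Finset.mem_filter, Finset.mem_Ico]
      refine ⟨⟨Int.emod_nonneg _ hm'.ne', Int.emod_lt_of_pos _ hm'⟩, ?_⟩
      rw [← h.cl_shift (c / m), hmod]; exact hc3
    · rintro c _ b ⟨hb, k, hk⟩ b' ⟨hb', k', hk'⟩
      simp only [Finset.mem_filter] at hb hb'
      have h1 := (h.shift (k' - k) _ _).1 hk
      rw [show c + k * m + (k' - k) * m = c + k' * m by ring] at h1
      have := h.op_unique hb'.2 ((h.op_shift (k'-k) b).2 hb.2) (h.eqv.trans hk' (h.eqv.symm h1))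
      exact (hu b' b _ hb'.1 hb.1 this).symm
  · refine Finset.card_le_card_of_forall_subsingleton (fun b c => ∃ k : ℤ, T b (c + k * m)) ?_ ?_
    · intro b hb
      simp only [Finset.mem_filter, Finset.mem_Ico] at hb
      obtain ⟨c, hc1, hc2, hc3⟩ := h.exists_op hm (cl_not_inf hm hb.2)
      refine ⟨c % m, ?_, c / m, by rw [hmod]; exact h.eqv.symm hc2⟩
      simp only [Finset.mem_filter, Finset.mem_Ico]
      refine ⟨⟨Int.emod_nonneg _ hm'.ne', Int.emod_lt_of_pos _ hm'⟩, ?_⟩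
      rw [← h.op_shift (c / m), hmod]; exact hc3
    · rintro c _ b ⟨hb, k, hk⟩ b' ⟨hb', k', hk'⟩
      simp only [Finset.mem_filter] at hb hb'
      have h1 := (h.shift (k' - k) _ _).1 hk
      rw [show c + k * m + (k' - k) * m = c + k' * m by ring] at h1
      have := h.cl_unique hb'.2 ((h.cl_shift (k'-k) b).2 hb.2) (h.eqv.trans hk' (h.eqv.symm h1))
      exact (hu b' b _ hb'.1 hb.1 this).symm

end NP

open Classical in
noncomputable def wordOf (m : ℕ) (T : ℤ → ℤ → Prop) : Wd m :=
  fun i => (decide (opZ T ((i : ℕ) : ℤ)), decide (clZ T ((i : ℕ) : ℤ)))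

lemma lv_wordOf {m : ℕ} (T : ℤ → ℤ → Prop) (i : ℕ) (hi : i < m) :
    lv (wordOf m T) i = ind (opZ T i) := by
  by_cases h : opZ T i <;> simp [lv, wordOf, hi, b2, ind, h]
lemma rv_wordOf {m : ℕ} (T : ℤ → ℤ → Prop) (i : ℕ) (hi : i < m) :
    rv (wordOf m T) i = ind (clZ T i) := by
  by_cases h : clZ T i <;> simp [rv, wordOf, hi, b2, ind, h]

lemma mod_nat {m : ℕ} (hm : 0 < m) (i : ℤ) : ∃ k : ℕ, k < m ∧ (i % m).toNat = k ∧ i = k + (i / m) * m := by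
  have hm' : (0 : ℤ) < m := by exact_mod_cast hm
  have h0 := Int.emod_nonneg i hm'.ne'
  have h1 := Int.emod_lt_of_pos i hm'
  refine ⟨(i % m).toNat, by omega, rfl, ?_⟩
  rw [Int.toNat_of_nonneg h0]; exact (Int.emod_add_ediv_mul i m).symm

section
variable {m : ℕ} {T : ℤ → ℤ → Prop} (hm : 0 < m) (h : NP m T)
include hm h

lemma lz_wordOf (i : ℤ) : lz (wordOf m T) i = ind (opZ T i) := by
  obtain ⟨k, h1, h2, h3⟩ := mod_nat hm i
  rw [lz, h2, lv_wordOf T k h1]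
  conv_rhs => rw [h3]
  rw [(propext (h.op_shift _ _) : opZ T _ = _)]

lemma rz_wordOf (i : ℤ) : rz (wordOf m T) i = ind (clZ T i) := by
  obtain ⟨k, h1, h2, h3⟩ := mod_nat hm i
  rw [rz, h2, rv_wordOf T k h1]
  conv_rhs => rw [h3]
  rw [(propext (h.cl_shift _ _) : clZ T _ = _)]

omit hm h in
lemma sum_range_Ico (f : ℤ → ℤ) (m : ℕ) : ∑ j ∈ Finset.range m, f j = ∑ j ∈ Finset.Ico (0:ℤ) m, f j := by
  induction m with
  | zero => simp
  | succ m ih =>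
    rw [Finset.sum_range_succ, ih]
    have : Finset.Ico (0:ℤ) ((m+1 : ℕ):ℤ) = insert (m:ℤ) (Finset.Ico (0:ℤ) m) := by
      ext t; simp only [Finset.mem_Ico, Finset.mem_insert]; omega
    rw [this, Finset.sum_insert (by simp)]; ring

omit hm h in
open Classical in
lemma Lc_wordOf : Lc (wordOf m T) = ((Finset.Ico (0:ℤ) m).filter (opZ T)).card := by
  rw [← sum_ind, ← sum_range_Ico, Lc]
  exact Finset.sum_congr rfl fun i hi => lv_wordOf T i (Finset.mem_range.1 hi)

omit hm h in
open Classical in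
lemma Rc_wordOf : Rc (wordOf m T) = ((Finset.Ico (0:ℤ) m).filter (clZ T)).card := by
  rw [← sum_ind, ← sum_range_Ico, Rc]
  exact Finset.sum_congr rfl fun i hi => rv_wordOf T i (Finset.mem_range.1 hi)

lemma wordOf_balanced : Lc (wordOf m T) = Rc (wordOf m T) := by
  classical
  rw [Lc_wordOf, Rc_wordOf, h.balanced hm]

lemma Hz_wordOf (i : ℤ) : Hz (wordOf m T) (i+1) =
    Hz (wordOf m T) i + ind (opZ T i) - ind (clZ T i) := by
  rw [Hz_rec hm _ (wordOf_balanced hm h), lz_wordOf hm h, rz_wordOf hm h]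

end

lemma lz_cases {m : ℕ} (w : Wd m) (i : ℤ) : lz w i = 0 ∨ lz w i = 1 := lv_cases _ _
lemma rz_cases {m : ℕ} (w : Wd m) (i : ℤ) : rz w i = 0 ∨ rz w i = 1 := rv_cases _ _

section
variable {m : ℕ} (hm : 0 < m) (w : Wd m) (hb : Lc w = Rc w)
include hm hb

lemma Tw_op (x : ℤ) : opZ (Tw w) x ↔ lz w x = 1 :=
  TH_op (Hz_rec hm w hb) (lz_cases w) (rz_cases w) (fun x => ⟨x - m, by omega, by
    have := Hz_per w (x - m); have := lz_per w (x-m); simp only [sub_add_cancel] at *; omega⟩) x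

lemma Tw_cl (x : ℤ) : clZ (Tw w) x ↔ rz w x = 1 :=
  TH_cl (Hz_rec hm w hb) (lz_cases w) (rz_cases w) (fun x => ⟨x + m, by omega, by
    have := Hz_per w x; have := lz_per w x; omega⟩) x

lemma Tw_NP : NP m (Tw w) := by
  refine ⟨TH_equiv _ _, TH_nc (Hz_rec hm w hb) (lz_cases w) (rz_cases w), fun x y => ?_⟩
  unfold Tw TH
  rw [Hz_per, Hz_per, lz_per, lz_per]
  refine and_congr Iff.rfl ⟨fun h z hz => ?_, fun h z hz => ?_⟩
  · have := h (z - m) (by omega)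
    rwa [← Hz_per w (z-m), sub_add_cancel] at this
  · have := h (z + m) (by omega)
    rwa [Hz_per] at this

lemma wordOf_Tw : wordOf m (Tw w) = w := by
  classical
  funext i
  have h1 : lz w ((i:ℕ):ℤ) = b2 (w i).1 := by rw [lz_nat w i i.2]; simp [lv]
  have h2 : rz w ((i:ℕ):ℤ) = b2 (w i).2 := by rw [rz_nat w i i.2]; simp [rv]
  refine Prod.ext ?_ ?_
  · simp only [wordOf]
    rw [Bool.eq_iff_iff, decide_eq_true_iff, Tw_op hm w hb, h1]
    unfold b2; split_ifs <;> simp_all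
  · simp only [wordOf]
    rw [Bool.eq_iff_iff, decide_eq_true_iff, Tw_cl hm w hb, h2]
    unfold b2; split_ifs <;> simp_all
end

lemma Tw_wordOf {m : ℕ} {T : ℤ → ℤ → Prop} (hm : 0 < m) (h : NP m T) : Tw (wordOf m T) = T := by
  funext x y
  apply propext
  have hb := wordOf_balanced hm h
  have hN := Tw_NP hm _ hb
  refine (rel_unique h.eqv h.nc hN.eqv hN.nc _ (Hz_wordOf hm h) ?_ ?_ x y).symm
  · intro i; rw [Tw_op hm _ hb, lz_wordOf hm h]; unfold ind; split_ifs <;> simp_all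
  · intro i; rw [Tw_cl hm _ hb, rz_wordOf hm h]; unfold ind; split_ifs <;> simp_all

/-- infinite block -/
lemma Tw_inf {m : ℕ} (hm : 0 < m) (w : Wd m) (hb : Lc w = Rc w) :
    (∃ x, Tw w x (x + m)) ↔ ∃ i < m, ∀ z ≤ m, Sg w i + lv w i ≤ Sg w z := by
  have hper := (Tw_NP hm w hb)
  constructor
  · rintro ⟨x, hx⟩
    obtain ⟨k, h1, h2, h3⟩ := mod_nat hm x
    have hx0 := hx
    unfold Tw at hx
    rw [TH_lt (by omega)] at hx
    have hall : ∀ z, Hz w x + lz w x ≤ Hz w z := by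
      intro z
      have hx' := hper.inf_all hx0 (|z| + |x| + 1)
      have hx'' := hper.inf_all hx0 (-(|z| + |x| + 1))
      have hT := hper.eqv.trans (hper.eqv.symm hx'') hx'
      have e := abs_nonneg z
      have e' := abs_nonneg x
      have hmp : (1 : ℤ) ≤ m := by exact_mod_cast hm
      have l1 : |z| + |x| + 1 ≤ (|z| + |x| + 1) * m := by nlinarith
      have a1 := neg_abs_le z
      have a2 := le_abs_self z
      have a3 := neg_abs_le x
      have a4 := le_abs_self x
      rw [Tw, TH_lt (by linarith)] at hT
      have e1 := hT.2 z (by linarith) (by linarith)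
      have e2 := hx''.1
      rw [e2]; exact e1
    refine ⟨k, h1, fun z hz => ?_⟩
    have e1 : Hz w x = Sg w k := by rw [Hz, h2]
    have e2 : lz w x = lv w k := by rw [lz, h2]
    rw [← e1, ← e2]
    rcases lt_or_eq_of_le hz with h | h
    · rw [← Hz_nat w z h]; exact hall _
    · rw [h, Sg_m, hb, sub_self, ← Sg_zero w, ← Hz_nat w 0 hm]; exact hall _
  · rintro ⟨i, hi, h⟩
    refine ⟨i, ?_⟩
    rw [Tw, TH_lt (by omega), Hz_per, lz_per, Hz_nat w i hi, lz_nat w i hi]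
    refine ⟨rfl, fun z _ _ => ?_⟩
    obtain ⟨k, h1, h2, h3⟩ := mod_nat hm z
    rw [Hz, h2]; exact h k h1.le

/-- no arc crosses the cut -/
lemma Tw_cut {m : ℕ} (hm : 0 < m) (w : Wd m) (hb : Lc w = Rc w) :
    (∀ x y, Tw w x y → x / m = y / m) ↔ ∀ i < m, 1 ≤ Sg w i + lv w i := by
  have hm' : (0 : ℤ) < m := by exact_mod_cast hm
  have H0 : Hz w 0 = 0 := by simp [Hz, Sg_zero]
  constructor
  · intro h
    by_contra hcon
    push Not at hcon
    obtain ⟨i, hi, hlt⟩ := hcon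
    have e1 := Hz_nat w i hi
    have e2 := lz_nat w i hi
    have e3 := Hz_per w ((i:ℤ) - m)
    have e4 := lz_per w ((i:ℤ) - m)
    rw [sub_add_cancel] at e3 e4
    obtain ⟨a, b, h1, h2, h3, -⟩ := exists_arc (Hz_rec hm w hb) (lz_cases w) (rz_cases w) 0 0 H0
      ⟨i - m, by omega, by omega⟩ ⟨i, by omega, by omega⟩
    have := h a b h3
    have h5 : a / m < 0 := Int.ediv_neg_of_neg_of_pos h1 hm'
    have h6 : 0 ≤ b / m := Int.ediv_nonneg h2 hm'.le
    omega
  · intro h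
    have key : ∀ x y, x ≤ y → Tw w x y → x / m = y / m := by
      intro x y hxy hT
      by_contra hne
      have hle : x / m ≤ y / m := Int.ediv_le_ediv hm' hxy
      have hlt : x / m < y / m := lt_of_le_of_ne hle hne
      obtain ⟨k, h1, h2, h3⟩ := mod_nat hm x
      obtain ⟨k', h1', h2', h3'⟩ := mod_nat hm y
      have hq1 : x < (y / m) * m := by nlinarith
      have hq2 : (y / m) * m ≤ y := by omega
      rw [Tw, TH_lt (by omega)] at hT
      have := hT.2 _ hq1 hq2
      have e1 : Hz w x = Sg w k := by rw [Hz, h2]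
      have e2 : lz w x = lv w k := by rw [lz, h2]
      have e3 : Hz w ((y / m) * m) = 0 := by simp [Hz, Sg_zero]
      have := h k h1
      omega
    intro x y hT
    rcases le_total x y with h' | h'
    · exact key x y h' hT
    · exact (key y x h' ((Tw_NP hm w hb).eqv.symm hT)).symm


/-! ### Counting words -/

def cz (m : ℕ) (i : ℤ) : ℤ := if i < 0 then 0 else (m.choose i.toNat : ℤ)

lemma cz_nat (m k : ℕ) : cz m (k : ℤ) = (m.choose k : ℤ) := by simp [cz]
lemma cz_neg (m : ℕ) (i : ℤ) (h : i < 0) : cz m i = 0 := by simp [cz, h]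

lemma cz_succ (m : ℕ) (i : ℤ) : cz (m + 1) i = cz m i + cz m (i - 1) := by
  rcases lt_trichotomy i 0 with h | h | h
  · rw [cz_neg _ _ h, cz_neg _ _ h, cz_neg _ _ (by omega)]; simp
  · subst h; simp [cz]
  · obtain ⟨k, rfl⟩ : ∃ k : ℕ, i = k + 1 := ⟨(i-1).toNat, by omega⟩
    have : ((k:ℤ) + 1) = ((k + 1 : ℕ) : ℤ) := by simp
    rw [add_sub_cancel_right, this, cz_nat, cz_nat, cz_nat, Nat.choose_succ_succ]; push_cast; ring

lemma cz_zero (i : ℤ) : cz 0 i = if i = 0 then 1 else 0 := by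
  rcases lt_trichotomy i 0 with h | h | h
  · rw [cz_neg _ _ h, if_neg h.ne]
  · subst h; simp [cz]
  · rw [if_neg h.ne', cz, if_neg (by omega), Nat.choose_eq_zero_of_lt (by omega)]; simp

open Classical in
lemma card_cons (m : ℕ) (P : Wd (m+1) → Prop) :
    ((Finset.univ.filter P).card : ℤ) =
      ∑ x : Bool × Bool, ((Finset.univ.filter (fun w : Wd m => P (Fin.cons x w))).card : ℤ) := by
  have h1 : (Finset.univ.filter P).card =
      (Finset.univ.filter (fun q : (Bool × Bool) × Wd m => P (Fin.cons q.1 q.2))).card := by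
    symm
    refine Finset.card_bij (fun q _ => Fin.cons q.1 q.2) ?_ ?_ ?_
    · intro q hq; simpa using hq
    · rintro ⟨a, b⟩ _ ⟨c, d⟩ _ h
      have := Fin.cons_injective2 h
      simp_all
    · intro w hw
      refine ⟨(w 0, Fin.tail w), ?_, Fin.cons_self_tail w⟩
      simpa using hw
  rw [h1, Finset.card_filter]
  push_cast
  rw [Fintype.sum_prod_type]
  refine Finset.sum_congr rfl fun x _ => ?_
  rw [Finset.card_filter]; push_cast; rfl

lemma lv_cons_zero {m : ℕ} (x : Bool × Bool) (w : Wd m) :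
    lv (m := m+1) (Fin.cons x w : Wd (m+1)) 0 = b2 x.1 := by simp [lv]
lemma rv_cons_zero {m : ℕ} (x : Bool × Bool) (w : Wd m) :
    rv (m := m+1) (Fin.cons x w : Wd (m+1)) 0 = b2 x.2 := by simp [rv]
lemma lv_cons_succ {m : ℕ} (x : Bool × Bool) (w : Wd m) (i : ℕ) :
    lv (m := m+1) (Fin.cons x w : Wd (m+1)) (i+1) = lv w i := by
  unfold lv
  by_cases h : i < m
  · rw [dif_pos h, dif_pos (by omega)]
    congr 1
  · rw [dif_neg h, dif_neg (by omega)]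
lemma rv_cons_succ {m : ℕ} (x : Bool × Bool) (w : Wd m) (i : ℕ) :
    rv (m := m+1) (Fin.cons x w : Wd (m+1)) (i+1) = rv w i := by
  unfold rv
  by_cases h : i < m
  · rw [dif_pos h, dif_pos (by omega)]
    congr 1
  · rw [dif_neg h, dif_neg (by omega)]
lemma Sg_cons_succ {m : ℕ} (x : Bool × Bool) (w : Wd m) (i : ℕ) :
    Sg (m := m+1) (Fin.cons x w : Wd (m+1)) (i+1) = b2 x.1 - b2 x.2 + Sg w i := by
  unfold Sg
  rw [Finset.sum_range_succ', lv_cons_zero, rv_cons_zero]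
  simp only [lv_cons_succ, rv_cons_succ]; ring
lemma Lc_cons {m : ℕ} (x : Bool × Bool) (w : Wd m) :
    Lc (m := m+1) (Fin.cons x w : Wd (m+1)) = b2 x.1 + Lc w := by
  unfold Lc
  rw [Finset.sum_range_succ', lv_cons_zero]
  simp only [lv_cons_succ]; ring
lemma Rc_cons {m : ℕ} (x : Bool × Bool) (w : Wd m) :
    Rc (m := m+1) (Fin.cons x w : Wd (m+1)) = b2 x.2 + Rc w := by
  unfold Rc
  rw [Finset.sum_range_succ', rv_cons_zero]
  simp only [rv_cons_succ]; ring

def KP (m : ℕ) (a b h : ℤ) (w : Wd m) : Prop :=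
  Lc w = a ∧ Rc w = b ∧ ∀ i < m, 1 ≤ h + Sg w i + lv w i
def JP (m : ℕ) (a b h : ℤ) (w : Wd m) : Prop :=
  Lc w = a ∧ Rc w = b ∧ ∀ i ≤ m, 0 ≤ h + Sg w i
def AP (m : ℕ) (a b : ℤ) (w : Wd m) : Prop := Lc w = a ∧ Rc w = b

lemma KP_cons (m : ℕ) (a b h : ℤ) (x : Bool × Bool) (w : Wd m) :
    KP (m+1) a b h (Fin.cons x w) ↔ 1 ≤ h + b2 x.1 ∧ KP m (a - b2 x.1) (b - b2 x.2) (h + b2 x.1 - b2 x.2) w := by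
  unfold KP
  rw [Lc_cons, Rc_cons]
  constructor
  · rintro ⟨h1, h2, h3⟩
    refine ⟨?_, by linarith, by linarith, fun i hi => ?_⟩
    · have := h3 0 (by omega); rw [Sg_zero, lv_cons_zero] at this; linarith
    · have := h3 (i+1) (by omega); rw [Sg_cons_succ, lv_cons_succ] at this; linarith
  · rintro ⟨h0, h1, h2, h3⟩
    refine ⟨by linarith, by linarith, fun i hi => ?_⟩
    rcases i with _ | i
    · rw [Sg_zero, lv_cons_zero]; linarith
    · rw [Sg_cons_succ, lv_cons_succ]; have := h3 i (by omega); linarith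

lemma JP_cons (m : ℕ) (a b h : ℤ) (x : Bool × Bool) (w : Wd m) :
    JP (m+1) a b h (Fin.cons x w) ↔ 0 ≤ h ∧ JP m (a - b2 x.1) (b - b2 x.2) (h + b2 x.1 - b2 x.2) w := by
  unfold JP
  rw [Lc_cons, Rc_cons]
  constructor
  · rintro ⟨h1, h2, h3⟩
    refine ⟨?_, by linarith, by linarith, fun i hi => ?_⟩
    · have := h3 0 (by omega); rw [Sg_zero] at this; linarith
    · have := h3 (i+1) (by omega); rw [Sg_cons_succ] at this; linarith
  · rintro ⟨h0, h1, h2, h3⟩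
    refine ⟨by linarith, by linarith, fun i hi => ?_⟩
    rcases i with _ | i
    · rw [Sg_zero]; linarith
    · rw [Sg_cons_succ]; have := h3 i (by omega); linarith

lemma AP_cons (m : ℕ) (a b : ℤ) (x : Bool × Bool) (w : Wd m) :
    AP (m+1) a b (Fin.cons x w) ↔ AP m (a - b2 x.1) (b - b2 x.2) w := by
  unfold AP
  rw [Lc_cons, Rc_cons]
  constructor <;> rintro ⟨h1, h2⟩ <;> constructor <;> linarith

open Classical in
noncomputable def Kc (m : ℕ) (a b h : ℤ) : ℤ := (Finset.univ.filter (KP m a b h)).card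
open Classical in
noncomputable def Jc (m : ℕ) (a b h : ℤ) : ℤ := (Finset.univ.filter (JP m a b h)).card
open Classical in
noncomputable def Ac (m : ℕ) (a b : ℤ) : ℤ := (Finset.univ.filter (AP m a b)).card

lemma Kc_succ (m : ℕ) (a b h : ℤ) : Kc (m+1) a b h =
    (if 1 ≤ h + 1 then Kc m (a-1) (b-1) h + Kc m (a-1) b (h+1) else 0) +
    (if 1 ≤ h then Kc m a (b-1) (h-1) + Kc m a b h else 0) := by
  classical
  have key : ∀ x : Bool × Bool, ((Finset.univ.filter (fun w : Wd m => KP (m+1) a b h (Fin.cons x w))).card : ℤ)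
      = if 1 ≤ h + b2 x.1 then Kc m (a - b2 x.1) (b - b2 x.2) (h + b2 x.1 - b2 x.2) else 0 := by
    intro x
    rw [Finset.filter_congr (fun w _ => KP_cons m a b h x w)]
    split_ifs with h1
    · simp only [h1, true_and]; rfl
    · simp [h1]
  have h0 : Kc (m+1) a b h = _ := card_cons m (KP (m+1) a b h)
  rw [h0, Finset.sum_congr rfl (fun x _ => key x), Fintype.sum_prod_type, Fintype.sum_bool, Fintype.sum_bool, Fintype.sum_bool]
  simp only [b2, if_true, Bool.false_eq_true, if_false, add_zero, sub_zero, add_sub_cancel_right]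
  split_ifs <;> simp

lemma Jc_succ (m : ℕ) (a b h : ℤ) (hh : 0 ≤ h) : Jc (m+1) a b h =
    Jc m (a-1) (b-1) h + Jc m (a-1) b (h+1) + (Jc m a (b-1) (h-1) + Jc m a b h) := by
  classical
  have key : ∀ x : Bool × Bool, ((Finset.univ.filter (fun w : Wd m => JP (m+1) a b h (Fin.cons x w))).card : ℤ)
      = Jc m (a - b2 x.1) (b - b2 x.2) (h + b2 x.1 - b2 x.2) := by
    intro x
    rw [Finset.filter_congr (fun w _ => JP_cons m a b h x w)]
    simp only [hh, true_and]; rfl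
  have h0 : Jc (m+1) a b h = _ := card_cons m (JP (m+1) a b h)
  rw [h0, Finset.sum_congr rfl (fun x _ => key x), Fintype.sum_prod_type, Fintype.sum_bool, Fintype.sum_bool, Fintype.sum_bool]
  simp only [b2, if_true, Bool.false_eq_true, if_false, add_zero, sub_zero, add_sub_cancel_right]

lemma Ac_succ (m : ℕ) (a b : ℤ) : Ac (m+1) a b =
    Ac m (a-1) (b-1) + Ac m (a-1) b + (Ac m a (b-1) + Ac m a b) := by
  classical
  have key : ∀ x : Bool × Bool, ((Finset.univ.filter (fun w : Wd m => AP (m+1) a b (Fin.cons x w))).card : ℤ)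
      = Ac m (a - b2 x.1) (b - b2 x.2) := by
    intro x
    rw [Finset.filter_congr (fun w _ => AP_cons m a b x w)]
    rfl
  have h0 : Ac (m+1) a b = _ := card_cons m (AP (m+1) a b)
  rw [h0, Finset.sum_congr rfl (fun x _ => key x), Fintype.sum_prod_type, Fintype.sum_bool, Fintype.sum_bool, Fintype.sum_bool]
  simp only [b2, if_true, Bool.false_eq_true, if_false, add_zero, sub_zero]

open Classical in
lemma card0 (P : Wd 0 → Prop) (a b : ℤ) (h : ∀ w, P w ↔ (a = 0 ∧ b = 0)) :
    ((Finset.univ.filter P).card : ℤ) = (if a = 0 then 1 else 0) * (if b = 0 then 1 else 0) := by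
  rw [Finset.filter_congr (fun w _ => h w)]
  by_cases ha : a = 0 <;> by_cases hb : b = 0 <;> simp [ha, hb]

lemma Ac_eq (m : ℕ) (a b : ℤ) : Ac m a b = cz m a * cz m b := by
  induction m generalizing a b with
  | zero =>
    rw [cz_zero, cz_zero]
    exact card0 _ a b (fun w => by simp [AP, Lc, Rc, eq_comm])
  | succ m ih =>
    rw [Ac_succ, ih, ih, ih, ih, cz_succ, cz_succ]; ring

lemma Jc_neg (m : ℕ) (a b h : ℤ) (hh : h < 0) : Jc m a b h = 0 := by
  classical
  unfold Jc
  rw [Finset.filter_eq_empty_iff.2]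
  · simp
  · intro w _ hw
    have := hw.2.2 0 (by omega)
    rw [Sg_zero] at this; linarith

lemma Jc_eq (m : ℕ) (a b h : ℤ) (hh : -1 ≤ h) (hab : b ≤ a + h + 1) :
    Jc m a b h = cz m a * cz m b - cz m (a + h + 1) * cz m (b - h - 1) := by
  induction m generalizing a b h with
  | zero =>
    rcases lt_or_ge h 0 with h0 | h0
    · have : h = -1 := by omega
      rw [Jc_neg _ _ _ _ h0, this]; ring_nf
    · simp only [cz_zero]
      have : ¬ (a + h + 1 = 0 ∧ b - h - 1 = 0) := by omega
      have h5 : ∀ w : Wd 0, (∀ i ≤ 0, 0 ≤ h + Sg w i) := by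
        intro w i hi
        obtain rfl : i = 0 := by omega
        rw [Sg_zero]; linarith
      have h6 : (if a + h + 1 = 0 then (1:ℤ) else 0) * (if b - h - 1 = 0 then 1 else 0) = 0 := by
        by_cases h1 : a + h + 1 = 0 <;> by_cases h2 : b - h - 1 = 0 <;> simp [h1, h2] <;> omega
      rw [h6, sub_zero]
      refine card0 _ a b (fun w => ?_)
      have := h5 w
      simp only [JP, Lc, Rc, Finset.range_zero, Finset.sum_empty]
      tauto
  | succ m ih =>
    rcases lt_or_ge h 0 with h0 | h0
    · have : h = -1 := by omega
      rw [Jc_neg _ _ _ _ h0, this]; ring_nf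
    · rw [Jc_succ _ _ _ _ h0, ih _ _ _ (by omega) (by omega), ih _ _ _ (by omega) (by omega),
        ih _ _ _ (by omega) (by omega), ih _ _ _ (by omega) (by omega)]
      simp only [cz_succ]
      ring_nf

lemma Kc_eq (m : ℕ) (a b h : ℤ) (hh : 0 ≤ h) (hab : b ≤ a + h) :
    Kc (m+1) a b h = cz (m+1) a * cz (m+1) b - cz m (a + h) * cz (m+2) (b - h) := by
  induction m generalizing a b h with
  | zero =>
    have K0 : ∀ a b h, Kc 0 a b h = (if a = 0 then 1 else 0) * (if b = 0 then 1 else 0) := by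
      intro a b h
      exact card0 _ a b (fun w => by simp [KP, Lc, Rc, eq_comm])
    rw [Kc_succ, if_pos (show (1:ℤ) ≤ h + 1 by omega)]
    rcases eq_or_lt_of_le hh with h0 | h0
    · subst h0
      rw [if_neg (show ¬ (1:ℤ) ≤ 0 by omega)]
      simp only [K0, cz_succ, cz_zero]
      by_cases h1 : a = 0
      · subst h1
        have : b ≤ 0 := by omega
        by_cases h2 : b = 0
        · subst h2; simp
        · have : ¬ (b - 1 = 0) := by omega
          have : ¬ (b - 1 - 1 = 0) := by omega
          simp [*]
      · simp only [add_zero, sub_zero, h1, if_false]; ring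
    · rw [if_pos (show (1:ℤ) ≤ h by omega)]
      simp only [K0, cz_succ, cz_zero]
      by_cases h1 : a + h = 0
      · have : ¬ (b - h = 0) := by omega
        have : ¬ (b - h - 1 = 0) := by omega
        have : ¬ (b - h - 1 - 1 = 0) := by omega
        simp only [*, if_false, if_true]; ring
      · simp only [add_zero, sub_zero, h1, if_false]; ring
  | succ m ih =>
    rw [Kc_succ, if_pos (by omega)]
    rcases eq_or_lt_of_le hh with h0 | h0
    · subst h0
      rw [if_neg (by omega), ih _ _ _ (by omega) (by omega), ih _ _ _ (by omega) (by omega)]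
      have e : a + 0 = a := by ring
      have e2 : b - 0 = b := by ring
      rw [e, e2,
        show a - 1 + 0 = a - 1 by ring, show a - 1 + (0 + 1) = a by ring,
        show b - (0 + 1) = b - 1 by ring, show b - 1 - 0 = b - 1 by ring]
      have e3 := cz_succ m a
      have e4 := cz_succ (m+1) b
      have h5 := cz_succ (m+2) b
      have h6 := cz_succ (m+1) a
      have e7 := cz_succ m (a-1)
      linear_combination (-cz (m+1) (a-1)) * e4 + cz (m+2) (b-1) * e3 - cz (m+2) b * h6 + cz (m+1) a * h5
    · rw [if_pos (by omega), ih _ _ _ (by omega) (by omega), ih _ _ _ (by omega) (by omega),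
        ih _ _ _ (by omega) (by omega), ih _ _ _ (by omega) (by omega)]
      rw [cz_succ (m+1) a, cz_succ (m+1) b, cz_succ m (a+h), cz_succ (m+2) (b-h)]
      ring_nf

lemma Kc_eq' (m : ℕ) (a b : ℤ) (hab : b ≤ a) :
    Kc (m+1) a b 0 = cz m (a-1) * cz (m+1) b - cz m a * cz (m+1) (b-1) := by
  rw [Kc_eq m a b 0 le_rfl (by omega), cz_succ (m+1), cz_succ m a]; ring_nf

/-- words without unenclosed positions -/
def NI (m : ℕ) (w : Wd m) : Prop := ∀ i < m, ∃ z ≤ m, Sg w z < Sg w i + lv w i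

lemma rv_le {m : ℕ} (w : Wd m) (i : ℕ) : rv w i ≤ 1 := by have := rv_cases w i; omega

lemma Sg_ge {m : ℕ} (w : Wd m) (i : ℕ) (hi : i ≤ m) : -(m:ℤ) ≤ Sg w i := by
  have : ∀ i : ℕ, -(i:ℤ) ≤ Sg w i := by
    intro i
    induction i with
    | zero => simp [Sg_zero]
    | succ i ih => rw [Sg_succ]; have := lv_cases w i; have := rv_cases w i; push_cast; omega
  have := this i; omega

open Classical in
lemma NI_count (m : ℕ) (j : ℤ) : ((Finset.univ.filter (fun w : Wd (m+1) => AP (m+1) j j w ∧ NI (m+1) w)).card : ℤ)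
    = cz m (j-1) * cz (m+1) j := by
  have hmain : ∀ w : Wd (m+1), (AP (m+1) j j w ∧ NI (m+1) w) ↔
      ∃ p ∈ Finset.range (m+2), KP (m+1) j j p w ∧ ¬ JP (m+1) j j (p-1) w := by
    intro w
    constructor
    · rintro ⟨⟨hA, hB⟩, hNI⟩
      obtain ⟨z, hz, hmin⟩ := Finset.exists_min_image (Finset.range (m+2)) (Sg w) ⟨0, by simp⟩
      simp only [Finset.mem_range] at hz hmin
      have h0 := hmin 0 (by omega)
      rw [Sg_zero] at h0
      have h1 := Sg_ge w z (by omega)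
      refine ⟨(-Sg w z).toNat, ?_, ⟨hA, hB, fun i hi => ?_⟩, fun h => ?_⟩
      · rw [Finset.mem_range]; omega
      · obtain ⟨z', hz', hlt⟩ := hNI i hi
        have := hmin z' (by omega)
        omega
      · have := h.2.2 z (by omega); omega
    · rintro ⟨p, -, ⟨h1, h2, h3⟩, h4⟩
      refine ⟨⟨h1, h2⟩, fun i hi => ?_⟩
      have : ∃ z ≤ m+1, ¬ (0 ≤ (p:ℤ) - 1 + Sg w z) := by
        by_contra hc; push Not at hc; exact h4 ⟨h1, h2, hc⟩
      obtain ⟨z, hz, hlt⟩ := this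
      exact ⟨z, hz, by have := h3 i hi; omega⟩
  have hset : (Finset.univ.filter (fun w : Wd (m+1) => AP (m+1) j j w ∧ NI (m+1) w)) =
      (Finset.range (m+2)).biUnion (fun p => Finset.univ.filter (KP (m+1) j j p) \
        Finset.univ.filter (JP (m+1) j j ((p:ℤ)-1))) := by
    ext w
    simp only [Finset.mem_filter, Finset.mem_univ, true_and, hmain w, Finset.mem_biUnion, Finset.mem_sdiff]
  have hJK : ∀ p : ℕ, ∀ w, JP (m+1) j j ((p:ℤ)-1) w → KP (m+1) j j p w := by
    rintro p w ⟨h1, h2, h3⟩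
    refine ⟨h1, h2, fun i hi => ?_⟩
    have := h3 i (by omega); have := lv_cases w i; omega
  rw [hset, Finset.card_biUnion]
  · push_cast
    have hterm : ∀ p ∈ Finset.range (m+2), ((Finset.univ.filter (KP (m+1) j j p) \
        Finset.univ.filter (JP (m+1) j j ((p:ℤ)-1))).card : ℤ) =
        (fun p : ℕ => cz m (j + p - 1) * cz (m+1) (j - p)) p - (fun p : ℕ => cz m (j + p - 1) * cz (m+1) (j - p)) (p+1) := by
      intro p _
      rw [Finset.card_sdiff_of_subset (by
        intro w hw; simp only [Finset.mem_filter, Finset.mem_univ, true_and] at hw ⊢; exact hJK p w hw)]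
      rw [Nat.cast_sub (Finset.card_le_card (by
        intro w hw; simp only [Finset.mem_filter, Finset.mem_univ, true_and] at hw ⊢; exact hJK p w hw))]
      have e1 := Kc_eq m j j p (by omega) (by omega)
      have e2 := Jc_eq (m+1) j j (p-1) (by omega) (by omega)
      unfold Kc at e1
      unfold Jc at e2
      rw [e1, e2]
      simp only
      rw [cz_succ (m+1) (j - p), show j + ((p:ℤ) - 1) + 1 = j + p by ring,
        show j - ((p:ℤ) - 1) - 1 = j - p by ring, cz_succ m (j+p)]
      push_cast
      rw [show j + ((p:ℤ) + 1) - 1 = j + p by ring, show j - ((p:ℤ)+1) = j - p - 1 by ring]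
      ring
    rw [Finset.sum_congr rfl hterm, Finset.sum_range_sub']
    simp only [Nat.cast_zero, add_zero, sub_zero]
    have : cz m (j + ((m+2 : ℕ):ℤ) - 1) * cz (m+1) (j - ((m+2:ℕ):ℤ)) = 0 := by
      rcases lt_or_ge j 0 with h | h
      · rw [cz_neg (m+1) _ (by push_cast; omega), mul_zero]
      · rw [show cz m (j + ((m+2 : ℕ):ℤ) - 1) = 0 by
          rw [cz, if_neg (by push_cast; omega), Nat.choose_eq_zero_of_lt (by omega)]; simp, zero_mul]
    rw [this, sub_zero]
  · have aux : ∀ p q : ℕ, p < q → ∀ w : Wd (m+1), KP (m+1) j j p w → ¬ JP (m+1) j j ((q:ℤ)-1) w → False := by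
      intro p q hpq w h1 h2
      apply h2
      refine ⟨h1.1, h1.2.1, fun i hi => ?_⟩
      rcases i with _ | i
      · rw [Sg_zero]; omega
      · have := h1.2.2 i (by omega); rw [Sg_succ]; have := rv_cases w i; omega
    intro p _ q _ hpq
    rw [Function.onFun, Finset.disjoint_left]
    intro w hw hw'
    simp only [Finset.mem_filter, Finset.mem_univ, true_and, Finset.mem_sdiff] at hw hw'
    rcases lt_or_gt_of_ne hpq with h | h
    · exact aux p q h w hw.1 hw'.2
    · exact aux q p h w hw'.1 hw.2

open Classical in
lemma INF_count (m : ℕ) (j : ℤ) : ((Finset.univ.filter (fun w : Wd (m+1) => AP (m+1) j j w ∧ ¬ NI (m+1) w)).card : ℤ)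
    = cz m j * cz (m+1) j := by
  have h1 := Finset.card_filter_add_card_filter_not (s := Finset.univ.filter (AP (m+1) j j)) (NI (m+1))
  rw [Finset.filter_filter, Finset.filter_filter] at h1
  have h2 := NI_count m j
  have h3 := Ac_eq (m+1) j j
  unfold Ac at h3
  rw [← h1] at h3
  push_cast at h3
  rw [h2] at h3
  have h4 := cz_succ m j
  linear_combination h3 + cz (m+1) j * h4


/-! ### Cyclic noncrossing relations -/

structure NS (n : ℕ) (s : ℤ → ℤ → Prop) : Prop where
  eqv : Equivalence s
  mod : ∀ x, s x (x + n)
  cnc : ∀ x y z u : ℤ, x < y → y < z → z < u → u < x + n → s x z → s y u → s x y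

lemma mod_all {n : ℕ} {s : ℤ → ℤ → Prop} (he : Equivalence s) (hm : ∀ x, s x (x + n)) (x k : ℤ) :
    s x (x + k * n) := by
  induction k using Int.induction_on with
  | zero => simpa using he.refl x
  | succ k ih =>
    have := hm (x + k * n)
    rw [show x + ((k:ℤ) + 1) * n = x + k * n + n by ring]
    exact he.trans ih this
  | pred k ih =>
    have := hm (x + (-(k:ℤ) - 1) * n)
    rw [show x + (-(k:ℤ) - 1) * n + n = x + -k * n by ring] at this
    exact he.trans ih (he.symm this)

lemma NS.mod' {n : ℕ} {s : ℤ → ℤ → Prop} (h : NS n s) (x k : ℤ) : s x (x + k * n) :=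
  mod_all h.eqv h.mod x k

/-- window noncrossing implies cyclic noncrossing -/
lemma cnc_of_window {n : ℕ} (hn : 0 < n) {R : ℤ → ℤ → Prop} (he : Equivalence R)
    (hw : ∀ a b c d : ℤ, 0 ≤ a → a < b → b < c → c < d → d < n → R a c → R b d → R a b) (o : ℤ)
    (x y z u : ℤ) (hxy : x < y) (hyz : y < z) (hzu : z < u) (hu : u < x + n)
    (h1 : R ((x + o) % n) ((z + o) % n)) (h2 : R ((y + o) % n) ((u + o) % n)) :
    R ((x + o) % n) ((y + o) % n) := by
  have hn' : (0:ℤ) < n := by exact_mod_cast hn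
  have key : ∀ v : ℤ, 0 ≤ (v + o) % n ∧ (v + o) % n < n ∧ (v + o) % n + ((v+o)/n) * n = v + o := fun v =>
    ⟨Int.emod_nonneg _ hn'.ne', Int.emod_lt_of_pos _ hn', Int.emod_add_ediv_mul _ _⟩
  have step : ∀ v, x < v → v < x + n → (v + o) % n = v - x + (x + o) % n ∨ (v + o) % n = v - x + (x + o) % n - n := by
    intro v hv hv'
    have k1 := key x
    have k2 := key v
    obtain ⟨q, hq⟩ : ∃ q : ℤ, q = (v+o)/n - (x+o)/n := ⟨_, rfl⟩
    have e : (v+o)%n + q * n = v - x + (x+o)%n := by rw [hq]; linarith [k1.2.2, k2.2.2]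
    have hq0 : 0 ≤ q := by
      by_contra hc
      have : q * n ≤ (-1) * n := by apply mul_le_mul_of_nonneg_right <;> omega
      omega
    have hq1 : q ≤ 1 := by
      by_contra hc
      have : 2 * (n:ℤ) ≤ q * n := by apply mul_le_mul_of_nonneg_right <;> omega
      omega
    obtain rfl | rfl : q = 0 ∨ q = 1 := by omega
    · left; linarith
    · right; linarith
  have kx := key x; have ky := key y; have kz := key z; have ku := key u
  have sy := step y hxy (by omega)
  have sz := step z (by omega) (by omega)
  have su := step u (by omega) (by omega)
  generalize (x+o) % n = X at *
  generalize (y+o) % n = Y at *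
  generalize (z+o) % n = Z at *
  generalize (u+o) % n = U at *
  have sm := fun {a b : ℤ} (h : R a b) => he.symm h
  have tr := fun {a b c : ℤ} (h : R a b) (h' : R b c) => he.trans h h'
  rcases sy with sy | sy
  · rcases sz with sz | sz
    · rcases su with su | su
      · exact hw X Y Z U (by omega) (by omega) (by omega) (by omega) (by omega) h1 h2
      · have := hw U X Y Z (by omega) (by omega) (by omega) (by omega) (by omega) (sm h2) h1
        exact tr (sm this) (sm h2)
    · have := hw Z U X Y (by omega) (by omega) (by omega) (by omega) (by omega) (sm h1) (sm h2)
      exact tr h1 (tr this (sm h2))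
  · have := hw Y Z U X (by omega) (by omega) (by omega) (by omega) (by omega) h2 (sm h1)
    exact tr h1 (sm this)

/-! #### the case of a nontrivial rotation -/

def TL (m : ℕ) (s : ℤ → ℤ → Prop) (x y : ℤ) : Prop := s x y ∧ (s x (x + m) ∨ |x - y| < m)
def sT (n : ℕ) (T : ℤ → ℤ → Prop) (x y : ℤ) : Prop := ∃ k : ℤ, T x (y + k * n)

lemma exists_shift (m : ℕ) (hm : 0 < m) (a b : ℤ) : ∃ k : ℤ, a ≤ b + k * m ∧ b + k * m < a + m := by
  have hm' : (0:ℤ) < m := by exact_mod_cast hm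
  refine ⟨-((b - a) / m), ?_, ?_⟩
  · have := Int.emod_nonneg (b-a) hm'.ne'; have := Int.emod_add_ediv_mul (b-a) m; linarith
  · have := Int.emod_lt_of_pos (b-a) hm'; have := Int.emod_add_ediv_mul (b-a) m; linarith

section rot
variable {n m d : ℕ} (hm : 0 < m) (hd : 3 ≤ d) (hn : n = d * m)
include hm hd hn

section
variable {s : ℤ → ℤ → Prop} (h : NS n s) (hi : ∀ x y, s x y ↔ s (x + m) (y + m))
include h hi

omit hm hd hn in
lemma z_rel {x y : ℤ} (hxy : s x y) (hz : s x (x + m)) : s y (y + m) :=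
  h.eqv.trans (h.eqv.symm hxy) (h.eqv.trans hz ((hi _ _).1 hxy))

omit hm hd hn in
lemma z_all {x : ℤ} (hz : s x (x + m)) (k : ℤ) : s x (x + k * m) := by
  induction k using Int.induction_on with
  | zero => simpa using h.eqv.refl x
  | succ k ih =>
    rw [show x + ((k:ℤ) + 1) * m = x + k * m + m by ring]
    exact h.eqv.trans ih (z_rel h hi ih hz)
  | pred k ih =>
    have h2 : s (x + -(k:ℤ) * m) (x + -(k:ℤ) * m + m) := z_rel h hi ih hz
    have h3 : s (x + (-(k:ℤ) - 1) * m) (x + -k * m) := by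
      rw [hi]; convert h2 using 1 ; ring
    exact h.eqv.trans ih (h.eqv.symm h3)

lemma three_m : 3 * (m:ℤ) ≤ n := by
  rw [hn]; push_cast
  apply mul_le_mul_of_nonneg_right <;> omega

lemma z_z {a b : ℤ} (ha : s a (a + m)) (hb : s b (b + m)) : s a b := by
  have h3 := three_m hm hd hn h hi
  obtain ⟨k, h1, h2⟩ := exists_shift m hm a b
  have hbb := z_all h hi hb k
  have hb' := z_rel h hi hbb hb
  rcases eq_or_lt_of_le h1 with e | e
  · rw [← e] at hbb; exact h.eqv.symm hbb
  · have := h.cnc a (b+k*m) (a+m) (b+k*m+m) e h2 (by omega) (by omega) ha hb'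
    exact h.eqv.trans this (h.eqv.symm hbb)

lemma z_of {x y : ℤ} (hxy : s x y) (h1 : x + m ≤ y) (h2 : y ≤ x + n - m) : s x (x + m) := by
  have h3 := three_m hm hd hn h hi
  rcases eq_or_lt_of_le h1 with e | e
  · rw [e]; exact hxy
  rcases eq_or_lt_of_le h2 with e' | e'
  · have : s (x + m) (x + n) := by
      have := (hi _ _).1 hxy
      rw [e'] at this; convert this using 1; ring
    exact h.eqv.trans (h.mod x) (h.eqv.symm this)
  · exact h.cnc x (x+m) y (y+m) (by omega) (by omega) (by omega) (by omega) hxy ((hi _ _).1 hxy)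

lemma TL_NP : NP m (TL m s) := by
  have h3 := three_m hm hd hn h hi
  have hm' : (0:ℤ) < m := by exact_mod_cast hm
  refine ⟨⟨fun x => ⟨h.eqv.refl x, Or.inr (by simpa using hm')⟩, ?_, ?_⟩, ?_, ?_⟩
  · rintro x y ⟨h1, h2⟩
    refine ⟨h.eqv.symm h1, ?_⟩
    rcases h2 with h2 | h2
    · exact Or.inl (z_rel h hi h1 h2)
    · right; rwa [abs_sub_comm]
  · rintro x y w ⟨h1, h2⟩ ⟨h4, h5⟩
    refine ⟨h.eqv.trans h1 h4, ?_⟩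
    by_cases hz : s x (x + m)
    · exact Or.inl hz
    have hzy : ¬ s y (y + m) := fun hc => hz (z_rel h hi (h.eqv.symm h1) hc)
    have a1 := h2.resolve_left hz
    have a2 := h5.resolve_left hzy
    right
    by_contra hc
    rw [abs_lt] at a1 a2 hc
    rcases le_total x w with hxw | hxw
    · exact hz (z_of hm hd hn h hi (h.eqv.trans h1 h4) (by omega) (by omega))
    · exact hz (z_rel h hi (h.eqv.symm (h.eqv.trans h1 h4)) (z_of hm hd hn h hi (h.eqv.symm (h.eqv.trans h1 h4)) (by omega) (by omega)))
  · rintro a b c e hab hbc hce ⟨h1, h2⟩ ⟨h4, h5⟩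
    by_cases hza : s a (a + m)
    · refine ⟨?_, Or.inl hza⟩
      by_cases hzb : s b (b + m)
      · exact z_z hm hd hn h hi hza hzb
      · have a2 := abs_lt.1 (h5.resolve_left hzb)
        have := h.cnc b c e (c + m) hbc hce (by omega) (by omega) h4 (z_rel h hi h1 hza)
        exact h.eqv.trans h1 (h.eqv.symm this)
    · have a1 := abs_lt.1 (h2.resolve_left hza)
      by_cases hzb : s b (b + m)
      · exact ⟨h.cnc a b c (b+m) hab hbc (by omega) (by omega) h1 hzb, Or.inr (abs_lt.2 ⟨by omega, by omega⟩)⟩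
      · have a2 := abs_lt.1 (h5.resolve_left hzb)
        exact ⟨h.cnc a b c e hab hbc hce (by omega) h1 h4, Or.inr (abs_lt.2 ⟨by omega, by omega⟩)⟩
  · intro x y
    unfold TL
    rw [← hi, ← hi]; simp

lemma sT_TL : sT n (TL m s) = s := by
  have h3 := three_m hm hd hn h hi
  funext x y
  apply propext
  constructor
  · rintro ⟨k, hk, -⟩
    exact h.eqv.trans hk (h.eqv.symm (h.mod' y k))
  · intro hxy
    by_cases hz : s x (x + m)
    · exact ⟨0, by simpa using hxy, Or.inl hz⟩
    obtain ⟨k, h1, h2⟩ := exists_shift n (by omega) x y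
    have hk := h.eqv.trans hxy (h.mod' y k)
    by_cases c1 : y + k * n < x + m
    · exact ⟨k, hk, Or.inr (abs_lt.2 ⟨by omega, by omega⟩)⟩
    by_cases c2 : x + n - m < y + k * n
    · refine ⟨k - 1, h.eqv.trans hxy (h.mod' y (k-1)), Or.inr ?_⟩
      have : y + (k-1) * n = y + k * n - n := by ring
      rw [this]
      exact (abs_lt.2 ⟨by omega, by omega⟩)
    · exact absurd (z_of hm hd hn h hi hk (by omega) (by omega)) hz
end

section
variable {T : ℤ → ℤ → Prop} (h : NP m T)
include h

omit hm hd in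
lemma shift_n (k x y : ℤ) : T x y ↔ T (x + k * n) (y + k * n) := by
  have := h.shift (k * d) x y
  rw [this, hn]; push_cast
  rw [← mul_assoc]

omit hm hd in
lemma inf_n {x y : ℤ} (hz : T x (x + m)) (k : ℤ) (hT : T x (y + k * n)) : T x y := by
  have h1 := h.inf_rel hz hT
  have h2 := h.inf_all h1 (-(k * d))
  rw [hn] at hT h2
  push_cast at hT h2
  have : y + k * (d * m) + -(k * d) * m = y := by ring
  rw [this] at h2
  exact h.eqv.trans hT h2

lemma sT_cases {x y : ℤ} (h1 : x < y) (h2 : y < x + n) (hs : sT n T x y) : T x y ∨ T x (y - n) := by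
  obtain ⟨k, hk⟩ := hs
  by_cases hz : T x (x + m)
  · exact Or.inl (inf_n hn h hz k hk)
  have h3 : 3 * (m:ℤ) ≤ n := by
    rw [hn]; push_cast
    apply mul_le_mul_of_nonneg_right <;> omega
  have a1 : |x - (y + k * n)| < m := by
    by_contra hc; exact hz (h.inf' hm hk (by omega))
  rw [abs_lt] at a1
  have hk0 : k ≤ 0 := by
    by_contra hc
    have : 1 * (n:ℤ) ≤ k * n := by apply mul_le_mul_of_nonneg_right <;> omega
    omega
  have hk1 : -1 ≤ k := by
    by_contra hc
    have : k * n ≤ (-2) * (n:ℤ) := by apply mul_le_mul_of_nonneg_right <;> omega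
    omega
  obtain rfl | rfl : k = 0 ∨ k = -1 := by omega
  · left; simpa using hk
  · right; convert hk using 1; ring

lemma sT_NS : NS n (sT n T) := by
  have sh := fun x y => shift_n hn h (-1) x y
  have hnpos : 0 < n := by rw [hn]; positivity
  refine ⟨⟨fun x => ⟨0, by simpa using h.eqv.refl x⟩, ?_, ?_⟩, fun x => ⟨-1, by
    convert h.eqv.refl x using 1; ring⟩, ?_⟩
  · rintro x y ⟨k, hk⟩
    refine ⟨-k, ?_⟩
    have := (shift_n hn h (-k) _ _).1 (h.eqv.symm hk)
    convert this using 1; ring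
  · rintro x y z ⟨k, hk⟩ ⟨l, hl⟩
    refine ⟨k + l, ?_⟩
    have := (shift_n hn h k _ _).1 hl
    convert h.eqv.trans hk this using 1; ring
  · intro x y z u hxy hyz hzu hu hxz hyu
    have sm := fun {a b : ℤ} (hh : T a b) => h.eqv.symm hh
    have tr := fun {a b c : ℤ} (hh : T a b) (h' : T b c) => h.eqv.trans hh h'
    have goal : T x y ∨ T x (y - n) := by
      rcases sT_cases hm hd hn h (by omega) (by omega) hxz with c1 | c1 <;>
      rcases sT_cases hm hd hn h (by omega) (by omega) hyu with c2 | c2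
      · exact Or.inl (h.nc x y z u hxy hyz hzu c1 c2)
      · have := h.nc (u-n) x y z (by omega) (by omega) (by omega) (sm c2) c1
        exact Or.inl (tr (sm this) (sm c2))
      · have c2' : T (y - n) (u - n) := by
          have := (sh y u).1 c2
          convert this using 1 <;> ring
        have := h.nc (y-n) (z-n) (u-n) x (by omega) (by omega) (by omega) c2' (sm c1)
        exact Or.inr (tr c1 (sm this))
      · have := h.nc (z-n) (u-n) x y (by omega) (by omega) (by omega) (sm c1) (sm c2)
        exact Or.inl (tr c1 (tr this (sm c2)))
    rcases goal with g | g
    · exact ⟨0, by simpa using g⟩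
    · exact ⟨-1, by convert g using 1; ring⟩

omit hm hd in
omit hn in
lemma sT_inv (x y : ℤ) : sT n T x y ↔ sT n T (x + m) (y + m) := by
  unfold sT
  refine exists_congr fun k => ?_
  rw [h.per, show y + k * n + m = y + m + k * n by ring]

lemma sT_z (x : ℤ) : sT n T x (x + m) ↔ T x (x + m) := by
  have h3 : 3 * (m:ℤ) ≤ n := by
    rw [hn]; push_cast
    apply mul_le_mul_of_nonneg_right <;> omega
  constructor
  · rintro ⟨k, hk⟩
    apply h.inf' hm hk
    rcases lt_trichotomy k 0 with h0 | h0 | h0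
    · have : k * n ≤ (-1) * (n:ℤ) := by apply mul_le_mul_of_nonneg_right <;> omega
      rw [le_abs]; omega
    · subst h0; simp
    · have : 1 * (n:ℤ) ≤ k * n := by apply mul_le_mul_of_nonneg_right <;> omega
      rw [le_abs]; omega
  · intro hz; exact ⟨0, by simpa using hz⟩

lemma TL_sT : TL m (sT n T) = T := by
  have h3 : 3 * (m:ℤ) ≤ n := by
    rw [hn]; push_cast
    apply mul_le_mul_of_nonneg_right <;> omega
  funext x y
  apply propext
  unfold TL
  rw [sT_z hm hd hn h]
  constructor
  · rintro ⟨⟨k, hk⟩, h1⟩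
    by_cases hz : T x (x + m)
    · exact inf_n hn h hz k hk
    · have a1 : |x - (y + k * n)| < m := by
        by_contra hc; exact hz (h.inf' hm hk (by omega))
      have a2 := h1.resolve_left hz
      rw [abs_lt] at a1 a2
      obtain rfl : k = 0 := by
        by_contra hc
        rcases lt_or_gt_of_ne hc with h0 | h0
        · have : k * n ≤ (-1) * (n:ℤ) := by apply mul_le_mul_of_nonneg_right <;> omega
          omega
        · have : 1 * (n:ℤ) ≤ k * n := by apply mul_le_mul_of_nonneg_right <;> omega
          omega
      simpa using hk
  · intro hT
    refine ⟨⟨0, by simpa using hT⟩, ?_⟩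
    by_cases hc : |x - y| < m
    · exact Or.inr hc
    · exact Or.inl (h.inf' hm hT (by omega))

end
end rot


def RepZ (s : ℤ → ℤ → Prop) (A : Finset ℤ) : Prop :=
  (∀ x, ∃ a ∈ A, s a x) ∧ ∀ a ∈ A, ∀ b ∈ A, s a b → a = b

open Classical in
lemma op_count {m : ℕ} {T : ℤ → ℤ → Prop} (h : NP m T) (d : ℕ) :
    (((Finset.Ico (0:ℤ) ((d * m : ℕ) : ℤ)).filter (opZ T)).card : ℤ) = d * Lc (wordOf m T) := by
  rw [Lc_wordOf, ← sum_ind, ← sum_ind, ← sum_range_Ico, ← sum_range_Ico]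
  induction d with
  | zero => simp
  | succ d ih =>
    rw [show (d+1) * m = d * m + m by ring, Finset.sum_range_add, ih]
    have : ∀ i ∈ Finset.range m, ind (opZ T ((d * m + i : ℕ) : ℤ)) = ind (opZ T (i:ℤ)) := by
      intro i _
      have := h.op_shift d i
      rw [show ((d * m + i : ℕ) : ℤ) = (i:ℤ) + d * m by push_cast; ring]
      rw [propext this]
    rw [Finset.sum_congr rfl this]
    push_cast; ring

lemma rep_rot {n m d : ℕ} (hm : 0 < m) (hd : 3 ≤ d) (hn : n = d * m) {T : ℤ → ℤ → Prop} (h : NP m T) :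
    ∃ A, RepZ (sT n T) A ∧ (A.card : ℤ) = d * Lc (wordOf m T) + ind (∃ x, T x (x + m)) := by
  classical
  have hnpos : 0 < n := by rw [hn]; positivity
  have hS := sT_NS hm hd hn h
  have hI := sT_inv (n := n) h
  have hop : ∀ x, opZ T x → ¬ sT n T x (x + m) := fun x hx hc =>
    h.op_not_inf hm hx ((sT_z hm hd hn h x).1 hc)
  set A0 := (Finset.Ico (0:ℤ) n).filter (opZ T) with hA0
  have c0 : (A0.card : ℤ) = d * Lc (wordOf m T) := by rw [hA0, hn]; exact op_count h d
  have ex : ∀ x, ¬ T x (x+m) → ∃ a ∈ A0, sT n T a x := by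
    intro x hx
    obtain ⟨a, -, h1, h2⟩ := h.exists_op hm hx
    obtain ⟨k, h3, h4⟩ := exists_shift n hnpos 0 a
    refine ⟨a + k * n, ?_, ?_⟩
    · rw [hA0, Finset.mem_filter, Finset.mem_Ico]
      refine ⟨⟨h3, by omega⟩, ?_⟩
      have := (h.op_shift (k * d) a).2 h2
      rw [hn]; push_cast; rwa [← mul_assoc]
    · exact ⟨k, (shift_n hn h k a x).1 h1⟩
  have un : ∀ a ∈ A0, ∀ b ∈ A0, sT n T a b → a = b := by
    rintro a ha b hb ⟨k, hk⟩
    rw [hA0, Finset.mem_filter, Finset.mem_Ico] at ha hb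
    have h2 : opZ T (b + k * n) := by
      have := (h.op_shift (k * d) b).2 hb.2
      rw [hn]; push_cast; rwa [← mul_assoc]
    have e := h.op_unique ha.2 h2 hk
    have : k = 0 := by
      by_contra hc
      rcases lt_or_gt_of_ne hc with h0 | h0
      · have : k * n ≤ (-1) * (n:ℤ) := by apply mul_le_mul_of_nonneg_right <;> omega
        omega
      · have : 1 * (n:ℤ) ≤ k * n := by apply mul_le_mul_of_nonneg_right <;> omega
        omega
    subst this; simpa using e
  by_cases hinf : ∃ x, T x (x + m)
  · obtain ⟨x0, hx0⟩ := hinf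
    have hx0' : sT n T x0 (x0 + m) := (sT_z hm hd hn h x0).2 hx0
    have hx0n : x0 ∉ A0 := by
      intro hc
      rw [hA0, Finset.mem_filter] at hc
      exact hop _ hc.2 hx0'
    have hno : ∀ a ∈ A0, ¬ sT n T a x0 := by
      intro a ha hs
      rw [hA0, Finset.mem_filter] at ha
      exact hop a ha.2 (z_rel hS hI (hS.eqv.symm hs) hx0')
    refine ⟨insert x0 A0, ⟨fun x => ?_, ?_⟩, ?_⟩
    · by_cases hx : T x (x + m)
      · exact ⟨x0, by simp, z_z hm hd hn hS hI hx0' ((sT_z hm hd hn h x).2 hx)⟩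
      · obtain ⟨a, ha, hs⟩ := ex x hx
        exact ⟨a, by simp [ha], hs⟩
    · intro a ha b hb hs
      rw [Finset.mem_insert] at ha hb
      rcases ha with rfl | ha <;> rcases hb with rfl | hb
      · rfl
      · exact absurd (hS.eqv.symm hs) (hno b hb)
      · exact absurd hs (hno a ha)
      · exact un a ha b hb hs
    · rw [Finset.card_insert_of_notMem hx0n, ind_of ⟨x0, hx0⟩, ← c0]; push_cast; rfl
  · refine ⟨A0, ⟨fun x => ex x (fun hc => hinf ⟨x, hc⟩), un⟩, ?_⟩
    rw [c0, ind_not hinf, add_zero]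

/-! ### linear case -/

def TL1 (n : ℕ) (o : ℤ) (s : ℤ → ℤ → Prop) (x y : ℤ) : Prop := s (x - o) (y - o) ∧ x / n = y / n
def s1 (n : ℕ) (o : ℤ) (T : ℤ → ℤ → Prop) (x y : ℤ) : Prop := T ((x + o) % n) ((y + o) % n)

section lin
variable {n : ℕ} (hn : 0 < n) (o : ℤ)
include hn

lemma TL1_NP {s : ℤ → ℤ → Prop} (h : NS n s) : NP n (TL1 n o s) := by
  have hn' : (0:ℤ) < n := by exact_mod_cast hn
  refine ⟨⟨fun x => ⟨h.eqv.refl _, rfl⟩, fun h1 => ⟨h.eqv.symm h1.1, h1.2.symm⟩,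
    fun h1 h2 => ⟨h.eqv.trans h1.1 h2.1, h1.2.trans h2.2⟩⟩, ?_, ?_⟩
  · rintro a b c d hab hbc hcd ⟨h1, h2⟩ ⟨h3, h4⟩
    have e1 : a / n ≤ b / n := Int.ediv_le_ediv hn' hab.le
    have e2 : b / n ≤ c / n := Int.ediv_le_ediv hn' hbc.le
    have e3 : a / n = b / n := by omega
    refine ⟨h.cnc _ _ (c - o) (d - o) (by omega) (by omega) (by omega) ?_ h1 h3, e3⟩
    have k1 := Int.emod_add_ediv_mul a n
    have k2 := Int.emod_add_ediv_mul d n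
    have k3 := Int.emod_nonneg a hn'.ne'
    have k4 := Int.emod_lt_of_pos d hn'
    rw [← h4, ← e3] at k2
    omega
  · intro x y
    unfold TL1
    rw [Int.add_ediv_of_dvd_right (dvd_refl _), Int.add_ediv_of_dvd_right (dvd_refl _), Int.ediv_self hn'.ne',
      show x + n - o = x - o + n by ring, show y + n - o = y - o + n by ring]
    have a1 := h.mod (x - o)
    have a2 := h.mod (y - o)
    constructor
    · rintro ⟨h1, h2⟩
      exact ⟨h.eqv.trans (h.eqv.symm a1) (h.eqv.trans h1 a2), by omega⟩
    · rintro ⟨h1, h2⟩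
      exact ⟨h.eqv.trans a1 (h.eqv.trans h1 (h.eqv.symm a2)), by omega⟩

omit hn in
lemma TL1_cut {s : ℤ → ℤ → Prop} (x y : ℤ) (h : TL1 n o s x y) : x / n = y / n := h.2

lemma s1_NS {T : ℤ → ℤ → Prop} (h : NP n T) : NS n (s1 n o T) := by
  refine ⟨⟨fun x => h.eqv.refl _, fun h1 => h.eqv.symm h1, fun h1 h2 => h.eqv.trans h1 h2⟩, ?_, ?_⟩
  · intro x
    unfold s1
    rw [show x + n + o = x + o + n by ring, Int.add_emod_right]
    exact h.eqv.refl _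
  · intro x y z u h1 h2 h3 h4 h5 h6
    exact cnc_of_window hn h.eqv (fun a b c d _ p1 p2 p3 _ q1 q2 => h.nc a b c d p1 p2 p3 q1 q2) o x y z u h1 h2 h3 h4 h5 h6

omit hn in
lemma mod_eq (x : ℤ) : x % n = x + (-(x / n)) * n := by
  have := Int.emod_add_ediv_mul x n; linarith

lemma s1_TL1 {s : ℤ → ℤ → Prop} (h : NS n s) : s1 n o (TL1 n o s) = s := by
  have hn' : (0:ℤ) < n := by exact_mod_cast hn
  funext x y
  apply propext
  simp only [s1, TL1]
  have key : ∀ v : ℤ, s v ((v + o) % n - o) := by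
    intro v
    rw [mod_eq, show v + o + -((v + o) / n) * n - o = v + -((v + o) / n) * n by ring]
    exact h.mod' v _
  have z : ∀ v : ℤ, (v % n) / n = 0 := fun v =>
    Int.ediv_eq_zero_of_lt (Int.emod_nonneg _ hn'.ne') (Int.emod_lt_of_pos _ hn')
  rw [z, z]
  constructor
  · rintro ⟨h1, -⟩
    exact h.eqv.trans (key x) (h.eqv.trans h1 (h.eqv.symm (key y)))
  · intro h1
    exact ⟨h.eqv.trans (h.eqv.symm (key x)) (h.eqv.trans h1 (key y)), rfl⟩

lemma TL1_s1 {T : ℤ → ℤ → Prop} (h : NP n T) (hc : ∀ x y, T x y → x / n = y / n) :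
    TL1 n o (s1 n o T) = T := by
  funext x y
  apply propext
  simp only [s1, TL1]
  rw [sub_add_cancel, sub_add_cancel]
  constructor
  · rintro ⟨h1, h2⟩
    rw [mod_eq x, mod_eq y, ← h2, ← h.shift] at h1
    exact h1
  · intro h1
    have h2 := hc x y h1
    refine ⟨?_, h2⟩
    rw [mod_eq x, mod_eq y, ← h2, ← h.shift]
    exact h1

lemma rep_lin {T : ℤ → ℤ → Prop} (h : NP n T) (hc : ∀ x y, T x y → x / n = y / n) :
    ∃ A, RepZ (s1 n o T) A ∧ (A.card : ℤ) = Lc (wordOf n T) := by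
  classical
  have hn' : (0:ℤ) < n := by exact_mod_cast hn
  have hni : ∀ x, ¬ T x (x + n) := by
    intro x hx
    have := hc _ _ hx
    rw [Int.add_ediv_of_dvd_right (dvd_refl _), Int.ediv_self hn'.ne'] at this
    omega
  refine ⟨((Finset.Ico (0:ℤ) n).filter (opZ T)).image (fun x => x - o), ⟨fun x => ?_, ?_⟩, ?_⟩
  · obtain ⟨a, -, h1, h2⟩ := h.exists_op hn (hni ((x+o) % n))
    have e := hc _ _ h1
    rw [Int.ediv_eq_zero_of_lt (Int.emod_nonneg _ hn'.ne') (Int.emod_lt_of_pos _ hn')] at e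
    have b1 : 0 ≤ a ∧ a < n := by
      have k1 := Int.emod_add_ediv_mul a n
      have k3 := Int.emod_nonneg a hn'.ne'
      have k4 := Int.emod_lt_of_pos a hn'
      rw [e] at k1; omega
    refine ⟨a - o, ?_, ?_⟩
    · rw [Finset.mem_image]
      exact ⟨a, by simp [b1, h2], rfl⟩
    · unfold s1
      rw [sub_add_cancel, Int.emod_eq_of_lt b1.1 b1.2]
      exact h1
  · intro a ha b hb hs
    simp only [Finset.mem_image, Finset.mem_filter, Finset.mem_Ico] at ha hb
    obtain ⟨a, ⟨a1, a2⟩, rfl⟩ := ha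
    obtain ⟨b, ⟨b1, b2⟩, rfl⟩ := hb
    unfold s1 at hs
    rw [sub_add_cancel, sub_add_cancel, Int.emod_eq_of_lt a1.1 a1.2, Int.emod_eq_of_lt b1.1 b1.2] at hs
    rw [h.op_unique a2 b2 hs]
  · rw [Finset.card_image_of_injective _ (fun a b hab => by simpa using hab), Lc_wordOf]

end lin

/-- reflection on the linear side -/
lemma s1_refl {n M : ℕ} (hM : n = 2 * M + 1) {T : ℤ → ℤ → Prop} (h : NP n T)
    (hc : ∀ x y, T x y → x / n = y / n) :
    (∀ x y, s1 n M T x y ↔ s1 n M T (-x) (-y)) ↔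
      ∀ i < n, lv (wordOf n T) i = rv (wordOf n T) (n - 1 - i) := by
  have hn : 0 < n := by omega
  have hn' : (0:ℤ) < n := by exact_mod_cast hn
  have hM' : (n:ℤ) = 2 * M + 1 := by exact_mod_cast hM
  have e1 : ∀ x : ℤ, (-x + M) % n = 2 * M - (x + M) % n := by
    intro x
    have k3 := Int.emod_nonneg (x+M) hn'.ne'
    have k4 := Int.emod_lt_of_pos (x+M) hn'
    have k1 := Int.emod_add_ediv_mul (x+M) n
    rw [← Int.emod_eq_of_lt (a := 2 * M - (x+M)%n) (b := n) (by omega) (by omega)]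
    apply Int.emod_emod_of_dvd _ (dvd_refl _) |>.symm.trans
    rw [Int.emod_emod_of_dvd _ (dvd_refl _)]
    apply Int.ModEq.eq
    apply Int.modEq_iff_dvd.2
    exact ⟨(x+M)/n, by linarith⟩
  have step1 : (∀ x y, s1 n M T x y ↔ s1 n M T (-x) (-y)) ↔ ∀ x y, T x y ↔ T (2 * M - x) (2 * M - y) := by
    unfold s1
    constructor
    · intro hs x y
      have key : ∀ x y, T x y → T (2 * M - x) (2 * M - y) := by
        intro x y hxy
        have h2 := hc x y hxy
        rw [h.shift (-(x/n))] at hxy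
        have ey : y + -(x/n) * n = y % n := by rw [mod_eq, h2]
        rw [ey, ← mod_eq] at hxy
        have := (hs (x - M) (y - M)).1 (by simpa using hxy)
        rw [e1, e1, sub_add_cancel, sub_add_cancel, mod_eq x, mod_eq y, ← h2, h.shift (-(x/n))] at this
        convert this using 1 <;> ring
      refine ⟨key x y, fun hh => ?_⟩
      have := key _ _ hh
      simpa using this
    · intro hs x y
      rw [e1, e1]; exact hs _ _
  rw [step1]
  have hop : (∀ x y, T x y ↔ T (2 * M - x) (2 * M - y)) ↔ ∀ x, opZ T x ↔ clZ T (2 * M - x) := by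
    constructor
    · intro hs x
      constructor
      · intro ho y hy hT
        refine ho (2 * M - y) (by omega) ?_
        rw [hs]; simpa using h.eqv.symm hT
      · intro ho y hy hT
        refine ho (2 * M - y) (by omega) ?_
        rw [hs]; simpa using h.eqv.symm hT
    · intro hs
      have E' : Equivalence (fun x y => T (2 * M - x) (2 * M - y)) :=
        ⟨fun x => h.eqv.refl _, fun h1 => h.eqv.symm h1, fun h1 h2 => h.eqv.trans h1 h2⟩
      refine rel_unique h.eqv h.nc E' ?_ (Hz (wordOf n T)) (Hz_wordOf hn h) ?_ ?_
      · intro a b c d hab hbc hcd h1 h2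
        have := h.nc (2*M-d) (2*M-c) (2*M-b) (2*M-a) (by omega) (by omega) (by omega) (h.eqv.symm h2) (h.eqv.symm h1)
        exact h.eqv.trans h1 (h.eqv.trans (h.eqv.symm this) (h.eqv.symm h2))
      · intro i
        rw [hs i]
        constructor
        · intro ho y hy hT
          exact ho _ (by omega) (h.eqv.symm hT)
        · intro ho y hy hT
          refine ho (2 * M - y) (by omega) ?_
          simpa using h.eqv.symm hT
      · intro i
        have := hs (2 * M - i)
        rw [sub_sub_cancel] at this
        rw [← this]
        constructor
        · intro ho y hy hT
          exact ho _ (by omega) (h.eqv.symm hT)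
        · intro ho y hy hT
          refine ho (2 * M - y) (by omega) ?_
          simpa using h.eqv.symm hT
  rw [hop]
  have indiff : ∀ p q : Prop, ind p = ind q ↔ (p ↔ q) := by
    intro p q; unfold ind; by_cases hp : p <;> by_cases hq : q <;> simp [hp, hq]
  constructor
  · intro hs i hi
    rw [lv_wordOf T i hi, rv_wordOf T _ (by omega), indiff, hs i]
    rw [show ((n - 1 - i : ℕ) : ℤ) = 2 * M - i by omega]
  · intro hs x
    obtain ⟨k, hk, -, hx⟩ := mod_nat hn x
    have := hs k hk
    rw [lv_wordOf T k hk, rv_wordOf T _ (by omega), indiff,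
      show ((n - 1 - k : ℕ) : ℤ) = 2 * M - k by omega] at this
    rw [hx, h.op_shift, this, show 2 * (M:ℤ) - (k + x / n * n) = 2 * M - k + (-(x/n)) * n by ring, h.cl_shift]



lemma card_bij' {α β : Type*} [Fintype β] (Q : α → Prop) (R : β → Prop) [DecidablePred R] (f : α → β)
    (h1 : ∀ a, Q a → R (f a)) (h2 : ∀ a a', Q a → Q a' → f a = f a' → a = a')
    (h3 : ∀ b, R b → ∃ a, Q a ∧ f a = b) : Nat.card {a // Q a} = (Finset.univ.filter R).card := by
  have : Function.Bijective (fun a : {a // Q a} => (⟨f a.1, h1 a.1 a.2⟩ : {b // R b})) := by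
    constructor
    · rintro ⟨a, ha⟩ ⟨a', ha'⟩ h
      simp only [Subtype.mk.injEq] at h
      exact Subtype.ext (h2 a a' ha ha' h)
    · rintro ⟨b, hb⟩
      obtain ⟨a, ha, e⟩ := h3 b hb
      exact ⟨⟨a, ha⟩, Subtype.ext e⟩
  rw [Nat.card_eq_of_bijective _ this, Nat.card_eq_fintype_card, Fintype.card_subtype]

section
variable {n : ℕ} [NeZero n]

def relOf (π : Finpartition (Finset.univ : Finset (ZMod n))) (x y : ℤ) : Prop :=
  π.part (x : ZMod n) = π.part (y : ZMod n)

lemma relOf_eqv (π : Finpartition (Finset.univ : Finset (ZMod n))) : Equivalence (relOf π) :=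
  ⟨fun _ => rfl, fun h => h.symm, fun h h' => h.trans h'⟩

lemma relOf_mod (π : Finpartition (Finset.univ : Finset (ZMod n))) (x : ℤ) : relOf π x (x + n) := by
  simp [relOf]

lemma mem_parts_iff (π : Finpartition (Finset.univ : Finset (ZMod n))) (B : Finset (ZMod n)) :
    B ∈ π.parts ↔ ∃ x, π.part x = B := by
  constructor
  · intro h
    obtain ⟨x, hx⟩ := π.nonempty_of_mem_parts h
    exact ⟨x, π.part_eq_of_mem h hx⟩
  · rintro ⟨x, rfl⟩; exact π.part_mem.2 (Finset.mem_univ _)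

lemma mem_part_iff' (π : Finpartition (Finset.univ : Finset (ZMod n))) (x y : ZMod n) :
    x ∈ π.part y ↔ π.part x = π.part y :=
  π.mem_part_iff_part_eq_part (Finset.mem_univ _) (Finset.mem_univ _)

lemma val_cast' (x : ZMod n) : (((x.val : ℕ) : ℤ) : ZMod n) = x := by simp

lemma relOf_NS (π : Finpartition (Finset.univ : Finset (ZMod n))) :
    IsNoncrossing π ↔ NS n (relOf π) := by
  have hn : 0 < n := Nat.pos_of_ne_zero (NeZero.ne n)
  have hn' : (0:ℤ) < n := by exact_mod_cast hn
  constructor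
  · intro h
    have hw : ∀ a b c d : ℤ, 0 ≤ a → a < b → b < c → c < d → d < n →
        relOf π a c → relOf π b d → relOf π a b := by
      intro a b c d h0 hab hbc hcd hd h1 h2
      by_contra hne
      apply h
      have v : ∀ t : ℤ, 0 ≤ t → t < n → (((t : ZMod n).val : ℕ) : ℤ) = t := by
        intro t ht ht'
        rw [ZMod.val_intCast, Int.emod_eq_of_lt ht ht']
      have va := v a (by omega) (by omega)
      have vb := v b (by omega) (by omega)
      have vc := v c (by omega) (by omega)
      have vd := v d (by omega) (by omega)
      refine ⟨a, b, c, d, π.part a, π.part b, π.part_mem.2 (Finset.mem_univ _), π.part_mem.2 (Finset.mem_univ _), hne, ?_, ?_, ?_, ?_, by omega, by omega, by omega⟩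
      · rw [mem_part_iff']
      · rw [mem_part_iff']; exact h1.symm
      · rw [mem_part_iff']
      · rw [mem_part_iff']; exact h2.symm
    refine ⟨relOf_eqv π, relOf_mod π, fun x y z u h1 h2 h3 h4 h5 h6 => ?_⟩
    have key : ∀ v w : ℤ, relOf π ((v + 0) % n) ((w + 0) % n) ↔ relOf π v w := by
      intro v w; simp [relOf, ZMod.intCast_mod]
    have := cnc_of_window hn (relOf_eqv π) hw 0 x y z u h1 h2 h3 h4 ((key _ _).2 h5) ((key _ _).2 h6)
    exact (key _ _).1 this
  · rintro h ⟨a, b, c, d, B1, B2, hB1, hB2, hne, ha, hc, hb, hd, h1, h2, h3⟩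
    have hdn := ZMod.val_lt d
    have r : ∀ x y : ZMod n, relOf π ((x.val : ℕ) : ℤ) ((y.val : ℕ) : ℤ) ↔ π.part x = π.part y := by
      intro x y; unfold relOf; rw [val_cast', val_cast']
    have := h.cnc (a.val : ℤ) (b.val : ℤ) (c.val : ℤ) (d.val : ℤ) (by omega) (by omega) (by omega) (by omega)
      ((r _ _).2 (by rw [π.part_eq_of_mem hB1 ha, π.part_eq_of_mem hB1 hc]))
      ((r _ _).2 (by rw [π.part_eq_of_mem hB2 hb, π.part_eq_of_mem hB2 hd]))
    rw [r, π.part_eq_of_mem hB1 ha, π.part_eq_of_mem hB2 hb] at this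
    exact hne this

lemma relOf_inj (π π' : Finpartition (Finset.univ : Finset (ZMod n))) (h : relOf π = relOf π') : π = π' := by
  have e : ∀ x : ZMod n, π.part x = π'.part x := by
    intro x
    ext y
    rw [mem_part_iff', mem_part_iff']
    have := congrFun (congrFun h (y.val : ℤ)) (x.val : ℤ)
    unfold relOf at this
    rw [val_cast', val_cast'] at this
    exact iff_of_eq this
  apply Finpartition.ext
  ext B
  rw [mem_parts_iff, mem_parts_iff]
  simp [e]

lemma relOf_surj (s : ℤ → ℤ → Prop) (he : Equivalence s) (hm : ∀ x, s x (x + n)) :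
    ∃ π : Finpartition (Finset.univ : Finset (ZMod n)), relOf π = s := by
  classical
  let S : Setoid (ZMod n) := ⟨fun x y => s (x.val : ℤ) (y.val : ℤ),
    fun x => he.refl _, fun h => he.symm h, fun h h' => he.trans h h'⟩
  refine ⟨Finpartition.ofSetoid S, ?_⟩
  funext x y
  apply propext
  unfold relOf
  rw [← mem_part_iff', Finpartition.mem_part_ofSetoid_iff_rel]
  show s (((y : ZMod n)).val : ℤ) (((x : ZMod n)).val : ℤ) ↔ s x y
  rw [ZMod.val_intCast, ZMod.val_intCast, mod_eq x, mod_eq y]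
  have h1 := mod_all he hm x (-(x/n))
  have h2 := mod_all he hm y (-(y/n))
  constructor
  · intro h; exact he.trans h1 (he.trans (he.symm h) (he.symm h2))
  · intro h; exact he.trans (he.symm h2) (he.trans (he.symm h) h1)

lemma relOf_card (π : Finpartition (Finset.univ : Finset (ZMod n))) (A : Finset ℤ) (h : RepZ (relOf π) A) :
    π.parts.card = A.card := by
  symm
  refine Finset.card_bij (fun a _ => π.part (a : ZMod n)) ?_ ?_ ?_
  · intro a _; exact π.part_mem.2 (Finset.mem_univ _)
  · intro a ha b hb hab; exact h.2 a ha b hb hab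
  · intro B hB
    obtain ⟨x, rfl⟩ := (mem_parts_iff π B).1 hB
    obtain ⟨a, ha, hs⟩ := h.1 (x.val : ℤ)
    refine ⟨a, ha, ?_⟩
    unfold relOf at hs
    rwa [val_cast'] at hs

lemma relOf_inv (π : Finpartition (Finset.univ : Finset (ZMod n))) (f : Equiv.Perm (ZMod n)) :
    π.parts.image (Finset.image f) = π.parts ↔
      ∀ x y : ZMod n, π.part x = π.part y ↔ π.part (f x) = π.part (f y) := by
  constructor
  · intro h x y
    have key : ∀ x, (π.part x).image f = π.part (f x) := by
      intro x
      symm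
      apply π.part_eq_of_mem
      · rw [← h]; exact Finset.mem_image_of_mem _ (π.part_mem.2 (Finset.mem_univ _))
      · exact Finset.mem_image_of_mem _ (by rw [mem_part_iff'])
    rw [← key, ← key]
    exact ⟨fun e => by rw [e], fun e => Finset.image_injective f.injective e⟩
  · intro h
    have key : ∀ x, (π.part x).image f = π.part (f x) := by
      intro x
      ext y
      rw [mem_part_iff', Finset.mem_image]
      constructor
      · rintro ⟨z, hz, rfl⟩
        rw [mem_part_iff'] at hz
        exact (h _ _).1 hz
      · intro hy
        refine ⟨f.symm y, ?_, by simp⟩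
        rw [mem_part_iff', h]; simpa using hy
    ext B
    rw [mem_parts_iff, Finset.mem_image]
    constructor
    · rintro ⟨C, hC, rfl⟩
      obtain ⟨x, rfl⟩ := (mem_parts_iff π C).1 hC
      exact ⟨f x, (key x).symm⟩
    · rintro ⟨x, rfl⟩
      refine ⟨π.part (f.symm x), π.part_mem.2 (Finset.mem_univ _), ?_⟩
      rw [key]; simp

lemma relOf_forall (P : ZMod n → ZMod n → Prop) : (∀ x y, P x y) ↔ ∀ x y : ℤ, P x y := by
  constructor
  · intro h x y; exact h _ _
  · intro h x y
    have := h (x.val : ℤ) (y.val : ℤ)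
    rwa [val_cast', val_cast'] at this

lemma relOf_rot (π : Finpartition (Finset.univ : Finset (ZMod n))) (l : ℤ) :
    π.parts.image (Finset.image (fun x => x + (l : ZMod n))) = π.parts ↔
      ∀ x y : ℤ, relOf π x y ↔ relOf π (x + l) (y + l) := by
  have := relOf_inv π (Equiv.addRight (l : ZMod n))
  simp only [Equiv.coe_addRight] at this
  rw [this, relOf_forall (fun x y => π.part x = π.part y ↔ π.part (x + l) = π.part (y + l))]
  unfold relOf
  push_cast
  rfl

lemma relOf_refl (π : Finpartition (Finset.univ : Finset (ZMod n))) :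
    π.parts.image (Finset.image (fun x => -x)) = π.parts ↔
      ∀ x y : ℤ, relOf π x y ↔ relOf π (-x) (-y) := by
  have := relOf_inv π (Equiv.neg (ZMod n))
  rw [show (⇑(Equiv.neg (ZMod n))) = (fun x => -x) from rfl] at this
  rw [this, relOf_forall (fun x y => π.part x = π.part y ↔ π.part (- x) = π.part (- y))]
  unfold relOf
  push_cast
  rfl

open Classical in
lemma count_rot {m d : ℕ} (hm : 0 < m) (hd : 3 ≤ d) (hn : n = d * m) (b : ℕ) :
    Nat.card {π : Finpartition (Finset.univ : Finset (ZMod n)) //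
            IsNoncrossing π ∧ π.parts.card = b ∧ ∀ x y : ℤ, relOf π x y ↔ relOf π (x + m) (y + m)} =
      (Finset.univ.filter (fun w : Wd m => Lc w = Rc w ∧ d * Lc w + ind (¬ NI m w) = b)).card := by
  have hinf : ∀ w : Wd m, Lc w = Rc w → ((∃ x, Tw w x (x + m)) ↔ ¬ NI m w) := by
    intro w hw
    rw [Tw_inf hm w hw, NI]; push Not; rfl
  refine card_bij' _ _ (fun π => wordOf m (TL m (relOf π))) ?_ ?_ ?_
  · rintro π ⟨h1, h2, h3⟩
    rw [relOf_NS] at h1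
    have hT := TL_NP hm hd hn h1 h3
    have hb := wordOf_balanced hm hT
    refine ⟨hb, ?_⟩
    obtain ⟨A, hA, hc⟩ := rep_rot hm hd hn hT
    rw [sT_TL hm hd hn h1 h3] at hA
    rw [relOf_card π A hA] at h2
    rw [← hinf _ hb, Tw_wordOf hm hT, ← hc, h2]
  · rintro π π' ⟨h1, h2, h3⟩ ⟨h1', h2', h3'⟩ e
    rw [relOf_NS] at h1 h1'
    have hT := TL_NP hm hd hn h1 h3
    have hT' := TL_NP hm hd hn h1' h3'
    have e2 := congrArg Tw e
    rw [Tw_wordOf hm hT, Tw_wordOf hm hT'] at e2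
    have e3 := congrArg (sT n) e2
    rw [sT_TL hm hd hn h1 h3, sT_TL hm hd hn h1' h3'] at e3
    exact relOf_inj _ _ e3
  · rintro w ⟨hb, hc⟩
    have hT := Tw_NP hm w hb
    have hS := sT_NS hm hd hn hT
    obtain ⟨π, hπ⟩ := relOf_surj (n := n) _ hS.eqv hS.mod
    refine ⟨π, ⟨?_, ?_, ?_⟩, ?_⟩
    · rw [relOf_NS, hπ]; exact hS
    · obtain ⟨A, hA, hc'⟩ := rep_rot hm hd hn hT
      rw [← hπ] at hA
      rw [relOf_card π A hA]
      rw [wordOf_Tw hm w hb, hinf w hb, hc] at hc'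
      exact_mod_cast hc'
    · rw [hπ]; exact sT_inv hT
    · skip
      rw [hπ, TL_sT hm hd hn hT, wordOf_Tw hm w hb]

open Classical in
/-- linear count, with an extra property -/
lemma count_lin (o : ℤ) (b : ℕ) (Q : (ℤ → ℤ → Prop) → Prop) (Q' : Wd n → Prop)
    (hQ : ∀ T, NP n T → (∀ x y, T x y → x / n = y / n) → (Q (s1 n o T) ↔ Q' (wordOf n T))) :
    Nat.card {π : Finpartition (Finset.univ : Finset (ZMod n)) //
            IsNoncrossing π ∧ π.parts.card = b ∧ Q (relOf π)} =
      (Finset.univ.filter (fun w : Wd n => KP n b b 0 w ∧ Q' w)).card := by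
  have hn : 0 < n := Nat.pos_of_ne_zero (NeZero.ne n)
  refine card_bij' _ _ (fun π => wordOf n (TL1 n o (relOf π))) ?_ ?_ ?_
  · rintro π ⟨h1, h2, h3⟩
    rw [relOf_NS] at h1
    have hT := TL1_NP hn o h1
    have hcut := TL1_cut (n := n) o (s := relOf π)
    have hb := wordOf_balanced hn hT
    obtain ⟨A, hA, hc⟩ := rep_lin hn o hT hcut
    have e := s1_TL1 hn o h1
    rw [e] at hA
    rw [relOf_card π A hA] at h2
    rw [h2] at hc
    have hcut' := hcut
    rw [← Tw_wordOf hn hT] at hcut'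
    refine ⟨⟨hc.symm, hb ▸ hc.symm, ?_⟩, ?_⟩
    · intro i hi
      have := (Tw_cut hn _ hb).1 hcut' i hi
      linarith
    · rw [← hQ _ hT hcut, e]; exact h3
  · rintro π π' ⟨h1, h2, h3⟩ ⟨h1', h2', h3'⟩ e
    rw [relOf_NS] at h1 h1'
    have hT := TL1_NP hn o h1
    have hT' := TL1_NP hn o h1'
    have e2 := congrArg Tw e
    rw [Tw_wordOf hn hT, Tw_wordOf hn hT'] at e2
    have e3 := congrArg (s1 n o) e2
    rw [s1_TL1 hn o h1, s1_TL1 hn o h1'] at e3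
    exact relOf_inj _ _ e3
  · rintro w ⟨⟨ha, hr, hk⟩, hq⟩
    have hb : Lc w = Rc w := ha.trans hr.symm
    have hT := Tw_NP hn w hb
    have hcut := (Tw_cut hn w hb).2 (fun i hi => by have := hk i hi; linarith)
    have hS := s1_NS hn o hT
    obtain ⟨π, hπ⟩ := relOf_surj (n := n) _ hS.eqv hS.mod
    refine ⟨π, ⟨?_, ?_, ?_⟩, ?_⟩
    · rw [relOf_NS, hπ]; exact hS
    · obtain ⟨A, hA, hc'⟩ := rep_lin hn o hT hcut
      rw [← hπ] at hA
      rw [relOf_card π A hA]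
      rw [wordOf_Tw hn w hb, ha] at hc'
      exact_mod_cast hc'
    · rw [hπ, hQ _ hT hcut, wordOf_Tw hn w hb]; exact hq
    · skip
      rw [hπ, TL1_s1 hn o hT hcut, wordOf_Tw hn w hb]

lemma count_one (b : ℕ) :
    (Nat.card {π : Finpartition (Finset.univ : Finset (ZMod n)) //
            IsNoncrossing π ∧ π.parts.card = b ∧ True} : ℤ) = Kc n b b 0 := by
  classical
  rw [count_lin 0 b (fun _ => True) (fun _ => True) (fun _ _ _ => Iff.rfl)]
  simp only [and_true]
  rfl

open Classical in
lemma count_refl (b M : ℕ) (hM : n = 2 * M + 1) :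
    Nat.card {π : Finpartition (Finset.univ : Finset (ZMod n)) //
            IsNoncrossing π ∧ π.parts.card = b ∧ ∀ x y : ℤ, relOf π x y ↔ relOf π (-x) (-y)} =
      (Finset.univ.filter (fun w : Wd n => KP n b b 0 w ∧ ∀ i < n, lv w i = rv w (n - 1 - i))).card := by
  convert count_lin (n := n) M b (fun s => ∀ x y, s x y ↔ s (-x) (-y)) (fun w => ∀ i < n, lv w i = rv w (n - 1 - i))
    (fun T hT hc => s1_refl hM hT hc)

end


open Classical in
lemma rot_count0 (m d : ℕ) (hd : 3 ≤ d) (j : ℤ) :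
    ((Finset.univ.filter (fun w : Wd (m+1) => Lc w = Rc w ∧ d * Lc w + ind (¬ NI (m+1) w) = d * j)).card : ℤ) =
      cz m (j-1) * cz (m+1) j := by
  rw [← NI_count]
  refine congrArg (fun s : Finset (Wd (m+1)) => (s.card:ℤ)) ?_
  ext w
  rw [Finset.mem_filter, Finset.mem_filter]
  simp only [Finset.mem_univ, true_and]
  unfold AP
  have hd' : (3:ℤ) ≤ d := by exact_mod_cast hd
  constructor
  · rintro ⟨h1, h2⟩
    by_cases hN : NI (m+1) w
    · rw [ind_not (by simpa using hN), add_zero] at h2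
      have := mul_left_cancel₀ (by omega) h2
      exact ⟨⟨this, h1 ▸ this⟩, hN⟩
    · rw [ind_of hN] at h2
      have : (d:ℤ) ∣ 1 := ⟨j - Lc w, by linarith⟩
      have := Int.le_of_dvd (by norm_num) this
      omega
  · rintro ⟨⟨h1, h2⟩, h3⟩
    rw [ind_not (by simpa using h3), add_zero, h1, h2]; simp

open Classical in
lemma rot_count1 (m d : ℕ) (hd : 3 ≤ d) (j : ℤ) :
    ((Finset.univ.filter (fun w : Wd (m+1) => Lc w = Rc w ∧ d * Lc w + ind (¬ NI (m+1) w) = d * j + 1)).card : ℤ) =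
      cz m j * cz (m+1) j := by
  rw [← INF_count]
  refine congrArg (fun s : Finset (Wd (m+1)) => (s.card:ℤ)) ?_
  ext w
  rw [Finset.mem_filter, Finset.mem_filter]
  simp only [Finset.mem_univ, true_and]
  unfold AP
  have hd' : (3:ℤ) ≤ d := by exact_mod_cast hd
  constructor
  · rintro ⟨h1, h2⟩
    by_cases hN : NI (m+1) w
    · rw [ind_not (by simpa using hN), add_zero] at h2
      have : (d:ℤ) ∣ 1 := ⟨Lc w - j, by linarith⟩
      have := Int.le_of_dvd (by norm_num) this
      omega
    · rw [ind_of hN] at h2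
      have := mul_left_cancel₀ (show (d:ℤ) ≠ 0 by omega) (add_right_cancel h2)
      exact ⟨⟨this, h1 ▸ this⟩, hN⟩
  · rintro ⟨⟨h1, h2⟩, h3⟩
    rw [ind_of h3, h1, h2]; simp

open Classical in
lemma rot_count2 (m d : ℕ) (b : ℤ) (h0 : ∀ j : ℤ, b ≠ d * j) (h1 : ∀ j : ℤ, b ≠ d * j + 1) :
    ((Finset.univ.filter (fun w : Wd (m+1) => Lc w = Rc w ∧ d * Lc w + ind (¬ NI (m+1) w) = b)).card : ℤ) = 0 := by
  rw [Finset.filter_eq_empty_iff.2]; · simp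
  rintro w - ⟨-, h2⟩
  by_cases hN : NI (m+1) w
  · rw [ind_not (by simpa using hN), add_zero] at h2
    exact h0 _ h2.symm
  · rw [ind_of hN] at h2
    exact h1 _ h2.symm

/-! ### reflection -/

def mkL {M : ℕ} (v : Wd M) (c : Bool) (i : ℕ) : Bool :=
  if h : i < M then (v ⟨i, h⟩).1 else if i = M then c else if h : 2 * M - i < M then (v ⟨2 * M - i, h⟩).2 else false

def mkW {M : ℕ} (v : Wd M) (c : Bool) : Wd (2 * M + 1) := fun i => (mkL v c i, mkL v c (2 * M - i))

lemma lv_mkW {M : ℕ} (v : Wd M) (c : Bool) (i : ℕ) (hi : i < 2 * M + 1) : lv (mkW v c) i = b2 (mkL v c i) := by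
  simp [lv, mkW, hi]
lemma rv_mkW {M : ℕ} (v : Wd M) (c : Bool) (i : ℕ) (hi : i < 2 * M + 1) : rv (mkW v c) i = b2 (mkL v c (2 * M - i)) := by
  simp [rv, mkW, hi]
lemma lv_mkW' {M : ℕ} (v : Wd M) (c : Bool) (i : ℕ) (hi : i < M) : lv (mkW v c) i = lv v i := by
  rw [lv_mkW _ _ _ (by omega)]; simp [mkL, lv, hi]
lemma rv_mkW' {M : ℕ} (v : Wd M) (c : Bool) (i : ℕ) (hi : i < M) : rv (mkW v c) i = rv v i := by
  have h2 : ¬ (2 * M - i < M) := by omega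
  have h3 : ¬ (2 * M - i = M) := by omega
  have h4 : 2 * M - (2 * M - i) = i := by omega
  rw [rv_mkW _ _ _ (by omega)]; simp [mkL, rv, hi, h2, h3, h4]

lemma Sg_mkW {M : ℕ} (v : Wd M) (c : Bool) (i : ℕ) (hi : i ≤ M) : Sg (mkW v c) i = Sg v i := by
  unfold Sg
  refine Finset.sum_congr rfl fun j hj => ?_
  rw [Finset.mem_range] at hj
  rw [lv_mkW' _ _ _ (by omega), rv_mkW' _ _ _ (by omega)]

lemma lv_mkW_M {M : ℕ} (v : Wd M) (c : Bool) : lv (mkW v c) M = b2 c := by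
  rw [lv_mkW _ _ _ (by omega)]; simp [mkL]

lemma sum_sym (M : ℕ) (f g : ℕ → ℤ) (h : ∀ i < 2 * M + 1, f i = g (2 * M - i)) :
    ∑ i ∈ Finset.range (2 * M + 1), f i = ∑ i ∈ Finset.range (2 * M + 1), g i := by
  rw [← Finset.sum_range_reflect g]
  refine Finset.sum_congr rfl fun i hi => ?_
  rw [h i (Finset.mem_range.1 hi)]; congr 1

lemma Lc_sym {M : ℕ} (w : Wd (2*M+1)) (hs : ∀ i < 2*M+1, lv w i = rv w (2*M - i)) :
    Lc w = Rc w ∧ Lc w = (∑ i ∈ Finset.range M, lv w i) + lv w M + ∑ i ∈ Finset.range M, rv w i := by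
  refine ⟨sum_sym M _ _ hs, ?_⟩
  unfold Lc
  have key : ∀ f : ℕ → ℤ, ∑ i ∈ Finset.range (2*M+1), f i = ∑ i ∈ Finset.range M, f i + f M + ∑ i ∈ Finset.range M, f (M+1+i) := by
    intro f
    rw [show 2 * M + 1 = (M + 1) + M by ring, Finset.sum_range_add, Finset.sum_range_succ]
  rw [key]
  congr 1
  rw [← Finset.sum_range_reflect (fun i => rv w i)]
  refine Finset.sum_congr rfl fun i hi => ?_
  rw [Finset.mem_range] at hi
  rw [hs _ (by omega)]
  congr 1; omega

lemma Sg_sym {M : ℕ} (w : Wd (2*M+1)) (hs : ∀ i < 2*M+1, lv w i = rv w (2*M - i)) (j : ℕ) (hj : j ≤ 2*M+1) :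
    Sg w (2*M+1-j) = Sg w j := by
  induction j with
  | zero => rw [Nat.sub_zero, Sg_m, (Lc_sym w hs).1, Sg_zero]; ring
  | succ j ih =>
    have ih := ih (by omega)
    have e1 := Sg_succ w j
    have e2 := Sg_succ w (2*M+1-(j+1))
    rw [show 2*M+1-(j+1)+1 = 2*M+1-j by omega] at e2
    have e3 := hs j (by omega)
    have e4 := hs (2*M-j) (by omega)
    rw [show 2*M-(2*M-j) = j by omega] at e4
    rw [show 2*M+1-(j+1) = 2*M-j by omega] at *
    linarith

lemma KP_mkW {M : ℕ} (b : ℤ) (v : Wd M) (c : Bool) :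
    (KP (2*M+1) b b 0 (mkW v c) ∧ ∀ i < 2*M+1, lv (mkW v c) i = rv (mkW v c) (2*M+1-1-i)) ↔
      Lc v + Rc v + b2 c = b ∧ (∀ i < M, 1 ≤ Sg v i + lv v i) ∧ 1 ≤ Lc v - Rc v + b2 c := by
  have hs : ∀ i < 2*M+1, lv (mkW v c) i = rv (mkW v c) (2*M-i) := by
    intro i hi
    rw [lv_mkW _ _ _ hi, rv_mkW _ _ _ (by omega), show 2*M-(2*M-i) = i by omega]
  have hL := Lc_sym _ hs
  have e1 : ∑ i ∈ Finset.range M, lv (mkW v c) i = Lc v :=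
    Finset.sum_congr rfl fun j hj => lv_mkW' _ _ _ (Finset.mem_range.1 hj)
  have e2 : ∑ i ∈ Finset.range M, rv (mkW v c) i = Rc v :=
    Finset.sum_congr rfl fun j hj => rv_mkW' _ _ _ (Finset.mem_range.1 hj)
  rw [e1, e2, lv_mkW_M] at hL
  unfold KP
  constructor
  · rintro ⟨⟨h1, h2, h3⟩, -⟩
    refine ⟨by linarith, fun i hi => ?_, ?_⟩
    · have := h3 i (by omega)
      rw [Sg_mkW _ _ _ hi.le, lv_mkW' _ _ _ hi] at this
      linarith
    · have := h3 M (by omega)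
      rw [Sg_mkW _ _ _ le_rfl, lv_mkW_M, Sg_m] at this
      linarith
  · rintro ⟨h1, h2, h3⟩
    refine ⟨⟨by linarith, by linarith, ?_⟩, fun i hi => by rw [hs i hi]; rfl⟩
    have low : ∀ i ≤ M, 1 ≤ Sg (mkW v c) i + lv (mkW v c) i := by
      intro i hi
      rcases eq_or_lt_of_le hi with rfl | hi
      · rw [Sg_mkW _ _ _ le_rfl, lv_mkW_M, Sg_m]; linarith
      · rw [Sg_mkW _ _ _ hi.le, lv_mkW' _ _ _ hi]; exact h2 i hi
    intro i hi
    rw [zero_add]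
    by_cases hiM : i ≤ M
    · exact low i hiM
    · have := low (2*M-i) (by omega)
      have e3 := Sg_sym _ hs (i+1) (by omega)
      rw [show 2*M+1-(i+1) = 2*M-i by omega] at e3
      rw [e3, Sg_succ] at this
      have e4 := hs (2*M-i) (by omega)
      rw [show 2*M-(2*M-i) = i by omega] at e4
      linarith

open Classical in
lemma refl_card (M : ℕ) (b : ℤ) :
    (Finset.univ.filter (fun w : Wd (2*M+1) => KP (2*M+1) b b 0 w ∧ ∀ i < 2*M+1, lv w i = rv w (2*M+1-1-i))).card =
    (Finset.univ.filter (fun p : Wd M × Bool => Lc p.1 + Rc p.1 + b2 p.2 = b ∧ (∀ i < M, 1 ≤ Sg p.1 i + lv p.1 i) ∧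
      1 ≤ Lc p.1 - Rc p.1 + b2 p.2)).card := by
  symm
  refine Finset.card_bij (fun p _ => mkW p.1 p.2) ?_ ?_ ?_
  · rintro ⟨v, c⟩ hp
    simp only [Finset.mem_filter, Finset.mem_univ, true_and] at hp ⊢
    exact (KP_mkW b v c).2 hp
  · rintro ⟨v, c⟩ - ⟨v', c'⟩ - h
    simp only at h
    have h1 : c = c' := by
      apply b2_inj; rw [← lv_mkW_M v c, h, lv_mkW_M]
    have h2 : v = v' := by
      funext i
      have l1 : lv v i = lv v' i := by rw [← lv_mkW' v c _ i.2, h, lv_mkW' _ _ _ i.2]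
      have l2 : rv v i = rv v' i := by rw [← rv_mkW' v c _ i.2, h, rv_mkW' _ _ _ i.2]
      simp only [lv, rv, i.2, dif_pos] at l1 l2
      exact Prod.ext (b2_inj l1) (b2_inj l2)
    rw [h1, h2]
  · intro w hw
    simp only [Finset.mem_filter, Finset.mem_univ, true_and] at hw
    have hs := hw.2
    have hs' : ∀ i (hi : i < 2*M+1), (w ⟨i, hi⟩).1 = (w ⟨2*M-i, by omega⟩).2 := by
      intro i hi
      have := hs i hi
      rw [show 2*M+1-1-i = 2*M-i by omega] at this
      simp only [lv, rv, hi, show 2*M-i < 2*M+1 by omega, dif_pos] at this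
      exact b2_inj this
    let v : Wd M := fun i => w ⟨i, by omega⟩
    let c : Bool := (w ⟨M, by omega⟩).1
    have hL : ∀ i (hi : i < 2*M+1), mkL v c i = (w ⟨i, hi⟩).1 := by
      intro i hi
      unfold mkL
      split_ifs with h1 h2 h3
      · rfl
      · subst h2; rfl
      · rw [hs' i hi]
      · omega
    have e : mkW v c = w := by
      funext i
      refine Prod.ext (hL i i.2) ?_
      have := hs' (2*M-i) (by omega)
      simp only [mkW]
      rw [hL _ (by omega), this]
      congr 3
      have := i.2; omega
    refine ⟨(v, c), ?_, e⟩
    simp only [Finset.mem_filter, Finset.mem_univ, true_and]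
    rw [← KP_mkW, e]; exact hw

open Classical in
noncomputable def HC (M : ℕ) (N a : ℤ) : ℤ :=
  ((Finset.univ.filter (fun v : Wd M => Lc v + Rc v = N ∧ (∀ i < M, 1 ≤ Sg v i + lv v i) ∧ a ≤ Lc v)).card : ℤ)

open Classical in
lemma refl_split (M : ℕ) (b a1 a0 : ℤ) (h1 : b ≤ 2 * a1 + 1) (h1' : 2 * a1 ≤ b) (h0 : b + 1 ≤ 2 * a0) (h0' : 2 * a0 ≤ b + 2) :
    ((Finset.univ.filter (fun p : Wd M × Bool => Lc p.1 + Rc p.1 + b2 p.2 = b ∧ (∀ i < M, 1 ≤ Sg p.1 i + lv p.1 i) ∧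
      1 ≤ Lc p.1 - Rc p.1 + b2 p.2)).card : ℤ) = HC M (b-1) a1 + HC M b a0 := by
  have : ∀ c : Bool, ((Finset.univ.filter (fun v : Wd M => Lc v + Rc v + b2 c = b ∧ (∀ i < M, 1 ≤ Sg v i + lv v i) ∧
      1 ≤ Lc v - Rc v + b2 c)).card : ℤ) = if c then HC M (b-1) a1 else HC M b a0 := by
    intro c
    cases c
    · simp only [Bool.false_eq_true, if_false, HC, b2]
      congr 2
      ext v
      simp only [Finset.mem_filter, Finset.mem_univ, true_and]
      constructor
      · rintro ⟨p, q, r⟩; exact ⟨by omega, q, by omega⟩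
      · rintro ⟨p, q, r⟩; exact ⟨by omega, q, by omega⟩
    · simp only [if_true, HC, b2]
      congr 2
      ext v
      simp only [Finset.mem_filter, Finset.mem_univ, true_and]
      constructor
      · rintro ⟨p, q, r⟩; exact ⟨by omega, q, by omega⟩
      · rintro ⟨p, q, r⟩; exact ⟨by omega, q, by omega⟩
  rw [Finset.card_filter]
  push_cast
  rw [Fintype.sum_prod_type_right, Fintype.sum_bool]
  have t := this true
  have f := this false
  rw [Finset.card_filter] at t f
  push_cast at t f
  rw [t, f]; simp

lemma Lc_le {m : ℕ} (w : Wd m) : Lc w ≤ m := by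
  unfold Lc
  calc _ ≤ ∑ _j ∈ Finset.range m, (1:ℤ) := Finset.sum_le_sum fun j _ => by have := lv_cases w j; omega
    _ = m := by simp

lemma HC_eq (M : ℕ) (N a : ℤ) (h : N ≤ 2 * a) (ha : 0 ≤ a) : HC (M+1) N a = cz M (a-1) * cz (M+1) (N-a) := by
  classical
  have hset : (Finset.univ.filter (fun v : Wd (M+1) => Lc v + Rc v = N ∧ (∀ i < M+1, 1 ≤ Sg v i + lv v i) ∧ a ≤ Lc v)) =
      (Finset.range (M+2)).biUnion (fun p => Finset.univ.filter (KP (M+1) (a+p) (N-a-p) 0)) := by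
    ext v
    simp only [Finset.mem_filter, Finset.mem_univ, true_and, Finset.mem_biUnion, Finset.mem_range, KP]
    constructor
    · rintro ⟨h1, h2, h3⟩
      have := Lc_le v
      refine ⟨(Lc v - a).toNat, by omega, by omega, by omega, fun i hi => ?_⟩
      have := h2 i hi; omega
    · rintro ⟨p, h0, h1, h2, h3⟩
      refine ⟨by omega, fun i hi => ?_, by omega⟩
      have := h3 i hi; omega
  unfold HC
  rw [hset, Finset.card_biUnion]
  · push_cast
    have hterm : ∀ p ∈ Finset.range (M+2), ((Finset.univ.filter (KP (M+1) (a+p) (N-a-p) 0)).card : ℤ) =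
        (fun p : ℕ => cz M (a + p - 1) * cz (M+1) (N - a - p)) p - (fun p : ℕ => cz M (a + p - 1) * cz (M+1) (N - a - p)) (p+1) := by
      intro p _
      have e1 := Kc_eq' M (a+p) (N-a-p) (by omega)
      unfold Kc at e1
      rw [e1]
      push_cast
      rw [show a + ((p:ℤ) + 1) - 1 = a + p by ring, show N - a - ((p:ℤ)+1) = N - a - p - 1 by ring]
    rw [Finset.sum_congr rfl hterm, Finset.sum_range_sub']
    have : cz M (a + ((M+2 : ℕ):ℤ) - 1) = 0 := by
      rw [cz, if_neg (by push_cast; omega), Nat.choose_eq_zero_of_lt (by omega)]; simp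
    simp only [this]; simp
  · intro p _ q _ hpq
    rw [Function.onFun, Finset.disjoint_left]
    intro w hw hw'
    simp only [Finset.mem_filter, Finset.mem_univ, true_and] at hw hw'
    have := hw.1; have := hw'.1; omega

lemma HC_zero (N a : ℤ) : HC 0 N a = if N = 0 ∧ a ≤ 0 then 1 else 0 := by
  classical
  have : ∀ v : Wd 0, (Lc v + Rc v = N ∧ (∀ i < 0, 1 ≤ Sg v i + lv v i) ∧ a ≤ Lc v) ↔ (N = 0 ∧ a ≤ 0) := by
    intro v; simp [Lc, Rc, eq_comm]
  unfold HC
  rw [Finset.filter_congr (fun v _ => this v)]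
  split_ifs with h <;> simp [h]

open Classical in
lemma refl_final_odd (M : ℕ) (u : ℤ) (hu : 0 ≤ u) (b : ℤ) (hb : b = 2 * u + 1) :
    ((Finset.univ.filter (fun w : Wd (2*M+1) => KP (2*M+1) b b 0 w ∧ ∀ i < 2*M+1, lv w i = rv w (2*M+1-1-i))).card : ℤ) =
      cz M u * cz M u := by
  rw [refl_card, refl_split M b u (u+1) (by omega) (by omega) (by omega) (by omega)]
  rcases M with _ | M
  · rw [HC_zero, HC_zero, cz_zero, if_neg (show ¬ (b = 0 ∧ u + 1 ≤ 0) by omega)]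
    by_cases h : u = 0
    · subst h; simp [hb]
    · rw [if_neg (by omega), if_neg h]; simp
  · rw [HC_eq _ _ _ (by omega) (by omega), HC_eq _ _ _ (by omega) (by omega), hb,
      show 2 * u + 1 - 1 - u = u by ring, show 2 * u + 1 - (u + 1) = u by ring, add_sub_cancel_right]
    have := cz_succ M u
    linear_combination (-cz (M+1) u) * this

open Classical in
lemma refl_final_even (M : ℕ) (u : ℤ) (hu : 0 ≤ u) (b : ℤ) (hb : b = 2 * u) :
    ((Finset.univ.filter (fun w : Wd (2*M+1) => KP (2*M+1) b b 0 w ∧ ∀ i < 2*M+1, lv w i = rv w (2*M+1-1-i))).card : ℤ) =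
      cz M u * cz M (u-1) := by
  rw [refl_card, refl_split M b u (u+1) (by omega) (by omega) (by omega) (by omega)]
  rcases M with _ | M
  · rw [HC_zero, HC_zero, cz_zero, cz_zero, if_neg (show ¬ (b = 0 ∧ u + 1 ≤ 0) by omega), if_neg (show ¬ (b - 1 = 0 ∧ u ≤ 0) by omega)]
    by_cases h : u = 0
    · subst h; simp
    · simp [h]
  · rw [HC_eq _ _ _ (by omega) (by omega), HC_eq _ _ _ (by omega) (by omega), hb,
      show 2 * u - 1 - u = u - 1 by ring, show 2 * u - (u + 1) = u - 1 by ring, add_sub_cancel_right]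
    have := cz_succ M u
    linear_combination (-cz (M+1) (u-1)) * this



section alg
variable {R : Type*} [CommRing R]

def gF (s t : R) : ℕ → R
  | 0 => 0
  | 1 => 1
  | (m + 2) => s * gF s t (m + 1) + t * gF s t m

def gFa (s t : R) : ℕ → R
  | 0 => 1
  | (m + 1) => gF s t (m + 1) * gFa s t m

def gG (s t : R) (x : ℕ) : R := gF s t (x + 1) - s * gF s t x

def gB (s t : R) : ℕ → ℕ → R
  | _, 0 => 1
  | 0, (_ + 1) => 0
  | (n + 1), (k + 1) => gF s t (k + 2) * gB s t n (k + 1) + gG s t (n - k) * gB s t n k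

lemma gB_z (s t : R) (n : ℕ) : gB s t n 0 = 1 := by cases n <;> simp [gB]

lemma gB_s (s t : R) (n k : ℕ) : gB s t (n+1) (k+1) =
  gF s t (k + 2) * gB s t n (k + 1) + gG s t (n - k) * gB s t n k := by simp [gB]

lemma gB_lt (s t : R) : ∀ (n k : ℕ), n < k → gB s t n k = 0 := by
  intro n
  induction n with
  | zero => intro k hk; obtain ⟨k, rfl⟩ := Nat.exists_eq_add_of_lt hk; simp [gB]
  | succ n ih =>
    intro k hk
    obtain ⟨k, rfl⟩ : ∃ j, k = j + 1 := ⟨k - 1, by omega⟩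
    rw [gB_s, ih _ (by omega), ih _ (by omega)]; ring

lemma gG_z (s t : R) : gG s t 0 = 1 := by simp [gG, gF]

lemma gB_self (s t : R) (n : ℕ) : gB s t n n = 1 := by
  induction n with
  | zero => exact gB_z _ _ _
  | succ n ih => rw [gB_s, gB_lt _ _ _ _ (Nat.lt_succ_self n), ih, Nat.sub_self, gG_z]; ring

lemma gF_add (s t : R) (x y : ℕ) : gF s t (x + y) = gF s t (y + 1) * gF s t x + gG s t x * gF s t y := by
  induction x using Nat.twoStepInduction with
  | zero => simp [gG, gF]
  | one => rw [add_comm 1 y]; simp [gG, gF]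
  | more x h1 h2 =>
    rw [show x + 2 + y = (x + y) + 2 by ring, gF, show x + y + 1 = x + 1 + y by ring, h1, h2]
    simp only [gG, gF]; ring

lemma gB_fact (s t : R) : ∀ (n k : ℕ), k ≤ n → gB s t n k * (gFa s t k * gFa s t (n - k)) = gFa s t n := by
  intro n
  induction n with
  | zero => intro k hk; obtain rfl : k = 0 := by omega
            simp [gB, gFa]
  | succ n ih =>
    intro k hk
    rcases k with _ | k
    · simp [gB_z, gFa]
    · rcases Nat.lt_or_ge k n with h | h
      · have e1 := ih (k+1) (by omega)
        have e2 := ih k (by omega)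
        have e3 := gF_add s t (n-k) (k+1)
        obtain ⟨x, hx⟩ : ∃ x, n = k + 1 + x := ⟨n - k - 1, by omega⟩
        subst hx
        rw [show k+1+x-(k+1) = x by omega] at e1
        rw [show k+1+x-k = x+1 by omega] at e2 e3
        rw [gB_s, show k+1+x+1-(k+1) = x+1 by omega, show k+1+x-k = x+1 by omega]
        rw [show x+1+(k+1) = k+1+x+1 by ring] at e3
        rw [show gFa s t (k+1+x+1) = gF s t (k+1+x+1) * gFa s t (k+1+x) from rfl, e3]
        simp only [gFa] at e1 e2 ⊢
        linear_combination gF s t (k+1+1) * gF s t (x+1) * e1 + gG s t (x+1) * gF s t (k+1) * e2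
      · obtain rfl : k = n := by omega
        rw [gB_self]; simp [gFa]

lemma gFa_ne [IsDomain R] (s t : R) (k : ℕ) (h : ∀ i, 0 < i → i ≤ k → gF s t i ≠ 0) : gFa s t k ≠ 0 := by
  induction k with
  | zero => simp [gFa]
  | succ k ih =>
    rw [gFa]
    exact mul_ne_zero (h _ (by omega) le_rfl) (ih fun i h1 h2 => h i h1 (by omega))


lemma gF_per {s t : R} {d : ℕ} (hp : ∀ x, gF s t (x + d) = gF s t x) (q x : ℕ) : gF s t (x + d * q) = gF s t x := by
  induction q with
  | zero => simp
  | succ q ih => rw [Nat.mul_succ, ← add_assoc, hp, ih]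

lemma gG_per {s t : R} {d : ℕ} (hp : ∀ x, gF s t (x + d) = gF s t x) (q x : ℕ) : gG s t (x + d * q) = gG s t x := by
  unfold gG
  rw [add_right_comm, gF_per hp, gF_per hp]

lemma gB_s' {s t : R} {d : ℕ} (hd : 0 < d) (hp : ∀ x, gF s t (x + d) = gF s t x) (n k : ℕ) : gB s t (n+1) (k+1) =
    gF s t (k + 2) * gB s t n (k + 1) + gG s t (n + (d - 1) * k) * gB s t n k := by
  rw [gB_s]
  rcases Nat.lt_or_ge n k with h | h
  · rw [gB_lt _ _ _ _ h]; simp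
  · congr 2
    rw [← gG_per hp k]
    congr 1
    obtain ⟨e, rfl⟩ : ∃ e, d = e + 1 := ⟨d - 1, by omega⟩
    rw [Nat.add_sub_cancel, add_mul]; omega

lemma lucas [IsDomain R] {s t : R} {d : ℕ} (hd : 0 < d) (hp : ∀ x, gF s t (x + d) = gF s t x)
    (hne : ∀ i, 0 < i → i < d → gF s t i ≠ 0) :
    ∀ (n m a j b : ℕ), a < d → b < d → n = d * m + a →
      gB s t n (d * j + b) = (m.choose j : R) * gB s t a b := by
  intro n
  induction n with
  | zero =>
    intro m a j b ha hb h
    obtain rfl : a = 0 := by omega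
    obtain rfl : m = 0 := by
      rcases Nat.eq_zero_or_pos m with h' | h'
      · exact h'
      · have := Nat.mul_pos hd h'; omega
    rcases j with _ | j
    · simp
    · rw [gB_lt _ _ _ _ (by rw [Nat.mul_succ]; omega)]; simp
  | succ n ih =>
    intro m a j b ha hb h
    rcases a with _ | a
    · obtain ⟨m, rfl⟩ : ∃ q, m = q + 1 := ⟨m - 1, by
        rcases m with _ | m
        · simp at h
        · simp⟩
      have hn : n = d * m + (d - 1) := by rw [Nat.mul_succ] at h; omega
      rcases b with _ | b
      · rcases j with _ | j
        · simp [gB_z]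
        · have e1 := ih m (d-1) (j+1) 0 (by omega) hd hn
          have e2 := ih m (d-1) j (d-1) (by omega) (by omega) hn
          rw [gB_z] at e1
          rw [gB_self] at e2
          obtain ⟨e, rfl⟩ : ∃ e, d = e + 1 := ⟨d - 1, by omega⟩
          simp only [Nat.add_sub_cancel, add_zero] at *
          rw [show (e+1)*(j+1) = ((e+1)*j+e)+1 by ring] at *
          rw [gB_s' hd hp, e1, e2, gB_z,
            show (e+1)*j+e+2 = 1 + (e+1)*(j+1) by ring, gF_per hp,
            show n + (e+1-1) * ((e+1)*j+e) = 0 + (e+1) * (m + e * j + e) by rw [hn, Nat.add_sub_cancel]; ring,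
            gG_per hp, gG_z, Nat.choose_succ_succ]
          simp only [gF]; push_cast; ring
      · have e1 := ih m (d-1) j (b+1) (by omega) hb hn
        have e2 := ih m (d-1) j b (by omega) (by omega) hn
        rw [gB_lt s t 0 (b+1) (by omega), mul_zero, ← add_assoc, gB_s' hd hp, add_assoc _ b 1, e1, e2]
        have e3 := gB_s' hd hp (d-1) b
        rw [show d - 1 + 1 = d by omega] at e3
        have e4 := gB_fact s t d (b+1) (by omega)
        have e5 : gFa s t d = 0 := by
          obtain ⟨e, rfl⟩ : ∃ e, d = e + 1 := ⟨d - 1, by omega⟩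
          rw [gFa]
          have := hp 0
          rw [zero_add] at this
          rw [this]; simp [gF]
        have e6 : gB s t d (b+1) = 0 := by
          rw [e5] at e4
          rcases mul_eq_zero.1 e4 with h | h
          · exact h
          · exact absurd h (mul_ne_zero (gFa_ne _ _ _ fun i h1 h2 => hne i h1 (by omega))
              (gFa_ne _ _ _ fun i h1 h2 => hne i h1 (by omega)))
        rw [e6] at e3
        rw [show d*j+b+2 = b+2+d*j by ring, gF_per hp, hn,
          show d*m+(d-1)+(d-1)*(d*j+b) = (d-1)+(d-1)*b + d*(m+(d-1)*j) by ring, gG_per hp]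
        linear_combination - (m.choose j : R) * e3
    · have hn : n = d * m + a := by omega
      rcases b with _ | b
      · rcases j with _ | j
        · simp [gB_z]
        · have e1 := ih m a (j+1) 0 (by omega) hd hn
          have e2 := ih m a j (d-1) (by omega) (by omega) hn
          rw [gB_lt s t a _ (by omega), mul_zero] at e2
          obtain ⟨e, rfl⟩ : ∃ e, d = e + 1 := ⟨d - 1, by omega⟩
          simp only [Nat.add_sub_cancel, add_zero] at *
          rw [show (e+1)*(j+1) = ((e+1)*j+e)+1 by ring] at *
          rw [gB_s' hd hp, e1, e2, gB_z, gB_z,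
            show (e+1)*j+e+2 = 1 + (e+1)*(j+1) by ring, gF_per hp]
          simp only [gF]; ring
      · have e1 := ih m a j (b+1) (by omega) hb hn
        have e2 := ih m a j b (by omega) (by omega) hn
        rw [← add_assoc, gB_s' hd hp, add_assoc _ b 1, e1, e2, gB_s' hd hp]
        rw [show d*j+b+2 = b+2+d*j by ring, gF_per hp, hn,
          show d*m+a+(d-1)*(d*j+b) = a+(d-1)*b + d*(m+(d-1)*j) by ring, gG_per hp]
        ring

lemma gF_map {S : Type*} [CommRing S] (f : R →+* S) (s t : R) (n : ℕ) : f (gF s t n) = gF (f s) (f t) n := by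
  induction n using Nat.twoStepInduction with
  | zero => simp [gF]
  | one => simp [gF]
  | more x h1 h2 => simp [gF, h1, h2]

lemma gFa_map {S : Type*} [CommRing S] (f : R →+* S) (s t : R) (n : ℕ) : f (gFa s t n) = gFa (f s) (f t) n := by
  induction n with
  | zero => simp [gFa]
  | succ n ih => simp [gFa, ih, gF_map]

lemma gB_map {S : Type*} [CommRing S] (f : R →+* S) (s t : R) (n k : ℕ) : f (gB s t n k) = gB (f s) (f t) n k := by
  induction n generalizing k with
  | zero => cases k <;> simp [gB]
  | succ n ih => cases k with
    | zero => simp [gB]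
    | succ k => simp [gB, ih, gF_map, gG]

end alg

lemma gF_two (n : ℕ) {R : Type*} [CommRing R] : gF (2:R) (-1) n = n := by
  induction n using Nat.twoStepInduction with
  | zero => simp [gF]
  | one => simp [gF]
  | more x h1 h2 => simp [gF, h1, h2]; ring

lemma gfib_eq (n : ℕ) : gfib n = gF (X 0) (X 1) n := by
  induction n using Nat.twoStepInduction with
  | zero => simp [gF, gfib]
  | one => simp [gF, gfib]
  | more x h1 h2 => simp [gF, gfib, h1, h2]

lemma gfibFact_eq (n : ℕ) : gfibFact n = gFa (X 0) (X 1) n := by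
  induction n with
  | zero => simp [gFa, gfibFact]
  | succ n ih => simp [gFa, gfibFact, ih, gfib_eq]

lemma gF_X_ne (n : ℕ) (hn : 0 < n) : gF (X 0 : MvPolynomial (Fin 2) ℤ) (X 1) n ≠ 0 := by
  intro h
  have := gF_map ((aeval ![(2:ℤ), -1]).toRingHom) (X 0 : MvPolynomial (Fin 2) ℤ) (X 1) n
  rw [h] at this
  simp [gF_two] at this
  omega

section ev
variable (n k : ℕ) (P : MvPolynomial (Fin 2) ℤ) (s t : ℂ)

lemma evP (hk : k + 1 ≤ n) 
    (hP : P * (gfib n * gfibFact k * gfibFact (n - k) * gfibFact (k + 1) *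
        gfibFact (n - k - 1)) = gfibFact n * gfibFact n) :
    (aeval ![s, t] P * gF s t n = gB s t n k * gB s t n (k+1)) ∧
    (aeval ![s, t] P * gF s t (k+1) = gB s t n k * gB s t (n-1) k) ∧
    (aeval ![s, t] P * gF s t (n-k) = gB s t (n-1) k * gB s t n (k+1)) := by
  obtain ⟨x, rfl⟩ : ∃ x, n = k + x + 1 := ⟨n - k - 1, by omega⟩
  simp only [gfib_eq, gfibFact_eq] at hP
  rw [show k+x+1-k = x+1 by omega] at *
  rw [show x+1-1 = x by omega] at hP
  rw [show k+x+1-1 = k+x by omega]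
  have e1 := gB_fact (X 0 : MvPolynomial (Fin 2) ℤ) (X 1) (k+x+1) k (by omega)
  have e2 := gB_fact (X 0 : MvPolynomial (Fin 2) ℤ) (X 1) (k+x+1) (k+1) (by omega)
  have e3 := gB_fact (X 0 : MvPolynomial (Fin 2) ℤ) (X 1) (k+x) k (by omega)
  rw [show k+x+1-k = x+1 by omega] at e1
  rw [show k+x+1-(k+1) = x by omega] at e2
  rw [show k+x-k = x by omega] at e3
  have g0 : ∀ m, gFa (X 0 : MvPolynomial (Fin 2) ℤ) (X 1) m ≠ 0 := fun m => gFa_ne _ _ _ fun i hi _ => gF_X_ne i hi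
  have r1 : ∀ m, gFa (X 0 : MvPolynomial (Fin 2) ℤ) (X 1) (m+1) = gF (X 0) (X 1) (m+1) * gFa (X 0) (X 1) m := fun m => rfl
  have n1 := g0 k
  have n2 := g0 x
  have n3 := g0 (k+x)
  have f1 := gF_X_ne (k+1) (by omega)
  have f2 := gF_X_ne (x+1) (by omega)
  have f3 := gF_X_ne (k+x+1) (by omega)
  simp only [r1] at hP e1 e2
  have A : ∀ Q Q' : MvPolynomial (Fin 2) ℤ, Q = Q' → aeval ![s, t] Q = aeval ![s,t] Q' := fun _ _ h => by rw [h]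
  have hF := gF_map ((aeval ![s, t] : MvPolynomial (Fin 2) ℤ →ₐ[ℤ] ℂ).toRingHom) (X 0) (X 1)
  have hB := gB_map ((aeval ![s, t] : MvPolynomial (Fin 2) ℤ →ₐ[ℤ] ℂ).toRingHom) (X 0) (X 1)
  simp at hF hB
  simp only [← hF, ← hB, ← map_mul]
  generalize gFa (X 0 : MvPolynomial (Fin 2) ℤ) (X 1) k = a at *
  generalize gFa (X 0 : MvPolynomial (Fin 2) ℤ) (X 1) x = b at *
  generalize gFa (X 0 : MvPolynomial (Fin 2) ℤ) (X 1) (k+x) = c at *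
  refine ⟨A _ _ ?_, A _ _ ?_, A _ _ ?_⟩
  · refine mul_right_cancel₀ (mul_ne_zero (mul_ne_zero (mul_ne_zero n1 n2) (mul_ne_zero n1 n2)) (mul_ne_zero f1 f2)) ?_
    generalize gF (X 0 : MvPolynomial (Fin 2) ℤ) (X 1) (k+x+1) = N at *
    linear_combination hP - e1 * (gB (X 0) (X 1) (k+x+1) (k+1) * (gF (X 0) (X 1) (k+1) * a * b)) - e2 * (N * c)
  · refine mul_right_cancel₀ (mul_ne_zero (mul_ne_zero (mul_ne_zero n1 n2) (mul_ne_zero n1 n2)) (mul_ne_zero f3 f2)) ?_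
    generalize gF (X 0 : MvPolynomial (Fin 2) ℤ) (X 1) (k+x+1) = N at *
    linear_combination hP - e1 * (gB (X 0) (X 1) (k+x) k * (N * a * b)) - e3 * (N * c * N)
  · refine mul_right_cancel₀ (mul_ne_zero (mul_ne_zero (mul_ne_zero n1 n2) (mul_ne_zero n1 n2)) (mul_ne_zero f3 f1)) ?_
    generalize gF (X 0 : MvPolynomial (Fin 2) ℤ) (X 1) (k+x+1) = N at *
    linear_combination hP - e2 * (gB (X 0) (X 1) (k+x) k * (N * a * b)) - e3 * (N * c * N)
end ev



lemma val_refl (M k : ℕ) (P : MvPolynomial (Fin 2) ℤ) (hk : k + 1 ≤ 2*M+1)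
    (hP : P * (gfib (2*M+1) * gfibFact k * gfibFact (2*M+1 - k) * gfibFact (k + 1) *
        gfibFact (2*M+1 - k - 1)) = gfibFact (2*M+1) * gfibFact (2*M+1)) :
    (∀ j, k = 2 * j → aeval ![(0:ℂ), 1] P = (M.choose j : ℂ) * M.choose j) ∧
    (∀ j, k = 2 * j + 1 → aeval ![(0:ℂ), 1] P = (M.choose j : ℂ) * M.choose (j+1)) := by
  obtain ⟨h1, h2, -⟩ := evP (2*M+1) k P 0 1 hk hP
  have hp : ∀ x, gF (0:ℂ) 1 (x + 2) = gF (0:ℂ) 1 x := by intro x; simp [gF]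
  have hne : ∀ i, 0 < i → i < 2 → gF (0:ℂ) 1 i ≠ 0 := by
    intro i h1 h2; obtain rfl : i = 1 := by omega
    simp [gF]
  have L := lucas (by norm_num) hp hne
  have a1 : gB (0:ℂ) 1 1 0 = 1 := gB_z _ _ _
  have a2 : gB (0:ℂ) 1 0 0 = 1 := gB_z _ _ _
  have a3 : gB (0:ℂ) 1 1 1 = 1 := gB_self _ _ _
  have f1 : ∀ j, gF (0:ℂ) 1 (2*j+1) = 1 := by
    intro j; rw [add_comm, gF_per hp]; simp [gF]
  constructor
  · rintro j rfl
    rw [f1, mul_one, show 2 * j = 2 * j + 0 by ring, L _ M 1 j 0 (by omega) (by omega) rfl, Nat.add_sub_cancel, L (2*M) M 0 j 0 (by omega) (by omega) rfl, a1, a2] at h2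
    rw [h2]; ring
  · rintro j rfl
    rw [f1, mul_one, L _ M 1 j 1 (by omega) (by omega) rfl, show 2 * j + 1 + 1 = 2 * (j+1) + 0 by ring, L _ M 1 (j+1) 0 (by omega) (by omega) rfl, a1, a3] at h1
    rw [h1]; ring

lemma val_rot (d m k n : ℕ) (hd : 3 ≤ d) (P : MvPolynomial (Fin 2) ℤ) (hn : n = d * (m+1)) (hk : k + 1 ≤ n)
    (hP : P * (gfib n * gfibFact k * gfibFact (n - k) * gfibFact (k + 1) *
        gfibFact (n - k - 1)) = gfibFact n * gfibFact n) (s t : ℂ)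
    (hp : ∀ x, gF s t (x + d) = gF s t x) (hne : ∀ i, 0 < i → i < d → gF s t i ≠ 0) :
    (∀ j, k = d * j → aeval ![s, t] P = (m.choose j : ℂ) * (m+1).choose j) ∧
    (∀ j, k + 1 = d * (j + 1) → aeval ![s, t] P = (m.choose j : ℂ) * (m+1).choose (j+1)) ∧
    (∀ j b, k = d * j + b → 0 < b → b + 1 < d → aeval ![s, t] P = 0) := by
  obtain ⟨h1, h2, h3⟩ := evP n k P s t hk hP
  have L := lucas (by omega) hp hne
  have hn' : n = d * (m+1) + 0 := hn
  have hn1 : n - 1 = d * m + (d - 1) := by rw [hn, Nat.mul_succ]; omega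
  have hF1 : gF s t 1 = 1 := by simp [gF]
  refine ⟨?_, ?_, ?_⟩
  · rintro j hj
    rw [hj, add_comm, gF_per hp, hF1] at h2
    rw [show d * j = d * j + 0 by ring, L _ _ _ _ _ (by omega) (by omega) hn', L _ _ _ _ _ (by omega) (by omega) hn1, gB_z, gB_z] at h2
    rw [← mul_one (aeval _ P), h2]; ring
  · intro j hj
    have hk' : k = d * j + (d - 1) := by rw [Nat.mul_succ] at hj; omega
    have hnk : n - k = 1 + d * (m - j) := by
      have : j ≤ m := by
        by_contra hc
        have : d * (m + 2) ≤ d * (j + 1) := Nat.mul_le_mul_left _ (by omega)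
        have : d * (m+1) < d * (m+2) := Nat.mul_lt_mul_of_pos_left (by omega) (by omega)
        omega
      obtain ⟨x, rfl⟩ : ∃ x, m = j + x := ⟨m - j, by omega⟩
      rw [show j + x - j = x by omega]
      have : n = d * x + d * j + d := by rw [hn]; ring
      omega
    rw [hnk, gF_per hp, hF1, hj, hk', show d * (j+1) = d * (j+1) + 0 by ring, L _ _ _ _ _ (by omega) (by omega) hn', L _ _ _ _ _ (by omega) (by omega) hn1, gB_self, gB_z] at h3
    rw [← mul_one (aeval _ P), h3]; ring
  · intro j b hj hb hb'
    rw [hj, show d * j + b + 1 = b + 1 + d * j by ring, gF_per hp, L _ _ _ _ _ (by omega) (by omega) hn', gB_lt s t 0 b hb] at h2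
    simp only [mul_zero, zero_mul] at h2
    rcases mul_eq_zero.1 h2 with h | h
    · exact h
    · exact absurd h (hne _ (by omega) (by omega))

lemma gF_root (w : ℂ) (hw : w ≠ 0) (x : ℕ) : gF (w + w⁻¹) (-1) x * (w - w⁻¹) = w ^ x - w⁻¹ ^ x := by
  induction x using Nat.twoStepInduction with
  | zero => simp [gF]
  | one => simp [gF]
  | more x h1 h2 =>
    have h : w * w⁻¹ = 1 := mul_inv_cancel₀ hw
    simp only [gF]
    generalize w⁻¹ = v at *
    linear_combination (w + v) * h2 - h1 + (w^x - v^x) * h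

lemma gF_root_per (w : ℂ) (d : ℕ) (hd : 3 ≤ d) (hodd : Odd d) (hw : IsPrimitiveRoot w d) :
    (∀ x, gF (w + w⁻¹) (-1) (x + d) = gF (w + w⁻¹) (-1) x) ∧ (∀ i, 0 < i → i < d → gF (w + w⁻¹) (-1) i ≠ 0) := by
  have h0 : w ≠ 0 := hw.ne_zero (by omega)
  have key : ∀ i, 0 < i → i < d → w ^ i - w⁻¹ ^ i ≠ 0 := by
    intro i h1 h2 h
    have h3 : w ^ (2 * i) = 1 := by
      have h4 : w ^ i * w⁻¹ ^ i = 1 := by rw [← mul_pow, mul_inv_cancel₀ h0, one_pow]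
      rw [two_mul, pow_add]
      linear_combination w ^ i * h + h4
    have h5 := hw.dvd_of_pow_eq_one _ h3
    have h6 : d ∣ i := (Nat.Coprime.dvd_mul_left (Nat.Coprime.symm (by simpa using hodd))).1 h5
    exact absurd (Nat.le_of_dvd h1 h6) (by omega)
  have k1 : w - w⁻¹ ≠ 0 := by simpa using key 1 (by omega) (by omega)
  constructor
  · intro x
    apply mul_right_cancel₀ k1
    rw [gF_root w h0, gF_root w h0, pow_add, pow_add, hw.pow_eq_one, inv_pow w d, hw.pow_eq_one]; simp
  · intro i h1 h2 h
    have := gF_root w h0 i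
    rw [h, zero_mul] at this
    exact key i h1 h2 this.symm

lemma gFa_two (n : ℕ) : gFa (2:ℂ) (-1) n = n.factorial := by
  induction n with
  | zero => simp [gFa]
  | succ n ih => rw [gFa, gF_two, ih, Nat.factorial_succ]; push_cast; ring

lemma gB_two (n k : ℕ) (hk : k ≤ n) : gB (2:ℂ) (-1) n k = n.choose k := by
  have := gB_fact (2:ℂ) (-1) n k hk
  rw [gFa_two, gFa_two, gFa_two] at this
  have h2 : ((n.choose k : ℕ) : ℂ) * (k.factorial * (n-k).factorial) = n.factorial := by
    rw [← Nat.choose_mul_factorial_mul_factorial hk]; push_cast; ring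
  apply mul_right_cancel₀ (b := ((k.factorial : ℂ) * (n-k).factorial))
  · exact mul_ne_zero (by exact_mod_cast Nat.factorial_ne_zero _) (by exact_mod_cast Nat.factorial_ne_zero _)
  · rw [this, h2]

lemma Kc_val (n k : ℕ) (hk : k + 1 ≤ n) :
    (n : ℤ) * Kc n ((n-k : ℕ):ℤ) ((n-k : ℕ):ℤ) 0 = n.choose k * n.choose (k+1) := by
  obtain ⟨c, rfl⟩ : ∃ c, n = k + c + 1 := ⟨n - k - 1, by omega⟩
  rw [show k + c + 1 - k = c + 1 by omega, Kc_eq _ _ _ _ le_rfl (by omega), add_zero, sub_zero, cz_nat, cz_nat, cz_nat]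
  have s1 : (k+c+1).choose k = (k+c+1).choose (c+1) := by
    rw [← Nat.choose_symm (show k ≤ k+c+1 by omega)]; congr 1; omega
  have s2 : (k+c+1).choose (k+1) = (k+c+1).choose c := by
    rw [← Nat.choose_symm (show k + 1 ≤ k+c+1 by omega)]; congr 1; omega
  rw [s1, s2, show k + c + 2 = (k+c+1)+1 by ring, Nat.choose_succ_succ (k+c+1) c]
  have e1 : (k+c+1) * (k+c).choose (c+1) = k * (k+c+1).choose (c+1) := by
    have := Nat.choose_mul_succ_eq (k+c) (c+1)
    rw [show k+c+1-(c+1) = k by omega] at this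
    rw [mul_comm, this, mul_comm]
  have e2 : (k+c+1).choose (c+1) * (c+1) = (k+c+1).choose c * (k+1) := by
    have := Nat.choose_succ_right_eq (k+c+1) c
    rw [show k+c+1-c = k+1 by omega] at this
    exact this
  zify at e1 e2
  push_cast
  linear_combination - (((k+c+1).choose c : ℤ) + (k+c+1).choose (c+1)) * e1 + ((k+c+1).choose (c+1) : ℤ) * e2

lemma val_one (n k : ℕ) (P : MvPolynomial (Fin 2) ℤ) (hk : k + 1 ≤ n)
    (hP : P * (gfib n * gfibFact k * gfibFact (n - k) * gfibFact (k + 1) *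
        gfibFact (n - k - 1)) = gfibFact n * gfibFact n) :
    aeval ![(2:ℂ), -1] P = (Kc n ((n-k : ℕ):ℤ) ((n-k : ℕ):ℤ) 0 : ℤ) := by
  obtain ⟨h1, -, -⟩ := evP n k P 2 (-1) hk hP
  rw [gF_two, gB_two _ _ (by omega), gB_two _ _ hk] at h1
  have := Kc_val n k hk
  have h2 : ((n : ℤ) * Kc n ((n-k : ℕ):ℤ) ((n-k : ℕ):ℤ) 0 : ℤ) = ((n.choose k * n.choose (k+1) : ℤ) : ℂ) := by rw [← this]
  push_cast at h2
  apply mul_right_cancel₀ (b := (n:ℂ)) (by exact_mod_cast (by omega : n ≠ 0))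
  rw [h1, ← h2]; ring



lemma inv_mul_of {r : ℤ → ℤ → Prop} {a : ℤ} (h : ∀ x y, r x y ↔ r (x + a) (y + a)) (z : ℤ) :
    ∀ x y, r x y ↔ r (x + a * z) (y + a * z) := by
  induction z using Int.induction_on with
  | zero => simp
  | succ i ih => intro x y; rw [ih, h, mul_add, mul_one, add_assoc, add_assoc]
  | pred i ih => intro x y; rw [ih x y, h (x + a * (-i - 1))]; ring_nf

lemma inv_gcd {n : ℕ} [NeZero n] (π : Finpartition (Finset.univ : Finset (ZMod n))) (l : ℤ) :
    (∀ x y : ℤ, relOf π x y ↔ relOf π (x + l) (y + l)) ↔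
    (∀ x y : ℤ, relOf π x y ↔ relOf π (x + (Int.gcd l n : ℕ)) (y + (Int.gcd l n : ℕ))) := by
  have hn : ∀ x y : ℤ, relOf π x y ↔ relOf π (x + n) (y + n) := by intro x y; simp [relOf]
  constructor
  · intro h x y
    rw [Int.gcd_eq_gcd_ab, inv_mul_of h (Int.gcdA l n), inv_mul_of hn (Int.gcdB l n), add_assoc, add_assoc]
  · intro h
    obtain ⟨c, hc⟩ := Int.gcd_dvd_left l n
    have := inv_mul_of h c
    rwa [← hc] at this

lemma nat_div_cases (d k : ℕ) (hd : 3 ≤ d) : (∃ j, k = d * j) ∨ (∃ j, k + 1 = d * (j+1)) ∨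
    (∃ j b, k = d * j + b ∧ 0 < b ∧ b + 1 < d) := by
  have h := Nat.div_add_mod k d
  have h2 := Nat.mod_lt k (show d > 0 by omega)
  rcases Nat.eq_zero_or_pos (k % d) with h0 | h0
  · exact Or.inl ⟨k / d, by omega⟩
  · by_cases h1 : k % d + 1 < d
    · exact Or.inr (Or.inr ⟨k / d, k % d, by omega, h0, h1⟩)
    · exact Or.inr (Or.inl ⟨k / d, by rw [Nat.mul_succ]; omega⟩)

lemma rot_final (n k d m : ℕ) [NeZero n] (hd : 3 ≤ d) (hodd : Odd d) (hn : n = d * (m+1)) (hk : k + 1 ≤ n) (P : MvPolynomial (Fin 2) ℤ)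
    (hP : P * (gfib n * gfibFact k * gfibFact (n - k) * gfibFact (k + 1) *
        gfibFact (n - k - 1)) = gfibFact n * gfibFact n) (w : ℂ) (hw : IsPrimitiveRoot w d) :
    aeval ![w + w⁻¹, (-1 : ℂ)] P
        = (Nat.card {π : Finpartition (Finset.univ : Finset (ZMod n)) //
            IsNoncrossing π ∧ π.parts.card = n - k ∧ ∀ x y : ℤ, relOf π x y ↔ relOf π (x + (m+1:ℕ)) (y + (m+1:ℕ))} : ℂ) := by
  classical
  obtain ⟨hp, hne⟩ := gF_root_per w d hd hodd hw
  obtain ⟨v0, v1, v2⟩ := val_rot d m k n hd P hn hk hP _ _ hp hne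
  rw [count_rot (Nat.succ_pos m) hd hn]
  rw [← Int.cast_natCast (Finset.card _)]
  have hdz : (0:ℤ) < d := by exact_mod_cast (by omega : 0 < d)
  have hbz : ((n - k : ℕ) : ℤ) = d * (m + 1) - k := by
    rw [Nat.cast_sub (by omega), hn]; push_cast; ring
  rcases nat_div_cases d k hd with ⟨j, hj⟩ | ⟨j, hj⟩ | ⟨j, b, hj, hb, hb'⟩
  · have hjm : j ≤ m := by
      by_contra hc
      have : d * (m + 1) ≤ d * j := Nat.mul_le_mul_left _ (by omega)
      omega
    obtain ⟨x, rfl⟩ : ∃ x, m = j + x := ⟨m - j, by omega⟩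
    rw [show ((n - k : ℕ) : ℤ) = d * ((x + 1 : ℕ) : ℤ) by rw [hbz, hj]; push_cast; ring]
    rw [rot_count0 _ _ hd, v0 j hj, show ((x+1:ℕ):ℤ) - 1 = x by push_cast; ring, cz_nat, cz_nat,
      Nat.choose_symm_add, show j + x + 1 = j + (x+1) by ring, Nat.choose_symm_add]
    push_cast; ring
  · have hjm : j ≤ m := by
      by_contra hc
      have : d * (m + 1 + 1) ≤ d * (j+1) := Nat.mul_le_mul_left _ (by omega)
      rw [Nat.mul_succ] at this
      omega
    obtain ⟨x, rfl⟩ : ∃ x, m = j + x := ⟨m - j, by omega⟩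
    have hj' : (k:ℤ) = d * (j + 1) - 1 := by
      have : ((k + 1 : ℕ) : ℤ) = ((d * (j + 1) : ℕ) : ℤ) := by rw [hj]
      push_cast at this; linarith
    rw [show ((n - k : ℕ) : ℤ) = d * (x : ℤ) + 1 by rw [hbz, hj']; push_cast; ring]
    rw [rot_count1 _ _ hd, v1 j hj, cz_nat, cz_nat,
      Nat.choose_symm_add, show j + x + 1 = (j + 1) + x by ring, Nat.choose_symm_add]
    push_cast; ring
  · rw [v2 j b hj hb hb', rot_count2]
    · simp
    · intro i hi
      rw [hbz, hj] at hi
      push_cast at hi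
      have : (d:ℤ) ∣ b := ⟨m + 1 - j - i, by linarith⟩
      have := Int.le_of_dvd (by exact_mod_cast hb) this
      omega
    · intro i hi
      rw [hbz, hj] at hi
      push_cast at hi
      have : (d:ℤ) ∣ b + 1 := ⟨m + 1 - j - i, by linarith⟩
      have := Int.le_of_dvd (by omega) this
      omega

lemma refl_fin (n k : ℕ) [NeZero n] (hn : Odd n) (hk : k + 1 ≤ n) (P : MvPolynomial (Fin 2) ℤ)
    (hP : P * (gfib n * gfibFact k * gfibFact (n - k) * gfibFact (k + 1) *
        gfibFact (n - k - 1)) = gfibFact n * gfibFact n) :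
    aeval ![(0 : ℂ), 1] P
      = (Nat.card {π : Finpartition (Finset.univ : Finset (ZMod n)) //
          IsNoncrossing π ∧ π.parts.card = n - k ∧ ∀ x y : ℤ, relOf π x y ↔ relOf π (-x) (-y)} : ℂ) := by
  classical
  obtain ⟨M, hM⟩ := hn
  rw [count_refl _ M hM]
  rw [← Int.cast_natCast (Finset.card _)]
  subst hM
  obtain ⟨v0, v1⟩ := val_refl M k P hk hP
  rcases Nat.even_or_odd' k with ⟨j, hj | hj⟩
  · obtain ⟨x, rfl⟩ : ∃ x, M = j + x := ⟨M - j, by omega⟩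
    rw [refl_final_odd (j+x) x (by omega) _ (by omega), v0 j hj, cz_nat, Nat.choose_symm_add]
    push_cast; ring
  · obtain ⟨x, rfl⟩ : ∃ x, M = j + 1 + x := ⟨M - j - 1, by omega⟩
    rw [refl_final_even (j+1+x) ((x+1:ℕ):ℤ) (by omega) _ (by omega), v1 j hj, show ((x+1:ℕ):ℤ) - 1 = x by push_cast; ring, cz_nat, cz_nat,
      Nat.choose_symm_add, show j + 1 + x = j + (x + 1) by ring, Nat.choose_symm_add]
    push_cast; ring

theorem dihedral_sieving_noncrossing_partitions_narayana (n k : ℕ) [NeZero n]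
    (hn : Odd n) (hk : k ≤ n - 1)
    (P : MvPolynomial (Fin 2) ℤ)
    (hP : P * (gfib n * gfibFact k * gfibFact (n - k) * gfibFact (k + 1) *
        gfibFact (n - k - 1)) = gfibFact n * gfibFact n) :
    (∀ ℓ : ℤ,
      aeval ![primRoot n ^ ℓ + primRoot n ^ (-ℓ), (-1 : ℂ)] P
        = (Nat.card {π : Finpartition (Finset.univ : Finset (ZMod n)) //
            IsNoncrossing π ∧ π.parts.card = n - k ∧
              π.parts.image (Finset.image (fun x => x + (ℓ : ZMod n))) = π.parts} : ℂ)) ∧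
    aeval ![(0 : ℂ), 1] P
      = (Nat.card {π : Finpartition (Finset.univ : Finset (ZMod n)) //
          IsNoncrossing π ∧ π.parts.card = n - k ∧
            π.parts.image (Finset.image (fun x => -x)) = π.parts} : ℂ) := by
  have hn0 : 0 < n := Nat.pos_of_ne_zero (NeZero.ne n)
  have hk' : k + 1 ≤ n := by omega
  constructor
  · intro l
    have hrot : ∀ π : Finpartition (Finset.univ : Finset (ZMod n)), _ ↔ _ := fun π => (relOf_rot π l).trans (inv_gcd π l)
    simp only [hrot]
    clear hrot
    rw [zpow_neg]
    have hz : IsPrimitiveRoot (primRoot n) n := Complex.isPrimitiveRoot_exp n (NeZero.ne n)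
    obtain ⟨c, d, hg, hcop, hl, hnd⟩ : ∃ c d : ℤ, 0 < Int.gcd l n ∧ Int.gcd c d = 1 ∧ l = (Int.gcd l n : ℕ) * c ∧ (n:ℤ) = (Int.gcd l n : ℕ) * d := by
      have h0 : 0 < Int.gcd l n := Int.gcd_pos_of_ne_zero_right _ (by exact_mod_cast NeZero.ne n)
      obtain ⟨c, d, h1, h2, h3⟩ := Int.exists_gcd_one h0
      exact ⟨c, d, h0, h1, by rw [mul_comm]; exact h2, by rw [mul_comm]; exact h3⟩
    generalize Int.gcd l n = g at *
    have hd0 : 0 < d := by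
      have : (0:ℤ) < g * d := by rw [← hnd]; exact_mod_cast hn0
      exact pos_of_mul_pos_right this (by positivity)
    lift d to ℕ using hd0.le
    have hnd' : n = g * d := by exact_mod_cast hnd
    have hodd : Odd d := Nat.Odd.of_mul_right (hnd' ▸ hn)
    have hw : IsPrimitiveRoot (primRoot n ^ l) d := by
      rw [hl, zpow_mul, zpow_natCast]
      exact (hz.pow hn0 hnd').zpow_of_gcd_eq_one c hcop
    obtain ⟨m, rfl⟩ : ∃ m, g = m + 1 := ⟨g - 1, by omega⟩
    by_cases hd1 : d = 1
    · subst hd1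
      rw [IsPrimitiveRoot.one_right_iff.1 hw]
      rw [mul_one] at hnd'
      rw [← hnd']
      have : ∀ π : Finpartition (Finset.univ : Finset (ZMod n)), (∀ x y : ℤ, relOf π x y ↔ relOf π (x + n) (y + n)) ↔ True := by
        intro π; simp [relOf]
      simp only [this]
      rw [← Int.cast_natCast (Nat.card _), count_one, ← val_one n k P hk' hP]
      norm_num
    · have hd3 : 3 ≤ d := by
        rcases hodd with ⟨q, rfl⟩; omega
      exact rot_final n k d m hd3 hodd (by rw [hnd', mul_comm]) hk' P hP _ hw
  · simp only [relOf_refl]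
    exact refl_fin n k hn hk' P hP
end

section
/- For 0 ≤ k ≤ n−1, the product {n}_{s,t}·{k}!_{s,t}·{n−k}!_{s,t}·{k+1}!_{s,t}·{n−k−1}!_{s,t} divides {n}!_{s,t}·{n}!_{s,t} in ℤ[s,t]; that is, the (s,t)-Narayana number (1/{n}_{s,t})·{n choose k}_{s,t}·{n choose k+1}_{s,t} is a polynomial in s and t with integer coefficients. -/
open MvPolynomial

theorem gfib_rec (m : ℕ) : gfib (m + 2) = X 0 * gfib (m + 1) + X 1 * gfib m := by
  simp [gfib]

theorem gfib_add (a b : ℕ) :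
    gfib (a + 1 + b) = gfib (a + 1) * gfib (b + 1) + X 1 * gfib a * gfib b := by
  induction b using Nat.twoStepInduction with
  | zero => simp [gfib]
  | one =>
    have h1 : gfib (1 + 1) = X 0 := by simp [gfib]
    have h2 : gfib 1 = 1 := by simp [gfib]
    rw [show a + 1 + 1 = a + 2 from rfl, gfib_rec, h1, h2]; ring
  | more b ih1 ih2 =>
    rw [show a + 1 + (b + 2) = (a + 1 + b) + 2 by ring, gfib_rec, ih1,
      show a + 1 + b + 1 = a + 1 + (b + 1) by ring, ih2,
      show b + 2 + 1 = (b + 1) + 2 by ring, gfib_rec (b + 1),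
      show b + 1 + 1 = b + 2 by ring, gfib_rec b]
    ring

theorem gfib_eval (n : ℕ) : eval (![1, 0] : Fin 2 → ℤ) (gfib (n + 1)) = 1 := by
  induction n with
  | zero => simp [gfib]
  | succ n ih => rw [gfib_rec]; simp [ih]

theorem gfibFact_ne (n : ℕ) : gfibFact n ≠ 0 := by
  induction n with
  | zero => simp [gfibFact]
  | succ n ih =>
    refine mul_ne_zero (fun h => ?_) ih
    have := gfib_eval n
    rw [h] at this
    simp at this

theorem gfib_relPrime (n : ℕ) : IsRelPrime (gfib (n + 1)) (gfib (n + 2)) := by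
  induction n with
  | zero => simp [gfib, isRelPrime_one_left]
  | succ n ih =>
    have ht : IsRelPrime (gfib (n + 2)) (X 1) := by
      refine IsRelPrime.symm ?_
      have hp : Prime (X 1 : MvPolynomial (Fin 2) ℤ) := X_prime
      rw [hp.irreducible.isRelPrime_iff_not_dvd]
      rintro ⟨c, hc⟩
      have := gfib_eval (n + 1)
      rw [hc] at this
      simp at this
    intro d h1 h2
    have h3 : d ∣ X 1 * gfib (n + 1) := by
      have h4 : X 1 * gfib (n + 1) = gfib (n + 1 + 2) - X 0 * gfib (n + 2) := by
        rw [gfib_rec]; ring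
      rw [h4]
      exact dvd_sub h2 (Dvd.dvd.mul_left h1 _)
    exact (IsRelPrime.mul_right ht ih.symm) h1 h3

theorem gfibFact_dvd (n : ℕ) : ∀ a b : ℕ, a + b = n →
    gfibFact a * gfibFact b ∣ gfibFact n := by
  induction n with
  | zero =>
    intro a b h
    obtain ⟨rfl, rfl⟩ : a = 0 ∧ b = 0 := by omega
    simp [gfibFact]
  | succ n ih =>
    intro a b h
    rcases a with _ | a
    · obtain rfl : b = n + 1 := by omega
      simp [gfibFact]
    rcases b with _ | b
    · obtain rfl : a = n := by omega
      simp [gfibFact]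
    obtain ⟨c, hc⟩ := ih a (b + 1) (by omega)
    obtain ⟨d, hd⟩ := ih (a + 1) b (by omega)
    have hn : gfib (n + 1) = gfib (a + 1) * gfib (b + 2) + X 1 * gfib a * gfib (b + 1) := by
      rw [← h, gfib_add]
    refine ⟨gfib (b + 2) * c + X 1 * gfib a * d, ?_⟩
    have e : ∀ m, gfibFact (m + 1) = gfib (m + 1) * gfibFact m := fun m => rfl
    calc gfibFact (n + 1) = gfib (a + 1) * gfib (b + 2) * gfibFact n
          + X 1 * gfib a * gfib (b + 1) * gfibFact n := by rw [e, hn]; ring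
      _ = gfib (a + 1) * gfib (b + 2) * (gfibFact a * gfibFact (b + 1) * c)
          + X 1 * gfib a * gfib (b + 1) * (gfibFact (a + 1) * gfibFact b * d) := by
            rw [← hc, ← hd]
      _ = _ := by rw [e a, e b]; ring

/-- The `(s,t)`-Narayana number is a polynomial: for `0 ≤ k ≤ n - 1`,
`{n}·{k}!·{n-k}!·{k+1}!·{n-k-1}!` divides `{n}!·{n}!` in `ℤ[s,t]`. -/
theorem narayana_is_polynomial (n k : ℕ) (hk : k < n) :
    (gfib n * gfibFact k * gfibFact (n - k) * gfibFact (k + 1) * gfibFact (n - k - 1)) ∣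
      (gfibFact n * gfibFact n) := by
  obtain ⟨m, rfl⟩ : ∃ m, n = k + m + 1 := ⟨n - k - 1, by omega⟩
  rw [show k + m + 1 - k - 1 = m by omega, show k + m + 1 - k = m + 1 by omega]
  have e : ∀ m, gfibFact (m + 1) = gfib (m + 1) * gfibFact m := fun m => rfl
  obtain ⟨A, hA⟩ := gfibFact_dvd (k + m + 1) k (m + 1) (by omega)
  obtain ⟨B, hB⟩ := gfibFact_dvd (k + m + 1) (k + 1) m (by omega)
  obtain ⟨C, hC⟩ := gfibFact_dvd (k + m) k m rfl
  have h0 : gfibFact k * gfibFact m ≠ 0 := mul_ne_zero (gfibFact_ne k) (gfibFact_ne m)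
  have h1 : gfib (m + 1) * A = gfib (k + m + 1) * C := by
    apply mul_left_cancel₀ h0
    have := hA
    rw [e (k + m), hC, e m] at this
    linear_combination -this
  have h2 : gfib (k + 1) * B = gfib (k + m + 1) * C := by
    apply mul_left_cancel₀ h0
    have := hB
    rw [e (k + m), hC, e k] at this
    linear_combination -this
  have h3 : gfib (k + m + 2) = gfib (k + 1) * gfib (m + 2) + X 1 * gfib k * gfib (m + 1) := by
    rw [← gfib_add]; congr 1; ring
  have h4 : gfib (k + m + 1) ∣ gfib (k + m + 2) * (A * B) := by
    refine ⟨gfib (m + 2) * C * A + X 1 * gfib k * C * B, ?_⟩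
    rw [h3]
    linear_combination gfib (m + 2) * A * h2 + X 1 * gfib k * B * h1
  obtain ⟨D, hD⟩ := (gfib_relPrime (k + m)).dvd_of_dvd_mul_left h4
  refine ⟨D, ?_⟩
  calc gfibFact (k + m + 1) * gfibFact (k + m + 1)
      = (gfibFact k * gfibFact (m + 1) * A) * (gfibFact (k + 1) * gfibFact m * B) := by
        rw [← hA, ← hB]
    _ = gfibFact k * gfibFact (m + 1) * gfibFact (k + 1) * gfibFact m * (A * B) := by ring
    _ = _ := by rw [hD]; ring
end

section
/- Let C̃_n(q) ∈ ℤ[q] be the Carlitz–Riordan q-Catalan polynomials. Then for every even natural number n > 0, C̃_n(−1) = 0. -/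
/-- The Carlitz–Riordan q-Catalan polynomials, defined by `C̃_0(q) = 1` and
`C̃_{n+1}(q) = ∑_{k=0}^{n} q^k C̃_k(q) C̃_{n-k}(q)`. -/
noncomputable def crCatalan : ℕ → Polynomial ℤ
  | 0 => 1
  | (n + 1) =>
    ∑ k ∈ (Finset.range (n + 1)).attach,
      Polynomial.X ^ (k : ℕ) * crCatalan k * crCatalan (n - (k : ℕ))
decreasing_by
  · exact Nat.lt_succ_of_le (Nat.le_of_lt_succ (Finset.mem_range.mp k.2))
  · exact Nat.lt_succ_of_le (Nat.sub_le n k)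

/-- For every even `n > 0`, `C̃_n(-1) = 0`. -/
theorem crCatalan_eval_neg_one_of_even (n : ℕ) (hpos : 0 < n) (heven : Even n) :
    Polynomial.eval (-1 : ℤ) (crCatalan n) = 0 := by
  obtain ⟨m, rfl⟩ : ∃ m, n = m + 1 := ⟨n - 1, by omega⟩
  have hm : Odd m := by
    rcases Nat.even_or_odd m with h | h
    · exact absurd heven (by simpa using h.add_one)
    · exact h
  have key : Polynomial.eval (-1 : ℤ) (crCatalan (m + 1)) =
      ∑ k ∈ Finset.range (m + 1), (-1 : ℤ) ^ k * (crCatalan k).eval (-1)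
        * (crCatalan (m - k)).eval (-1) := by
    rw [crCatalan, Finset.sum_attach (Finset.range (m + 1))
      (fun k => Polynomial.X ^ k * crCatalan k * crCatalan (m - k)), Polynomial.eval_finset_sum]
    simp
  have h2 : ∑ k ∈ Finset.range (m + 1), (-1 : ℤ) ^ k * (crCatalan k).eval (-1)
        * (crCatalan (m - k)).eval (-1) = - ∑ k ∈ Finset.range (m + 1),
        (-1 : ℤ) ^ k * (crCatalan k).eval (-1) * (crCatalan (m - k)).eval (-1) := by
    conv_lhs => rw [← Finset.sum_range_reflect]
    rw [← Finset.sum_neg_distrib]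
    refine Finset.sum_congr rfl fun k hk => ?_
    have hk' : k ≤ m := Nat.le_of_lt_succ (Finset.mem_range.mp hk)
    have e1 : m + 1 - 1 - k = m - k := by omega
    have e2 : m - (m - k) = k := by omega
    have e3 : (-1 : ℤ) ^ (m - k) = -(-1) ^ k := by
      have h : (-1 : ℤ) ^ (m - k) * (-1) ^ k = -1 := by
        rw [← pow_add, Nat.sub_add_cancel hk', hm.neg_one_pow]
      rcases neg_one_pow_eq_or ℤ k with h' | h' <;> rw [h'] at h ⊢ <;> linarith
    rw [e1, e2, e3]
    ring
  rw [key]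
  linarith
end

section
/- Let C̃_n(q) ∈ ℤ[q] be the Carlitz–Riordan q-Catalan polynomials. Then for every k ≥ 1, (−1)^{binom(2k−1, 2)} · C̃_{2k−1}(−1) = C_{k−1}, where C_{k−1} is the ordinary (k−1)-st Catalan number. -/
theorem cr_rec (n : ℕ) : Polynomial.eval (-1 : ℤ) (crCatalan (n + 1)) =
    ∑ k ∈ Finset.range (n + 1), (-1 : ℤ) ^ k * Polynomial.eval (-1 : ℤ) (crCatalan k) *
      Polynomial.eval (-1 : ℤ) (crCatalan (n - k)) := by
  rw [crCatalan, Finset.sum_attach (Finset.range (n + 1))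
    (fun k => Polynomial.X ^ k * crCatalan k * crCatalan (n - k)), Polynomial.eval_finsetSum]
  simp

theorem cr_even (n : ℕ) : Polynomial.eval (-1 : ℤ) (crCatalan (2 * n + 2)) = 0 := by
  have h := cr_rec (2 * n + 1)
  have h2 := h
  rw [← Finset.sum_range_reflect] at h2
  have h3 : ∀ j ∈ Finset.range (2 * n + 1 + 1),
      (-1 : ℤ) ^ (2 * n + 1 + 1 - 1 - j) *
        Polynomial.eval (-1 : ℤ) (crCatalan (2 * n + 1 + 1 - 1 - j)) *
        Polynomial.eval (-1 : ℤ) (crCatalan (2 * n + 1 - (2 * n + 1 + 1 - 1 - j))) =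
      -((-1 : ℤ) ^ j * Polynomial.eval (-1 : ℤ) (crCatalan j) *
        Polynomial.eval (-1 : ℤ) (crCatalan (2 * n + 1 - j))) := by
    intro j hj
    have hj' : j ≤ 2 * n + 1 := by simpa [Nat.lt_succ_iff] using hj
    have e1 : 2 * n + 1 + 1 - 1 - j = 2 * n + 1 - j := by omega
    have e2 : 2 * n + 1 - (2 * n + 1 - j) = j := by omega
    rw [e1, e2]
    have e3 : (-1 : ℤ) ^ (2 * n + 1 - j) = -(-1) ^ j := by
      rcases Nat.even_or_odd j with hh | hh
      · have : Odd (2 * n + 1 - j) := by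
          obtain ⟨c, hc⟩ := hh
          exact ⟨n - c, by omega⟩
        rw [this.neg_one_pow, hh.neg_one_pow]
      · have : Even (2 * n + 1 - j) := by
          obtain ⟨c, hc⟩ := hh
          exact ⟨n - c, by omega⟩
        rw [this.neg_one_pow, hh.neg_one_pow]; norm_num
    rw [e3]; ring
  rw [Finset.sum_congr rfl h3, Finset.sum_neg_distrib, ← h] at h2
  have : 2 * n + 2 = 2 * n + 1 + 1 := rfl
  rw [this]
  omega

theorem sum_split (f : ℕ → ℤ) (m : ℕ) : ∑ k ∈ Finset.range (2 * m + 1), f k =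
    ∑ i ∈ Finset.range (m + 1), f (2 * i) + ∑ i ∈ Finset.range m, f (2 * i + 1) := by
  induction m with
  | zero => simp
  | succ m ih =>
    rw [show 2 * (m + 1) + 1 = 2 * m + 1 + 1 + 1 by ring, Finset.sum_range_succ,
      Finset.sum_range_succ, ih, Finset.sum_range_succ _ (m + 1),
      Finset.sum_range_succ (fun i => f (2 * i + 1)) m,
      show 2 * (m + 1) = 2 * m + 1 + 1 by ring]
    ring

theorem cr_odd (m : ℕ) : Polynomial.eval (-1 : ℤ) (crCatalan (2 * m + 1)) =
    (-1) ^ m * (catalan m : ℤ) := by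
  induction m using Nat.strong_induction_on with
  | _ m ih =>
    rw [cr_rec, sum_split]
    cases m with
    | zero => simp [crCatalan]
    | succ m =>
      rw [Finset.sum_eq_zero, zero_add, catalan_succ, Finset.sum_range, Nat.cast_sum,
        Finset.mul_sum]
      · apply Finset.sum_congr rfl
        intro i _
        have hi : (i : ℕ) ≤ m := Nat.lt_succ_iff.mp i.2
        have e : 2 * (m + 1) - (2 * (i : ℕ) + 1) = 2 * (m - i) + 1 := by omega
        rw [e, ih i (by omega), ih (m - i) (by omega), pow_succ, pow_mul]
        obtain ⟨c, hc⟩ := Nat.exists_eq_add_of_le hi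
        have e2 : m - (i : ℕ) = c := by omega
        have e3 : (-1 : ℤ) ^ (m + 1) = (-1) ^ ((i : ℕ) + c + 1) := congrArg (fun t => (-1 : ℤ) ^ (t + 1)) hc
        rw [e2, e3]
        push_cast
        simp only [pow_succ, pow_add]
        simp
        ring
      · intro i hi
        have hi' : i ≤ m + 1 := by simpa [Nat.lt_succ_iff] using hi
        rcases i with _ | i
        · have := cr_even m
          rw [show 2 * (m + 1) - 2 * 0 = 2 * m + 2 by omega, this, mul_zero]
        · rw [show 2 * (i + 1) = 2 * i + 2 by ring, cr_even i]; simp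

/-- For every `k ≥ 1`, `(-1)^{binom(2k-1,2)} C̃_{2k-1}(-1) = C_{k-1}`, the ordinary
`(k-1)`-st Catalan number. -/
theorem crCatalan_eval_neg_one_odd (k : ℕ) (hk : 1 ≤ k) :
    (-1 : ℤ) ^ ((2 * k - 1).choose 2) * Polynomial.eval (-1 : ℤ) (crCatalan (2 * k - 1))
      = (catalan (k - 1) : ℤ) := by
  obtain ⟨m, rfl⟩ := Nat.exists_eq_add_of_le' hk
  rw [show 2 * (m + 1) - 1 = 2 * m + 1 by omega, cr_odd, Nat.add_sub_cancel, ← mul_assoc,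
    ← pow_add]
  have e : (2 * m + 1).choose 2 = m * (2 * m + 1) := by
    rw [Nat.choose_two_right, Nat.add_sub_cancel]
    apply Nat.div_eq_of_eq_mul_left (by norm_num)
    ring
  rw [e, Even.neg_one_pow ⟨m * (m + 1), by ring⟩, one_mul]
end

section
/- Let n be odd and 0 ≤ k ≤ n, and let P ∈ ℤ[s,t] be the unique polynomial with P·{k}!_{s,t}·{n−k}!_{s,t} = {n}!_{s,t}. Then P(0, 1) = binom((n−1)/2, ⌊k/2⌋). -/
open MvPolynomial

noncomputable def spec1 : MvPolynomial (Fin 2) ℤ →+* Polynomial ℤ :=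
  (aeval ![(Polynomial.X : Polynomial ℤ), 1] : MvPolynomial (Fin 2) ℤ →ₐ[ℤ] Polynomial ℤ).toRingHom

lemma spec1_X0 : spec1 (X 0) = Polynomial.X := by simp [spec1]
lemma spec1_X1 : spec1 (X 1) = 1 := by simp [spec1]

lemma spec1_eval (P : MvPolynomial (Fin 2) ℤ) :
    (spec1 P).eval 0 = eval ![(0 : ℤ), 1] P := by
  have h : (Polynomial.evalRingHom (0 : ℤ)).comp spec1 = eval ![(0 : ℤ), 1] := by
    apply MvPolynomial.ringHom_ext
    · intro r
      simp [spec1]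
    · intro i
      fin_cases i <;> simp [spec1]
  exact congrArg (fun f => f P) h

lemma gfib_spec (j : ℕ) :
    (∃ a : Polynomial ℤ, spec1 (gfib (2 * j)) = Polynomial.X * a ∧ a.eval 0 = (j : ℤ)) ∧
    (spec1 (gfib (2 * j + 1))).eval 0 = 1 := by
  induction j with
  | zero => exact ⟨⟨0, by simp [gfib], by simp⟩, by simp [gfib]⟩
  | succ j ih =>
    obtain ⟨⟨a, ha, ha0⟩, hb⟩ := ih
    have h2 : spec1 (gfib (2 * (j + 1))) = Polynomial.X * (spec1 (gfib (2 * j + 1)) + a) := by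
      rw [show 2 * (j + 1) = 2 * j + 2 by ring, gfib, map_add, map_mul, map_mul, spec1_X0,
        spec1_X1, ha]
      ring
    refine ⟨⟨_, h2, ?_⟩, ?_⟩
    · rw [Polynomial.eval_add, hb, ha0]; push_cast; ring
    · rw [show 2 * (j + 1) + 1 = (2 * j + 1) + 2 by ring, gfib, map_add, map_mul, map_mul,
        spec1_X0, spec1_X1]
      simp [hb]

lemma fact_spec (j : ℕ) :
    (∃ a : Polynomial ℤ, spec1 (gfibFact (2 * j)) = Polynomial.X ^ j * a ∧
      a.eval 0 = (j.factorial : ℤ)) ∧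
    (∃ a : Polynomial ℤ, spec1 (gfibFact (2 * j + 1)) = Polynomial.X ^ j * a ∧
      a.eval 0 = (j.factorial : ℤ)) := by
  have step : ∀ j : ℕ, (∃ a : Polynomial ℤ, spec1 (gfibFact (2 * j)) = Polynomial.X ^ j * a ∧
      a.eval 0 = (j.factorial : ℤ)) → (∃ a : Polynomial ℤ,
      spec1 (gfibFact (2 * j + 1)) = Polynomial.X ^ j * a ∧ a.eval 0 = (j.factorial : ℤ)) := by
    rintro j ⟨a, ha, ha0⟩
    refine ⟨spec1 (gfib (2 * j + 1)) * a, ?_, ?_⟩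
    · rw [gfibFact, map_mul, ha]; ring
    · rw [Polynomial.eval_mul, (gfib_spec j).2, ha0, one_mul]
  have main : ∃ a : Polynomial ℤ, spec1 (gfibFact (2 * j)) = Polynomial.X ^ j * a ∧
      a.eval 0 = (j.factorial : ℤ) := by
    induction j with
    | zero => exact ⟨1, by simp [gfibFact], by simp⟩
    | succ j ih =>
      obtain ⟨a, ha, ha0⟩ := step j ih
      obtain ⟨c, hc, hc0⟩ := (gfib_spec (j + 1)).1
      refine ⟨c * a, ?_, ?_⟩
      · rw [show 2 * (j + 1) = (2 * j + 1) + 1 by ring] at hc ⊢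
        rw [gfibFact, map_mul, ha, hc]; ring
      · rw [Polynomial.eval_mul, hc0, ha0, Nat.factorial_succ]; push_cast; ring
  exact ⟨main, step j main⟩

lemma fact_spec' (m : ℕ) :
    ∃ a : Polynomial ℤ, spec1 (gfibFact m) = Polynomial.X ^ (m / 2) * a ∧
      a.eval 0 = ((m / 2).factorial : ℤ) := by
  rcases Nat.even_or_odd' m with ⟨j, rfl | rfl⟩
  · rw [show 2 * j / 2 = j by omega]; exact (fact_spec j).1
  · rw [show (2 * j + 1) / 2 = j by omega]; exact (fact_spec j).2

/-- For `n` odd and `0 ≤ k ≤ n`, the Fibonomial polynomial `P` satisfies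
`P(0, 1) = binom((n-1)/2, ⌊k/2⌋)`. -/
theorem fibonomial_eval_zero_one (n k : ℕ) (hn : Odd n) (hk : k ≤ n)
    (P : MvPolynomial (Fin 2) ℤ)
    (hP : P * gfibFact k * gfibFact (n - k) = gfibFact n) :
    eval ![(0 : ℤ), 1] P = (((n - 1) / 2).choose (k / 2) : ℤ) := by
  obtain ⟨N, rfl⟩ := hn
  obtain ⟨a, ha, ha0⟩ := fact_spec' k
  obtain ⟨b, hb, hb0⟩ := fact_spec' (2 * N + 1 - k)
  obtain ⟨c, hc, hc0⟩ := fact_spec' (2 * N + 1)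
  have e1 : (2 * N + 1 - k) / 2 = N - k / 2 := by omega
  have e2 : (2 * N + 1) / 2 = N := by omega
  have e3 : (2 * N + 1 - 1) / 2 = N := by omega
  have hle : k / 2 ≤ N := by omega
  rw [e1] at hb hb0
  rw [e2] at hc hc0
  rw [e3]
  have h := congrArg spec1 hP
  rw [map_mul, map_mul, ha, hb, hc] at h
  have hX : (Polynomial.X : Polynomial ℤ) ^ N
      = Polynomial.X ^ (k / 2) * Polynomial.X ^ (N - k / 2) := by
    rw [← pow_add]; congr 1; omega
  have h' : (Polynomial.X : Polynomial ℤ) ^ N * (spec1 P * a * b) = Polynomial.X ^ N * c := by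
    rw [← h, hX]; ring
  have h2 := mul_left_cancel₀ (pow_ne_zero N Polynomial.X_ne_zero) h'
  have h3 := congrArg (Polynomial.eval 0) h2
  rw [Polynomial.eval_mul, Polynomial.eval_mul, spec1_eval, ha0, hb0, hc0] at h3
  have h4 : ((N.choose (k / 2) : ℤ)) * ((k / 2).factorial : ℤ) * ((N - k / 2).factorial : ℤ)
      = (N.factorial : ℤ) := by
    exact_mod_cast Nat.choose_mul_factorial_mul_factorial hle
  rw [← h4] at h3
  have p1 : ((k / 2).factorial : ℤ) ≠ 0 := by exact_mod_cast Nat.factorial_ne_zero _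
  have p2 : ((N - k / 2).factorial : ℤ) ≠ 0 := by exact_mod_cast Nat.factorial_ne_zero _
  exact mul_right_cancel₀ p1 (mul_right_cancel₀ p2 h3)
end

section
/- Let n be odd, let P ∈ ℤ[s,t] be the unique polynomial with P·{n+1}_{s,t}·{n}!_{s,t}·{n}!_{s,t} = {2n}!_{s,t}, let Q ∈ ℤ[q] be the unique polynomial with Q·[n+1]_q·[n]!_q·[n]!_q = [2n]!_q (MacMahon's q-Catalan polynomial), and let ζ = exp(2πi/n) ∈ ℂ. Then for every integer ℓ, P(ζ^ℓ + ζ^{−ℓ}, −1) = Q(ζ^ℓ), and moreover P(0, 1) = Q(−1). -/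
open MvPolynomial

/-- The q-analogue `[m]_q = 1 + q + ⋯ + q^{m-1} ∈ ℤ[q]`. -/
noncomputable def qInt (m : ℕ) : Polynomial ℤ := ∑ i ∈ Finset.range m, Polynomial.X ^ i

/-- The q-factorial `[m]!_q = [m]_q [m-1]_q ⋯ [1]_q`. -/
noncomputable def qFact : ℕ → Polynomial ℤ
  | 0 => 1
  | (m + 1) => qInt (m + 1) * qFact m

lemma qInt_ne_zero' (m : ℕ) : qInt (m + 1) ≠ 0 := by
  intro h
  have := congrArg (Polynomial.eval 1) h
  simp [qInt, Polynomial.eval_finsetSum] at this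
  norm_cast at this

lemma qFact_eq_prod (m : ℕ) : qFact m = ∏ i ∈ Finset.range m, qInt (i + 1) := by
  induction m with
  | zero => simp [qFact]
  | succ m ih => rw [qFact, Finset.prod_range_succ, ih, mul_comm]

lemma qFact_ne_zero' (m : ℕ) : qFact m ≠ 0 := by
  rw [qFact_eq_prod]
  exact Finset.prod_ne_zero_iff.2 fun i _ => qInt_ne_zero' i

lemma gfibFact_eq_prod (m : ℕ) : gfibFact m = ∏ i ∈ Finset.range m, gfib (i + 1) := by
  induction m with
  | zero => simp [gfibFact]
  | succ m ih => rw [gfibFact, Finset.prod_range_succ, ih, mul_comm]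

/-- `[m]_q` with complex coefficients. -/
noncomputable def qc (p : Polynomial ℤ) : Polynomial ℂ := p.map (Int.castRingHom ℂ)

/-- The substitution `s = c (1 + q)`, `t = - c^2 q`. -/
noncomputable def phi (c : ℂ) : MvPolynomial (Fin 2) ℤ →ₐ[ℤ] Polynomial ℂ :=
  aeval ![Polynomial.C c * (1 + Polynomial.X), - Polynomial.C c ^ 2 * Polynomial.X]

lemma qc_qInt (m : ℕ) : qc (qInt m) = ∑ i ∈ Finset.range m, Polynomial.X ^ i := by
  simp [qc, qInt, Polynomial.map_sum]

lemma phi_gfib (c : ℂ) (m : ℕ) :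
    phi c (gfib m) * Polynomial.C c = Polynomial.C (c ^ m) * qc (qInt m) ∧
    phi c (gfib (m + 1)) = Polynomial.C (c ^ m) * qc (qInt (m + 1)) := by
  induction m with
  | zero => simp [gfib, qc_qInt]
  | succ m ih =>
    obtain ⟨h1, h2⟩ := ih
    refine ⟨?_, ?_⟩
    · rw [h2]; simp only [map_pow]; ring
    · have : phi c (gfib (m + 1 + 1)) = Polynomial.C c * (1 + Polynomial.X) * phi c (gfib (m + 1))
          + (- Polynomial.C c ^ 2 * Polynomial.X) * phi c (gfib m) := by
        rw [gfib]; simp [phi]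
      have e : phi c (gfib (m + 1 + 1)) = Polynomial.C c * (1 + Polynomial.X) * phi c (gfib (m + 1))
          - Polynomial.C c * Polynomial.X * (phi c (gfib m) * Polynomial.C c) := by
        rw [this]; ring
      rw [e, h1, h2]
      simp only [qc_qInt, map_pow, Finset.sum_range_succ]
      ring

lemma phi_P (c : ℂ) (n : ℕ) (hc : c ^ n = 1) (hn : n ≠ 0) (P : MvPolynomial (Fin 2) ℤ)
    (hP : P * (gfib (n + 1) * gfibFact n * gfibFact n) = gfibFact (2 * n))
    (Q : Polynomial ℤ)
    (hQ : Q * (qInt (n + 1) * qFact n * qFact n) = qFact (2 * n)) :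
    phi c P = qc Q := by
  have hc0 : c ≠ 0 := by
    rintro rfl
    simp [hn] at hc
  set E : ℕ → Polynomial ℂ := fun m => ∏ i ∈ Finset.range m, Polynomial.C (c ^ i) with hE
  have hE0 : ∀ m, E m ≠ 0 := fun m => Finset.prod_ne_zero_iff.2 fun i _ => by
    simpa using fun h => absurd h hc0
  have hE2 : E (2 * n) = E n * E n := by
    simp only [hE]
    rw [two_mul, Finset.prod_range_add]
    simp [pow_add, hc]
  have hF : ∀ m, phi c (gfibFact m) = E m * qc (qFact m) := by
    intro m
    rw [gfibFact_eq_prod, qFact_eq_prod, map_prod, qc, Polynomial.map_prod, hE,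
      ← Finset.prod_mul_distrib]
    exact Finset.prod_congr rfl fun i _ => (phi_gfib c i).2
  have h1 := congrArg (phi c) hP
  have h2 := congrArg qc hQ
  simp only [map_mul, hF, (phi_gfib c n).2, hc, hE2] at h1
  simp only [qc, Polynomial.map_mul] at h1 h2
  rw [← h2] at h1
  have inj : Function.Injective (Polynomial.map (Int.castRingHom ℂ)) :=
    Polynomial.map_injective _ (Int.cast_injective)
  have n1 : (qInt (n + 1)).map (Int.castRingHom ℂ) ≠ 0 :=
    (Polynomial.map_ne_zero_iff (Int.cast_injective)).2 (qInt_ne_zero' n)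
  have n2 : (qFact n).map (Int.castRingHom ℂ) ≠ 0 :=
    (Polynomial.map_ne_zero_iff (Int.cast_injective)).2 (qFact_ne_zero' n)
  have n3 := hE0 n
  have : E n * E n * (qInt (n + 1)).map (Int.castRingHom ℂ) * (qFact n).map (Int.castRingHom ℂ)
    * (qFact n).map (Int.castRingHom ℂ) ≠ 0 := by simp [n1, n2, n3]
  apply mul_right_cancel₀ this
  rw [map_one] at h1
  unfold qc
  linear_combination h1

lemma aeval_of_phi (c x : ℂ) (n : ℕ) (hc : c ^ n = 1) (hn : n ≠ 0) (P : MvPolynomial (Fin 2) ℤ)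
    (hP : P * (gfib (n + 1) * gfibFact n * gfibFact n) = gfibFact (2 * n))
    (Q : Polynomial ℤ)
    (hQ : Q * (qInt (n + 1) * qFact n * qFact n) = qFact (2 * n)) :
    aeval ![c * (1 + x), - c ^ 2 * x] P = Polynomial.aeval x Q := by
  have h := congrArg (Polynomial.eval x) (phi_P c n hc hn P hP Q hQ)
  have h1 : Polynomial.eval x (qc Q) = Polynomial.aeval x Q := by
    rw [qc, Polynomial.eval_map, Polynomial.aeval_def]; rfl
  have h2 : Polynomial.eval x (phi c P) = aeval ![c * (1 + x), - c ^ 2 * x] P := by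
    have : ((Polynomial.aeval (R := ℂ) x).restrictScalars ℤ).comp (phi c)
        = aeval ![c * (1 + x), - c ^ 2 * x] := by
      apply MvPolynomial.algHom_ext
      intro i
      fin_cases i <;> simp [phi]
    rw [← this]
    simp [Polynomial.coe_aeval_eq_eval]
  rw [← h1, ← h2, h]

/-- cofactor of `[d]` in `[i]` -/
noncomputable def uu (d i : ℕ) : Polynomial ℤ :=
  if d ∣ i then ∑ j ∈ Finset.range (i / d), (Polynomial.X ^ d) ^ j else qInt i

noncomputable def vv (d i : ℕ) : Polynomial ℤ := if d ∣ i then qInt d else 1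

lemma qInt_eq_uv (d i : ℕ) : qInt i = uu d i * vv d i := by
  unfold uu vv
  split_ifs with h
  · obtain ⟨k, rfl⟩ := h
    rcases Nat.eq_zero_or_pos d with rfl | hd
    · simp [qInt]
    rw [Nat.mul_div_cancel_left _ hd]
    have hX : (Polynomial.X - 1 : Polynomial ℤ) ≠ 0 := Polynomial.X_sub_C_ne_zero 1
    apply mul_right_cancel₀ hX
    rw [qInt, geom_sum_mul, mul_assoc, qInt, geom_sum_mul, geom_sum_mul, pow_mul]
  · simp

lemma key (n d : ℕ) (hd : 0 < d) (hdn : d ∣ n) (ω : ℂ) (hω : IsPrimitiveRoot ω d)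
    (Q : Polynomial ℤ)
    (hQ : Q * (qInt (n + 1) * qFact n * qFact n) = qFact (2 * n)) :
    Polynomial.aeval ω Q * Polynomial.aeval ω (qInt (n + 1)) =
      ∏ i ∈ Finset.range n, if d ∣ i + 1 then
        (((n + (i + 1)) / d : ℕ) : ℂ) / (((i + 1) / d : ℕ) : ℂ) else 1 := by
  have e1 : qFact (2 * n) = qFact n * ∏ i ∈ Finset.range n, qInt (n + (i + 1)) := by
    rw [qFact_eq_prod, qFact_eq_prod, two_mul, Finset.prod_range_add]
    simp [add_assoc]
  have hv : ∀ i, vv d (n + i) = vv d i := by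
    intro i; simp [vv, (Nat.dvd_add_right hdn)]
  have e2 : ∏ i ∈ Finset.range n, qInt (n + (i + 1)) =
      (∏ i ∈ Finset.range n, uu d (n + (i + 1))) * ∏ i ∈ Finset.range n, vv d (i + 1) := by
    rw [← Finset.prod_mul_distrib]
    exact Finset.prod_congr rfl fun i _ => by rw [qInt_eq_uv d, hv]
  have e3 : qFact n =
      (∏ i ∈ Finset.range n, uu d (i + 1)) * ∏ i ∈ Finset.range n, vv d (i + 1) := by
    rw [qFact_eq_prod, ← Finset.prod_mul_distrib]
    exact Finset.prod_congr rfl fun i _ => qInt_eq_uv d _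
  have hV : ∏ i ∈ Finset.range n, vv d (i + 1) ≠ 0 := by
    intro h; rw [h, mul_zero] at e3; exact qFact_ne_zero' n e3
  have main : Q * qInt (n + 1) * (∏ i ∈ Finset.range n, uu d (i + 1))
      = ∏ i ∈ Finset.range n, uu d (n + (i + 1)) := by
    apply mul_right_cancel₀ (mul_ne_zero hV (qFact_ne_zero' n))
    rw [e1, e2] at hQ
    linear_combination hQ + Q * qInt (n + 1) * (-qFact n) * e3
  have hωn : ω ^ n = 1 := (hω.pow_eq_one_iff_dvd n).2 hdn
  have qe : ∀ m, Polynomial.aeval ω (qInt m) = ∑ i ∈ Finset.range m, ω ^ i := by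
    intro m; simp [qInt]
  have ue : ∀ i, d ∣ i → Polynomial.aeval ω (uu d i) = ((i / d : ℕ) : ℂ) := by
    intro i hi
    simp [uu, hi, hω.pow_eq_one]
  have un : ∀ i, ¬ d ∣ i → Polynomial.aeval ω (uu d (n + i)) = Polynomial.aeval ω (uu d i) := by
    intro i hi
    have h1 : ω ≠ 1 := by
      rintro rfl
      exact hi (hω.dvd_of_pow_eq_one i (one_pow i))
    have : ¬ d ∣ n + i := by rwa [Nat.dvd_add_right hdn]
    rw [uu, uu, if_neg hi, if_neg this, qe, qe]
    apply mul_right_cancel₀ (sub_ne_zero.2 h1)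
    rw [geom_sum_mul, geom_sum_mul, pow_add, hωn, one_mul]
  have u0 : ∀ i, Polynomial.aeval ω (uu d (i + 1)) ≠ 0 := by
    intro i
    by_cases hi : d ∣ i + 1
    · rw [ue _ hi]
      have := Nat.div_pos (Nat.le_of_dvd (Nat.succ_pos i) hi) hd
      exact_mod_cast this.ne'
    · rw [uu, if_neg hi, qe]
      intro h
      have := geom_sum_mul ω (i + 1)
      rw [h, zero_mul] at this
      exact hi ((hω.pow_eq_one_iff_dvd _).1 (sub_eq_zero.1 this.symm))
  have m2 := congrArg (Polynomial.aeval ω) main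
  simp only [map_mul, map_prod] at m2
  have hU : ∏ i ∈ Finset.range n, Polynomial.aeval ω (uu d (i + 1)) ≠ 0 :=
    Finset.prod_ne_zero_iff.2 fun i _ => u0 i
  rw [eq_div_of_mul_eq hU m2, ← Finset.prod_div_distrib]
  refine Finset.prod_congr rfl fun i _ => ?_
  split_ifs with hi
  · rw [ue _ hi, ue _ ((Nat.dvd_add_right hdn).2 hi)]
  · rw [un _ hi, div_self (u0 i)]

lemma Q_sq (n : ℕ) (hn : Odd n) (ω : ℂ) (hω : ω ^ n = 1) (Q : Polynomial ℤ)
    (hQ : Q * (qInt (n + 1) * qFact n * qFact n) = qFact (2 * n)) :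
    Polynomial.aeval (ω ^ 2) Q = Polynomial.aeval ω Q := by
  by_cases h1 : ω = 1
  · simp [h1]
  have hdn : orderOf ω ∣ n := orderOf_dvd_of_pow_eq_one hω
  have hd : 0 < orderOf ω := Nat.pos_of_dvd_of_pos hdn hn.pos
  have hp : IsPrimitiveRoot ω (orderOf ω) := IsPrimitiveRoot.orderOf ω
  have hp2 : IsPrimitiveRoot (ω ^ 2) (orderOf ω) :=
    hp.pow_of_coprime 2 ((Nat.coprime_two_left).2 (hn.of_dvd_nat hdn))
  have h2 : ω ^ 2 ≠ 1 := by
    intro h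
    rw [h] at hp2
    exact h1 (orderOf_eq_one_iff.1 (Nat.dvd_one.1 (hp2.dvd_of_pow_eq_one 1 (one_pow 1))))
  have q1 : ∀ x : ℂ, x ≠ 1 → x ^ n = 1 → Polynomial.aeval x (qInt (n + 1)) = 1 := by
    intro x hx hxn
    have : Polynomial.aeval x (qInt (n + 1)) = ∑ i ∈ Finset.range (n + 1), x ^ i := by
      simp [qInt]
    rw [this]
    apply mul_right_cancel₀ (sub_ne_zero.2 hx)
    rw [geom_sum_mul, pow_succ, hxn]; ring
  have k1 := key n _ hd hdn ω hp Q hQ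
  have k2 := key n _ hd hdn (ω ^ 2) hp2 Q hQ
  rw [q1 _ h1 hω, mul_one] at k1
  rw [q1 _ h2 (by rw [← pow_mul, mul_comm, pow_mul, hω, one_pow]), mul_one] at k2
  rw [k1, k2]

/-- For `n` odd, the `(s,t)`-Catalan polynomial `P` and MacMahon's q-Catalan polynomial
`Q` satisfy `P(ζ^ℓ + ζ^{-ℓ}, -1) = Q(ζ^ℓ)` for all integers `ℓ`, and `P(0,1) = Q(-1)`. -/
theorem st_catalan_eval_eq_q_catalan_eval (n : ℕ) (hn : Odd n)
    (P : MvPolynomial (Fin 2) ℤ)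
    (hP : P * (gfib (n + 1) * gfibFact n * gfibFact n) = gfibFact (2 * n))
    (Q : Polynomial ℤ)
    (hQ : Q * (qInt (n + 1) * qFact n * qFact n) = qFact (2 * n)) :
    (∀ ℓ : ℤ,
      aeval ![primRoot n ^ ℓ + primRoot n ^ (-ℓ), (-1 : ℂ)] P
        = Polynomial.aeval (primRoot n ^ ℓ) Q) ∧
    aeval ![(0 : ℂ), 1] P = Polynomial.aeval (-1 : ℂ) Q := by
  have hn0 : n ≠ 0 := hn.pos.ne'
  refine ⟨fun ℓ => ?_, ?_⟩
  · have hz : primRoot n ^ n = 1 := (Complex.isPrimitiveRoot_exp n hn0).pow_eq_one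
    have hz0 : primRoot n ≠ 0 := Complex.exp_ne_zero _
    have hw : (primRoot n ^ ℓ) ^ n = 1 := by
      rw [← zpow_natCast, ← zpow_mul, mul_comm, zpow_mul, zpow_natCast, hz, one_zpow]
    have hw0 : primRoot n ^ ℓ ≠ 0 := zpow_ne_zero _ hz0
    rw [zpow_neg]
    generalize primRoot n ^ ℓ = ω at *
    have h := aeval_of_phi ω⁻¹ (ω ^ 2) n (by rw [inv_pow, hw, inv_one]) hn0 P hP Q hQ
    rw [← Q_sq n hn ω hw Q hQ, ← h]
    have a1 : ω⁻¹ * (1 + ω ^ 2) = ω + ω⁻¹ := by field_simp; ring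
    have a2 : -ω⁻¹ ^ 2 * ω ^ 2 = -1 := by field_simp
    rw [a1, a2]
  · have h := aeval_of_phi 1 (-1) n (one_pow n) hn0 P hP Q hQ
    rw [← h]
    norm_num
end
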